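/- arXiv:2304.00255 — 2 statements merged into one kernel-verified Lean document; each statement's English description precedes it below -/
import Mathlib

section
/- Let G be a forest. Then the normalized depth function g_{I(G)}(k) = depth(S/I(G)^{[k]}) - (2k-1) is non-increasing for 1 ≤ k ≤ ν(G). -/
open scoped Classical
open MvPolynomial RingTheory

noncomputable section

/-- `M` is a matching of `G`. -/
def IsMatchingSet {V : Type*} (G : SimpleGraph V) (M : Finset (Sym2 V)) : Prop :=
  (∀ e ∈ M, e ∈ G.edgeSet) ∧
    ∀ e ∈ M, ∀ f ∈ M, e ≠ f → ∀ v : V, v ∈ e → v ∉ f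

/-- The matching number `ν(G)`. -/
def matchingNumber {V : Type*} [Fintype V] (G : SimpleGraph V) : ℕ :=
  sSup {k | ∃ M : Finset (Sym2 V), IsMatchingSet G M ∧ M.card = k}

/-- The `k`-th squarefree power `I(G)^{[k]}` of the edge ideal of a graph `G` on `Fin n`:
the ideal generated by the monomials `x_{V(M)}` for all `k`-matchings `M` of `G`.
For `k = 0` this is the unit ideal. -/
def edgeIdealSqPow (K : Type*) [Field K] {n : ℕ} (G : SimpleGraph (Fin n)) (k : ℕ) :
    Ideal (MvPolynomial (Fin n) K) :=
  Ideal.span {f | ∃ M : Finset (Sym2 (Fin n)), IsMatchingSet G M ∧ M.card = k ∧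
    f = ∏ v ∈ Finset.univ.filter (fun v => ∃ e ∈ M, v ∈ e), X v}

/-- The graded maximal ideal `(x_1, …, x_n)` of the polynomial ring. -/
def maxIdeal (K : Type*) [Field K] (n : ℕ) : Ideal (MvPolynomial (Fin n) K) :=
  Ideal.span (Set.range X)

/-- The depth of `S/I` : the maximum length of an `S/I`-regular sequence contained in
the graded maximal ideal. -/
def depthQuot {K : Type*} [Field K] {n : ℕ} (I : Ideal (MvPolynomial (Fin n) K)) : ℕ :=
  sSup {d | ∃ rs : List (MvPolynomial (Fin n) K), rs.length = d ∧
    (∀ r ∈ rs, r ∈ maxIdeal K n) ∧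
    RingTheory.Sequence.IsRegular (MvPolynomial (Fin n) K ⧸ I) rs}

/-- The normalized depth function of the edge ideal of `G`:
`g_{I(G)}(k) = depth(S/I(G)^{[k]}) - (2k-1)`. -/
def gEdge (K : Type*) [Field K] {n : ℕ} (G : SimpleGraph (Fin n)) (k : ℕ) : ℤ :=
  (depthQuot (edgeIdealSqPow K G k) : ℤ) - (2 * k - 1)


namespace SqDepth

/-- sign -/
def eps {n : ℕ} (v : Fin n) (t : Finset (Fin n)) : ℤ :=
  (-1) ^ (t.filter (fun u => u < v)).card

lemma eps_sq {n : ℕ} (v : Fin n) (t : Finset (Fin n)) : eps v t * eps v t = 1 := by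
  unfold eps
  rw [← mul_pow]; simp

lemma eps_swap {n : ℕ} {u v : Fin n} (t : Finset (Fin n)) (hu : u ∈ t) (hv : v ∈ t)
    (h : u ≠ v) : eps v t * eps u (t.erase v) = -(eps u t * eps v (t.erase u)) := by
  wlog hlt : u < v generalizing u v
  · have := this hv hu h.symm (lt_of_le_of_ne (not_lt.mp hlt) h.symm)
    rw [this]; ring
  unfold eps
  have h1 : (t.erase v).filter (fun w => w < u) = t.filter (fun w => w < u) := by
    ext w
    simp only [Finset.mem_filter, Finset.mem_erase]
    constructor
    · rintro ⟨⟨_, a⟩, b⟩; exact ⟨a, b⟩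
    · rintro ⟨a, b⟩; exact ⟨⟨(b.trans hlt).ne, a⟩, b⟩
  have h2 : t.filter (fun w => w < v) = insert u ((t.erase u).filter (fun w => w < v)) := by
    ext w
    simp only [Finset.mem_filter, Finset.mem_erase, Finset.mem_insert]
    constructor
    · rintro ⟨a, b⟩
      by_cases hw : w = u
      · exact Or.inl hw
      · exact Or.inr ⟨⟨hw, a⟩, b⟩
    · rintro (rfl | ⟨⟨_, a⟩, b⟩)
      · exact ⟨hu, hlt⟩
      · exact ⟨a, b⟩
  rw [h1, h2, Finset.card_insert_of_notMem (by simp)]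
  ring

lemma eps_swap' {n : ℕ} {u v : Fin n} (t : Finset (Fin n)) (hu : u ∈ t) (hv : v ∈ t)
    (h : u ≠ v) : eps u (t.erase v) * eps v (t.erase u) = -(eps v t * eps u t) := by
  have h0 := eps_swap t hu hv h
  have h1 := eps_sq v t
  have h2 := eps_sq v (t.erase u)
  calc eps u (t.erase v) * eps v (t.erase u)
      = (eps v t * eps v t) * (eps u (t.erase v) * eps v (t.erase u)) := by rw [h1]; ring
    _ = (eps v t * eps u (t.erase v)) * eps v t * eps v (t.erase u) := by ring
    _ = -(eps v t * eps u t) * (eps v (t.erase u) * eps v (t.erase u)) := by rw [h0]; ring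
    _ = _ := by rw [h2]; ring

/-- Koszul coboundary with coefficients in a module `M`, w.r.t. elements `x v`. -/
def kd {R M : Type*} [CommRing R] [AddCommGroup M] [Module R M] {n : ℕ} (x : Fin n → R)
    (f : Finset (Fin n) → M) (t : Finset (Fin n)) : M :=
  ∑ v ∈ t, eps v t • (x v • f (t.erase v))

section kd
variable {R M : Type*} [CommRing R] [AddCommGroup M] [Module R M] {n : ℕ} (x : Fin n → R)

lemma kd_add (f g : Finset (Fin n) → M) (t) : kd x (f + g) t = kd x f t + kd x g t := by
  simp [kd, Finset.sum_add_distrib, smul_add]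

lemma kd_sub (f g : Finset (Fin n) → M) (t) : kd x (f - g) t = kd x f t - kd x g t := by
  simp [kd, Finset.sum_sub_distrib, smul_sub]

lemma kd_neg (f : Finset (Fin n) → M) (t) : kd x (-f) t = - kd x f t := by
  simp [kd, smul_neg]

lemma kd_smul (r : R) (f : Finset (Fin n) → M) (t) : kd x (r • f) t = r • kd x f t := by
  simp only [kd, Finset.smul_sum, Pi.smul_apply]
  refine Finset.sum_congr rfl fun v _ => ?_
  rw [smul_comm (x v) r, smul_comm r (eps v t)]

lemma kd_congr {f g : Finset (Fin n) → M} {t} (h : ∀ v ∈ t, f (t.erase v) = g (t.erase v)) :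
    kd x f t = kd x g t := by
  unfold kd
  exact Finset.sum_congr rfl fun v hv => by rw [h v hv]

lemma kd_empty (f : Finset (Fin n) → M) : kd x f ∅ = 0 := by simp [kd]

lemma kd_kd (f : Finset (Fin n) → M) (t) : kd x (kd x f) t = 0 := by
  simp only [kd, Finset.smul_sum]
  rw [Finset.sum_sigma']
  refine Finset.sum_involution (fun p _ => ⟨p.2, p.1⟩) ?_ ?_ ?_ ?_
  · rintro ⟨v, u⟩ hp
    simp only [Finset.mem_sigma, Finset.mem_erase] at hp
    obtain ⟨hv, huv, hu⟩ := hp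
    dsimp only
    rw [Finset.erase_right_comm (a := v) (b := u)]
    rw [smul_comm (x v) (eps u _), smul_comm (x u) (eps v _), smul_comm (x v) (x u),
      smul_smul (eps v t), smul_smul (eps u t), eps_swap t hu hv huv, neg_smul, neg_add_cancel]
  · rintro ⟨v, u⟩ hp _ h
    simp only [Finset.mem_sigma, Finset.mem_erase] at hp
    simp only [Sigma.mk.injEq] at h
    exact hp.2.1 h.1
  · rintro ⟨v, u⟩ hp
    simp only [Finset.mem_sigma, Finset.mem_erase] at hp ⊢
    exact ⟨hp.2.2, hp.2.1.symm, hp.1⟩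
  · rintro ⟨v, u⟩ hp
    rfl

/-- homotopy for the variable `v` -/
def kh (v : Fin n) (f : Finset (Fin n) → M) (t : Finset (Fin n)) : M :=
  if v ∈ t then 0 else eps v (insert v t) • f (insert v t)


/-- `d h_v + h_v d = x_v`. -/
lemma kd_kh_add (v : Fin n) (f : Finset (Fin n) → M) (t : Finset (Fin n)) :
    kd x (kh v f) t + kh v (kd x f) t = x v • f t := by
  by_cases hv : v ∈ t
  · rw [kh, if_pos hv, add_zero, kd, Finset.sum_eq_single v]
    · rw [kh, if_neg (by simp), Finset.insert_erase hv, smul_comm (x v), smul_smul, eps_sq, one_smul]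
    · intro u hu huv
      rw [kh, if_pos (by simp [hv, huv.symm])]; simp
    · intro h; exact absurd hv h
  · rw [kh, if_neg hv]
    have e : kd x f (insert v t) = eps v (insert v t) • (x v • f t)
        + ∑ u ∈ t, eps u (insert v t) • (x u • f ((insert v t).erase u)) := by
      rw [kd, Finset.sum_insert hv, Finset.erase_insert hv]
    rw [e, smul_add, smul_smul, eps_sq, one_smul, add_left_comm]
    convert add_zero _
    rw [kd, Finset.smul_sum, ← Finset.sum_add_distrib]
    refine Finset.sum_eq_zero fun u hu => ?_
    have huv : u ≠ v := fun h => hv (h ▸ hu)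
    have h1 : insert v (t.erase u) = (insert v t).erase u := by
      rw [Finset.erase_insert_of_ne huv.symm]
    rw [kh, if_neg (by simp [hv]), h1, smul_comm (x u), smul_smul, smul_smul, ← add_smul]
    have := eps_swap' (insert v t) (Finset.mem_insert_of_mem hu) (Finset.mem_insert_self v t) huv
    rw [Finset.erase_insert hv] at this
    rw [this]; simp

end kd

end SqDepth

namespace SqDepth

section fam
variable (K : Type*) [Field K] {n : ℕ}

/-- simplicial coboundary -/
abbrev dl (f : Finset (Fin n) → K) (t : Finset (Fin n)) : K := kd (fun _ => (1 : K)) f t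

/-- vanishing of the cohomology of the family `A` in cardinality `s`. -/
def VZ (A : Set (Finset (Fin n))) (s : ℤ) : Prop :=
  ∀ f : Finset (Fin n) → K, (∀ σ, σ ∉ A → f σ = 0) →
    (∀ τ ∈ A, (τ.card : ℤ) = s + 1 → dl K f τ = 0) →
    ∃ g : Finset (Fin n) → K, (∀ σ, σ ∉ A → g σ = 0) ∧
      ∀ σ ∈ A, (σ.card : ℤ) = s → f σ = dl K g σ

def DC (D : Set (Finset (Fin n))) : Prop := ∀ σ ∈ D, ∀ τ, τ ⊆ σ → τ ∈ D

variable {K}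

lemma card_erase_int {t : Finset (Fin n)} {v : Fin n} (hv : v ∈ t) :
    ((t.erase v).card : ℤ) = t.card - 1 := by
  have := Finset.card_erase_add_one hv
  omega

lemma card_insert_int {t : Finset (Fin n)} {v : Fin n} (hv : v ∉ t) :
    ((insert v t).card : ℤ) = t.card + 1 := by
  rw [Finset.card_insert_of_notMem hv]; push_cast; ring

lemma dl_zero_of {f : Finset (Fin n) → K} {t} (h : ∀ v ∈ t, f (t.erase v) = 0) :
    dl K f t = 0 := by
  unfold dl kd
  exact Finset.sum_eq_zero fun v hv => by rw [h v hv]; simp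

lemma VZ_diff {D1 D2 : Set (Finset (Fin n))} (h1 : DC D1) (h2 : DC D2) (s : ℤ)
    (h : VZ K (D2 \ D1) s) (f : Finset (Fin n) → K)
    (hf : ∀ σ ∈ D1, (σ.card : ℤ) = s → f σ = 0)
    (hc : ∀ τ ∈ D2, (τ.card : ℤ) = s + 1 → dl K f τ = 0) :
    ∃ g : Finset (Fin n) → K, (∀ σ ∈ D1, g σ = 0) ∧
      ∀ σ ∈ D2, (σ.card : ℤ) = s → f σ = dl K g σ := by
  obtain ⟨g, hg, hfg⟩ := h (fun σ => if σ ∈ D2 \ D1 then f σ else 0)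
    (fun σ hσ => by simp only [if_neg hσ]) (by
      intro τ hτ hcard
      refine Eq.trans (kd_congr _ fun v hv => ?_) (hc τ hτ.1 hcard)
      split_ifs with hh
      · rfl
      · symm
        refine hf _ ?_ ?_
        · by_contra hcon
          exact hh ⟨h2 _ hτ.1 _ (Finset.erase_subset _ _), hcon⟩
        · rw [card_erase_int hv]; omega)
  refine ⟨g, fun σ hσ => hg σ (fun hh => hh.2 hσ), fun σ hσ hcard => ?_⟩
  by_cases hσ1 : σ ∈ D1
  · rw [hf σ hσ1 hcard, dl_zero_of]
    intro v hv
    exact hg _ fun hh => hh.2 (h1 _ hσ1 _ (Finset.erase_subset _ _))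
  · have := hfg σ ⟨hσ, hσ1⟩ hcard
    rwa [if_pos ⟨hσ, hσ1⟩] at this

lemma VZ_diff_of {D1 D2 : Set (Finset (Fin n))} (h1 : DC D1) (h2 : DC D2) (s : ℤ)
    (h : ∀ f : Finset (Fin n) → K, (∀ σ ∈ D1, f σ = 0) →
      (∀ τ ∈ D2, (τ.card : ℤ) = s + 1 → dl K f τ = 0) →
      ∃ g : Finset (Fin n) → K, (∀ σ ∈ D1, (σ.card : ℤ) = s - 1 → g σ = 0) ∧
      ∀ σ ∈ D2, (σ.card : ℤ) = s → f σ = dl K g σ) : VZ K (D2 \ D1) s := by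
  intro f hf hc
  obtain ⟨g, hg, hfg⟩ := h f (fun σ hσ => hf σ fun hh => hh.2 hσ) (by
    intro τ hτ hcard
    by_cases hτ1 : τ ∈ D1
    · refine dl_zero_of fun v hv => hf _ fun hh => hh.2 (h1 _ hτ1 _ (Finset.erase_subset _ _))
    · exact hc τ ⟨hτ, hτ1⟩ hcard)
  refine ⟨fun σ => if σ ∈ D2 \ D1 then g σ else 0, fun σ hσ => by simp only [if_neg hσ],
    fun σ hσ hcard => ?_⟩
  rw [hfg σ hσ.1 hcard]
  refine kd_congr _ fun v hv => ?_
  split_ifs with hh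
  · rfl
  · refine hg _ ?_ ?_
    · by_contra hcon
      exact hh ⟨h2 _ hσ.1 _ (Finset.erase_subset _ _), hcon⟩
    · rw [card_erase_int hv]; omega

lemma DC_empty : DC (∅ : Set (Finset (Fin n))) := fun _ h => h.elim

lemma VZ_down {D : Set (Finset (Fin n))} (hD : DC D) (s : ℤ) : VZ K D s ↔
    ∀ f : Finset (Fin n) → K,
      (∀ τ ∈ D, (τ.card : ℤ) = s + 1 → dl K f τ = 0) →
      ∃ g : Finset (Fin n) → K, ∀ σ ∈ D, (σ.card : ℤ) = s → f σ = dl K g σ := by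
  constructor
  · intro h f hc
    obtain ⟨g, -, hg⟩ := VZ_diff DC_empty hD s (by simpa using h) f (fun σ h => h.elim) hc
    exact ⟨g, hg⟩
  · intro h
    have := VZ_diff_of (K := K) DC_empty hD s (fun f _ hc => by
      obtain ⟨g, hg⟩ := h f hc
      exact ⟨g, fun σ h => h.elim, hg⟩)
    simpa using this

lemma dl_kh (v : Fin n) (f : Finset (Fin n) → K) (t : Finset (Fin n)) :
    dl K (kh v f) t + kh v (dl K f) t = f t := by
  have := kd_kh_add (fun _ => (1 : K)) v f t
  simpa using this

lemma kh_zero_of {v : Fin n} {f : Finset (Fin n) → K} {t} (h : v ∉ t → f (insert v t) = 0) :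
    kh v f t = 0 := by
  unfold kh
  split_ifs with hv
  · rfl
  · rw [h hv, smul_zero]

lemma VZ_apex {D : Set (Finset (Fin n))} (hD : DC D) (s : ℤ) (v : Fin n)
    (hv : ∀ σ ∈ D, (σ.card : ℤ) = s → insert v σ ∈ D) : VZ K D s := by
  rw [VZ_down hD]
  intro f hf
  refine ⟨kh v f, fun σ hσ hcard => ?_⟩
  have := dl_kh v f σ
  rw [kh_zero_of (f := dl K f), add_zero] at this
  · exact this.symm
  · intro hvσ
    exact hf _ (hv σ hσ hcard) (by rw [card_insert_int hvσ, hcard])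

lemma VZ_toggle {A : Set (Finset (Fin n))} (s : ℤ) (v : Fin n)
    (hv : ∀ σ, insert v σ ∈ A ↔ σ.erase v ∈ A) : VZ K A s := by
  intro f hf hc
  refine ⟨kh v f, fun σ hσ => ?_, fun σ hσ hcard => ?_⟩
  · refine kh_zero_of fun hvσ => hf _ ?_
    rw [hv, Finset.erase_eq_of_notMem hvσ]; exact hσ
  · have := dl_kh v f σ
    rw [kh_zero_of (f := dl K f), add_zero] at this
    · exact this.symm
    · intro hvσ
      refine hc _ ?_ (by rw [card_insert_int hvσ, hcard])
      rw [hv, Finset.erase_eq_of_notMem hvσ]; exact hσ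

lemma VZ_b {D1 D2 : Set (Finset (Fin n))} (h1 : DC D1) (h2 : DC D2) (h12 : D1 ⊆ D2) (s : ℤ)
    (v1 : VZ K D1 (s - 1)) (v2 : VZ K D2 s) : VZ K (D2 \ D1) s := by
  refine VZ_diff_of h1 h2 s fun f hf hc => ?_
  obtain ⟨g, hg⟩ := (VZ_down h2 s).1 v2 f hc
  obtain ⟨p, hp⟩ := (VZ_down h1 (s - 1)).1 v1 g (by
    intro τ hτ hcard
    rw [← hg τ (h12 hτ) (by omega)]
    exact hf τ hτ)
  refine ⟨g - dl K p, fun σ hσ hcard => ?_, fun σ hσ hcard => ?_⟩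
  · simp [hp σ hσ hcard]
  · rw [hg σ hσ hcard]
    show kd _ g σ = kd _ (g - kd _ p) σ
    rw [kd_sub, kd_kd, sub_zero]

lemma VZ_b2 {D1 D2 : Set (Finset (Fin n))} (h1 : DC D1) (h2 : DC D2) (s : ℤ)
    (v : Fin n) (hv : ∀ σ ∈ D1, insert v σ ∈ D2)
    (hU : VZ K (D2 \ D1) s) : VZ K D2 s := by
  rw [VZ_down h2]
  intro f hf
  obtain ⟨g, -, hg⟩ := VZ_diff h1 h2 s hU (f - dl K (kh v f)) (by
    intro σ hσ hcard
    have := dl_kh v f σ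
    rw [kh_zero_of (f := dl K f), add_zero] at this
    · simp [this]
    · intro hvσ
      exact hf _ (hv σ hσ) (by rw [card_insert_int hvσ, hcard])) (by
    intro τ hτ hcard
    show kd _ (f - kd _ (kh v f)) τ = 0
    rw [kd_sub, kd_kd, sub_zero]
    exact hf τ hτ hcard)
  refine ⟨g + kh v f, fun σ hσ hcard => ?_⟩
  have := hg σ hσ hcard
  show _ = kd _ (g + kh v f) σ
  rw [kd_add]
  simp only [Pi.sub_apply] at this
  rw [← sub_eq_iff_eq_add]
  exact this

lemma VZ_b1 {D1 D2 : Set (Finset (Fin n))} (h1 : DC D1) (h2 : DC D2) (s : ℤ)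
    (v : Fin n) (hv : ∀ σ ∈ D1, insert v σ ∈ D2)
    (hU : VZ K (D2 \ D1) s) : VZ K D1 (s - 1) := by
  rw [VZ_down h1]
  intro f hf
  obtain ⟨g, hg1, hg⟩ := VZ_diff h1 h2 s hU (dl K f) (by
    intro σ hσ hcard
    exact hf σ hσ (by omega)) (by
    intro τ hτ hcard
    exact kd_kd _ _ _)
  refine ⟨kh v (f - g), fun σ hσ hcard => ?_⟩
  have := dl_kh v (f - g) σ
  rw [kh_zero_of (f := dl K (f - g)), add_zero] at this
  · rw [this]; simp [hg1 σ hσ]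
  · intro hvσ
    have h3 := hg _ (hv σ hσ) (by rw [card_insert_int hvσ, hcard]; ring)
    show kd _ (f - g) _ = 0
    rw [kd_sub, sub_eq_zero]
    exact h3

def star (D : Set (Finset (Fin n))) (x : Fin n) : Set (Finset (Fin n)) := {σ | insert x σ ∈ D}

lemma DC_star {D : Set (Finset (Fin n))} (hD : DC D) (x : Fin n) : DC (star D x) :=
  fun _ h _ hs => hD _ h _ (Finset.insert_subset_insert x hs)

lemma VZ_toggle_iff {D : Set (Finset (Fin n))} (hD : DC D) (x : Fin n) (s : ℤ) :
    VZ K D s ↔ VZ K (D \ star D x) s := by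
  have hs := DC_star hD x
  constructor
  · intro h
    refine VZ_b hs hD (fun σ h => hD _ h _ (Finset.subset_insert _ _)) s ?_ h
    refine VZ_apex hs _ x fun σ hσ _ => ?_
    simpa [star] using hσ
  · intro h
    exact VZ_b2 hs hD s x (fun σ h => h) h

/-- exterior multiplication by `y` -/
def ke (y : Fin n) (f : Finset (Fin n) → K) (t : Finset (Fin n)) : K :=
  if y ∈ t then eps y t • f (t.erase y) else 0

lemma dl_ke (y : Fin n) (f : Finset (Fin n) → K) (t : Finset (Fin n)) (hy : y ∈ t) :
    dl K (ke y f) t = - ke y (dl K f) t := by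
  unfold dl kd
  rw [← Finset.add_sum_erase _ _ hy]
  have : ke y f (t.erase y) = 0 := by simp [ke]
  rw [this, ke, if_pos hy]
  simp only [one_smul, smul_zero, zero_add]
  rw [Finset.smul_sum, ← Finset.sum_neg_distrib]
  refine Finset.sum_congr rfl fun v hv => ?_
  have hvt := Finset.mem_of_mem_erase hv
  have hvy := Finset.ne_of_mem_erase hv
  rw [ke, if_pos (Finset.mem_erase.2 ⟨hvy.symm, hy⟩), smul_smul, smul_smul,
    eps_swap t hy hvt hvy.symm, neg_smul, Finset.erase_right_comm]

lemma VZ_shift {N : Set (Finset (Fin n))} (y : Fin n) (hN : ∀ τ ∈ N, y ∉ τ) (s : ℤ) :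
    VZ K {σ | y ∈ σ ∧ σ.erase y ∈ N} (s + 1) ↔ VZ K N s := by
  set U : Set (Finset (Fin n)) := {σ | y ∈ σ ∧ σ.erase y ∈ N} with hU
  constructor
  · intro h f hf hc
    obtain ⟨g, hg, hfg⟩ := h (ke y f) (by
      intro σ hσ
      unfold ke
      split_ifs with hy
      · rw [hf _ fun hh => hσ ⟨hy, hh⟩, smul_zero]
      · rfl) (by
      intro σ hσ hcard
      rw [dl_ke _ _ _ hσ.1, ke, if_pos hσ.1, hc _ hσ.2, smul_zero, neg_zero]
      rw [card_erase_int hσ.1]; omega)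
    refine ⟨-kh y g, fun τ hτ => ?_, fun τ hτ hcard => ?_⟩
    · rw [Pi.neg_apply, kh_zero_of, neg_zero]
      intro hy
      refine hg _ fun hh => hτ ?_
      have := hh.2
      rwa [Finset.erase_insert hy] at this
    · have hy := hN τ hτ
      have h0 := dl_kh y g τ
      have hτU : τ ∉ U := fun hh => hy hh.1
      rw [hg τ hτU] at h0
      show _ = kd _ (-kh y g) τ
      rw [kd_neg]
      have h00 := eq_neg_of_add_eq_zero_left h0
      rw [dl] at h00
      rw [h00, neg_neg, kh, if_neg hy]
      rw [← hfg (insert y τ) ⟨Finset.mem_insert_self _ _, by rwa [Finset.erase_insert hy]⟩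
        (by rw [card_insert_int hy, hcard])]
      rw [ke, if_pos (Finset.mem_insert_self _ _), smul_smul, eps_sq, one_smul,
        Finset.erase_insert hy]
  · intro h f hf hc
    obtain ⟨q, hq, hpq⟩ := h (kh y f) (by
      intro τ hτ
      refine kh_zero_of fun hy => hf _ fun hh => hτ ?_
      have := hh.2
      rwa [Finset.erase_insert hy] at this) (by
      intro τ hτ hcard
      have hy := hN τ hτ
      have h0 := dl_kh y f τ
      rw [hf τ (fun hh => hy hh.1)] at h0
      rw [eq_neg_of_add_eq_zero_left h0, kh_zero_of, neg_zero]
      intro _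
      exact hc _ ⟨Finset.mem_insert_self _ _, by rwa [Finset.erase_insert hy]⟩
        (by rw [card_insert_int hy, hcard]))
    refine ⟨-ke y q, fun σ hσ => ?_, fun σ hσ hcard => ?_⟩
    · rw [Pi.neg_apply, ke]
      split_ifs with hy
      · rw [hq _ fun hh => hσ ⟨hy, hh⟩]; simp
      · simp
    · show _ = kd _ (-ke y q) σ
      rw [kd_neg]
      have := dl_ke y q σ hσ.1
      rw [dl] at this
      rw [this, neg_neg, ke, if_pos hσ.1, ← hpq _ hσ.2 (by rw [card_erase_int hσ.1]; omega), kh,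
        if_neg (by simp), Finset.insert_erase hσ.1, smul_smul, eps_sq, one_smul]

lemma VZ_shifts {N : Set (Finset (Fin n))} (W : Finset (Fin n)) (hN : ∀ τ ∈ N, Disjoint W τ)
    (s : ℤ) : VZ K {σ | W ⊆ σ ∧ σ \ W ∈ N} (s + W.card) ↔ VZ K N s := by
  induction W using Finset.induction_on with
  | empty => simp
  | insert y W hy ih =>
    rw [← ih (fun τ h => (hN τ h).mono_left (Finset.subset_insert _ _)),
      ← VZ_shift (K := K) (N := {σ | W ⊆ σ ∧ σ \ W ∈ N}) y]
    · rw [Finset.card_insert_of_notMem hy]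
      have : {σ | insert y W ⊆ σ ∧ σ \ insert y W ∈ N} =
          {σ | y ∈ σ ∧ σ.erase y ∈ {σ | W ⊆ σ ∧ σ \ W ∈ N}} := by
        ext σ
        simp only [Set.mem_ofPred_eq, Finset.insert_subset_iff]
        have e : σ.erase y \ W = σ \ insert y W := by
          ext u; simp; tauto
        rw [e, and_assoc, Finset.subset_erase]
        tauto
      rw [this]
      push_cast
      rw [add_assoc]
    · rintro τ ⟨h1, h2⟩ hyτ
      have := Finset.disjoint_left.1 (hN _ h2) (Finset.mem_insert_self _ _)
      exact this (by simp [hyτ, hy])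

end fam
end SqDepth

namespace SqDepth

section mat
variable {n : ℕ} (G : SimpleGraph (Fin n))

/-- the subset `σ` carries a `k`-matching. -/
def HasM (k : ℕ) (σ : Finset (Fin n)) : Prop :=
  ∃ M : Finset (Sym2 (Fin n)), IsMatchingSet G M ∧ M.card = k ∧ ∀ e ∈ M, ∀ v ∈ e, v ∈ σ

variable {G}

lemma IsMatchingSet.subset {M N : Finset (Sym2 (Fin n))} (h : IsMatchingSet G M) (hN : N ⊆ M) :
    IsMatchingSet G N :=
  ⟨fun e he => h.1 e (hN he), fun e he f hf => h.2 e (hN he) f (hN hf)⟩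

lemma HasM.mono {k : ℕ} {σ τ : Finset (Fin n)} (h : HasM G k σ) (hs : σ ⊆ τ) : HasM G k τ := by
  obtain ⟨M, h1, h2, h3⟩ := h
  exact ⟨M, h1, h2, fun e he v hv => hs (h3 e he v hv)⟩

lemma HasM_zero (σ : Finset (Fin n)) : HasM G 0 σ :=
  ⟨∅, ⟨by simp, by simp⟩, rfl, by simp⟩

lemma HasM.anti {j k : ℕ} {σ : Finset (Fin n)} (h : HasM G k σ) (hj : j ≤ k) : HasM G j σ := by
  obtain ⟨M, h1, h2, h3⟩ := h
  obtain ⟨N, hN, hc⟩ := Finset.exists_subset_card_eq (h2 ▸ hj)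
  exact ⟨N, IsMatchingSet.subset h1 hN, hc, fun e he => h3 e (hN he)⟩

lemma HasM_drop {k : ℕ} {σ W : Finset (Fin n)} {M : Finset (Sym2 (Fin n))}
    (h1 : IsMatchingSet G M) (h2 : M.card = k + 1) (h3 : ∀ e ∈ M, ∀ v ∈ e, v ∈ σ)
    (hW : ∀ e ∈ M, ∀ e' ∈ M, (∃ w ∈ W, w ∈ e) → (∃ w ∈ W, w ∈ e') → e = e') :
    HasM G k (σ \ W) := by
  have : ∃ e ∈ M, ∀ e' ∈ M, e' ≠ e → ¬ ∃ w ∈ W, w ∈ e' := by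
    by_cases h : ∃ e ∈ M, ∃ w ∈ W, w ∈ e
    · obtain ⟨e, he, hw⟩ := h
      exact ⟨e, he, fun e' he' hne hw' => hne (hW e' he' e he hw' hw)⟩
    · obtain ⟨e, he⟩ := Finset.card_pos.1 (by omega : 0 < M.card)
      exact ⟨e, he, fun e' he' _ hw => h ⟨e', he', hw⟩⟩
  obtain ⟨e, he, hh⟩ := this
  refine ⟨M.erase e, IsMatchingSet.subset h1 (Finset.erase_subset _ _), ?_, ?_⟩
  · rw [Finset.card_erase_of_mem he, h2]; rfl
  · intro e' he' v hv
    rw [Finset.mem_erase] at he'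
    rw [Finset.mem_sdiff]
    exact ⟨h3 e' he'.2 v hv, fun hvW => hh e' he'.2 he'.1 ⟨v, hvW, hv⟩⟩

lemma HasM_N1 {k : ℕ} {σ : Finset (Fin n)} {v : Fin n} (h : HasM G (k + 1) (insert v σ)) :
    HasM G k σ := by
  obtain ⟨M, h1, h2, h3⟩ := h
  refine (HasM_drop (W := {v}) h1 h2 h3 ?_).mono ?_
  · rintro e he e' he' ⟨w, hw, hwe⟩ ⟨w', hw', hwe'⟩
    rw [Finset.mem_singleton] at hw hw'
    subst hw; subst hw'
    by_contra hne
    exact h1.2 e he e' he' hne _ hwe hwe'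
  · intro u hu
    simp at hu
    tauto

lemma IsMatchingSet.adj_of_mem {M : Finset (Sym2 (Fin n))} (h : IsMatchingSet G M)
    {e : Sym2 (Fin n)} (he : e ∈ M) {x : Fin n} (hx : x ∈ e) : ∃ y, G.Adj x y ∧ e = s(x, y) := by
  obtain ⟨y, rfl⟩ := Sym2.mem_iff_exists.1 hx
  exact ⟨y, by simpa using h.1 _ he, rfl⟩

lemma HasM_N2 {k : ℕ} {σ : Finset (Fin n)} {x y : Fin n} (hx : x ∈ σ) (hy : y ∈ σ)
    (hxy : G.Adj x y) (hu : ∀ w ∈ σ, G.Adj x w → w = y) :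
    HasM G (k + 1) σ ↔ HasM G k (σ \ {x, y}) := by
  constructor
  · rintro ⟨M, h1, h2, h3⟩
    refine HasM_drop h1 h2 h3 ?_
    have key : ∀ e ∈ M, (∃ w ∈ ({x, y} : Finset (Fin n)), w ∈ e) → y ∈ e := by
      rintro e he ⟨w, hw, hwe⟩
      rw [Finset.mem_insert, Finset.mem_singleton] at hw
      rcases hw with rfl | rfl
      · obtain ⟨z, hz, rfl⟩ := IsMatchingSet.adj_of_mem h1 he hwe
        rw [hu z (h3 _ he z (by simp)) hz]; simp
      · exact hwe
    intro e he e' he' hw hw'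
    by_contra hne
    exact h1.2 e he e' he' hne _ (key e he hw) (key e' he' hw')
  · rintro ⟨M, h1, h2, h3⟩
    have hnot : ∀ e ∈ M, ∀ v ∈ e, v ≠ x ∧ v ≠ y := by
      intro e he v hv
      have := h3 e he v hv
      simp at this
      tauto
    have hnm : s(x, y) ∉ M := fun hh => (hnot _ hh x (by simp)).1 rfl
    refine ⟨insert s(x, y) M, ⟨?_, ?_⟩, ?_, ?_⟩
    · intro e he
      rcases Finset.mem_insert.1 he with rfl | he
      · simpa using hxy
      · exact h1.1 e he
    · intro e he f hf hne v hv hvf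
      rcases Finset.mem_insert.1 he with rfl | he <;> rcases Finset.mem_insert.1 hf with rfl | hf
      · exact hne rfl
      · have := hnot f hf v hvf
        simp at hv; tauto
      · have := hnot e he v hv
        simp at hvf; tauto
      · exact h1.2 e he f hf hne v hv hvf
    · rw [Finset.card_insert_of_notMem hnm, h2]
    · intro e he v hv
      rcases Finset.mem_insert.1 he with rfl | he
      · simp at hv
        rcases hv with rfl | rfl <;> assumption
      · have := h3 e he v hv
        simp at this; tauto

lemma HasM_N3 {k : ℕ} {σ : Finset (Fin n)} {v : Fin n} (hv : ∀ w ∈ σ, ¬ G.Adj v w)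
    (h : HasM G k (insert v σ)) : HasM G k σ := by
  obtain ⟨M, h1, h2, h3⟩ := h
  refine ⟨M, h1, h2, fun e he w hw => ?_⟩
  rcases Finset.mem_insert.1 (h3 e he w hw) with rfl | h
  · obtain ⟨z, hz, rfl⟩ := IsMatchingSet.adj_of_mem h1 he hw
    rcases Finset.mem_insert.1 (h3 _ he z (by simp)) with rfl | h
    · exact absurd hz (G.loopless.irrefl _)
    · exact absurd hz (hv z h)
  · exact h

lemma HasM_N3s {k : ℕ} {σ W : Finset (Fin n)} (hv : ∀ v ∈ W, ∀ w ∈ σ ∪ W, ¬ G.Adj v w)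
    (h : HasM G k (σ ∪ W)) : HasM G k σ := by
  obtain ⟨M, h1, h2, h3⟩ := h
  refine ⟨M, h1, h2, fun e he w hw => ?_⟩
  rcases Finset.mem_union.1 (h3 e he w hw) with h | h
  · exact h
  · obtain ⟨z, hz, rfl⟩ := IsMatchingSet.adj_of_mem h1 he hw
    exact absurd hz (hv w h z (h3 _ he z (by simp)))

lemma HasM.card_le {k : ℕ} {σ : Finset (Fin n)} (h : HasM G k σ) : 2 * k ≤ σ.card := by
  induction k generalizing σ with
  | zero => simp
  | succ k ih =>
    obtain ⟨M, h1, h2, h3⟩ := h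
    obtain ⟨e, he⟩ := Finset.card_pos.1 (by omega : 0 < M.card)
    induction e using Sym2.ind with
    | _ x y =>
    have hx : x ∈ σ := h3 _ he x (by simp)
    have hy : y ∈ σ := h3 _ he y (by simp)
    have hxy : x ≠ y := by
      have := h1.1 _ he
      simp at this
      exact this.ne
    have : HasM G k (σ \ {x, y}) := by
      refine ⟨M.erase s(x, y), IsMatchingSet.subset h1 (Finset.erase_subset _ _), ?_, ?_⟩
      · rw [Finset.card_erase_of_mem he, h2]; rfl
      · intro e' he' v hv
        rw [Finset.mem_erase] at he'
        rw [Finset.mem_sdiff]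
        refine ⟨h3 e' he'.2 v hv, fun hvW => ?_⟩
        refine h1.2 e' he'.2 _ he he'.1 v hv ?_
        simpa using hvW
    have := ih this
    rw [Finset.card_sdiff_of_subset (by intro u; simp; rintro (rfl | rfl) <;> assumption),
      Finset.card_pair hxy] at this
    have h4 : ({x, y} : Finset (Fin n)).card ≤ σ.card :=
      Finset.card_le_card (by intro u; simp; rintro (rfl | rfl) <;> assumption)
    rw [Finset.card_pair hxy] at h4
    omega

end mat
end SqDepth

namespace SqDepth

section rec
variable {K : Type*} [Field K] {n : ℕ} {G : SimpleGraph (Fin n)}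

/-- faces inside `c` of the complex of `k`-matching free sets -/
def Fam (G : SimpleGraph (Fin n)) (k : ℕ) (c : Finset (Fin n)) : Set (Finset (Fin n)) :=
  {σ | σ ⊆ c ∧ ¬ HasM G k σ}

lemma DC_Fam (k : ℕ) (c : Finset (Fin n)) : DC (Fam G k c) :=
  fun _ h _ hs => ⟨hs.trans h.1, fun hh => h.2 (hh.mono hs)⟩

/-- Star configuration at `y`. -/
structure Cfg (G : SimpleGraph (Fin n)) (a : Finset (Fin n)) (y : Fin n) (X H : Finset (Fin n)) :
    Prop where
  ha : a = insert y (X ∪ H)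
  yX : y ∉ X
  yH : y ∉ H
  disj : Disjoint X H
  Xadj : ∀ w ∈ X, G.Adj w y
  Xonly : ∀ w ∈ X, ∀ u ∈ a, G.Adj w u → u = y
  Xne : X.Nonempty

def DL (G : SimpleGraph (Fin n)) (k : ℕ) (y : Fin n) (H : Finset (Fin n)) :
    Set (Finset (Fin n)) := {τ | τ ⊆ H ∧ ¬ HasM G (k + 1) (insert y τ)}

lemma DC_DL (k : ℕ) (y : Fin n) (c : Finset (Fin n)) : DC (DL G k y c) :=
  fun _ h _ hs => ⟨hs.trans h.1, fun hh => h.2 (hh.mono (Finset.insert_subset_insert _ hs))⟩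

lemma Fam_sub_DL (k : ℕ) (y : Fin n) (c : Finset (Fin n)) : Fam G k c ⊆ DL G k y c :=
  fun _ h => ⟨h.1, fun hh => h.2 (HasM_N1 hh)⟩

lemma Fam_sub_succ (k : ℕ) (c : Finset (Fin n)) : Fam G k c ⊆ Fam G (k + 1) c :=
  fun _ h => ⟨h.1, fun hh => h.2 (hh.anti (by omega))⟩

lemma R1 {a : Finset (Fin n)} {y : Fin n} {X H : Finset (Fin n)} (c : Cfg G a y X H) (k : ℕ)
    (s : ℤ) : VZ K (Fam G (k + 1) a) s ↔ VZ K (DL G k y H \ Fam G k H) (s - 1) := by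
  obtain ⟨x, hx⟩ := c.Xne
  rw [VZ_toggle_iff (DC_Fam _ _) x, ← VZ_shift (N := DL G k y H \ Fam G k H) y (fun τ h hy => c.yH (h.1.1 hy))]
  have hxa : x ∈ a := by rw [c.ha]; simp [hx]
  have hya : y ∈ a := by rw [c.ha]; simp
  have hHa : H ⊆ a := by rw [c.ha]; intro u hu; simp [hu]
  have hxy : x ≠ y := fun h => c.yX (h ▸ hx)
  have : Fam G (k + 1) a \ star (Fam G (k + 1) a) x =
      {σ | y ∈ σ ∧ σ.erase y ∈ DL G k y H \ Fam G k H} := by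
    ext σ
    constructor
    · rintro ⟨⟨hσa, hσ⟩, hst⟩
      have hM : HasM G (k + 1) (insert x σ) := by
        by_contra hcon
        exact hst ⟨Finset.insert_subset hxa hσa, hcon⟩
      have hyσ : y ∈ σ := by
        by_contra hcon
        refine hσ (HasM_N3 (v := x) (fun w hw hadj => ?_) hM)
        exact hcon (c.Xonly x hx w (hσa hw) hadj ▸ hw)
      have hMk : HasM G k (σ.erase y) := by
        refine ((HasM_N2 (y := y) (Finset.mem_insert_self x σ) (Finset.mem_insert_of_mem hyσ)
          (c.Xadj x hx) ?_).1 hM).mono ?_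
        · intro w hw hadj
          exact c.Xonly x hx w (Finset.insert_subset hxa hσa hw) hadj
        · intro u hu; simp at hu ⊢; tauto
      have hσX : ∀ w ∈ σ, w ∉ X := by
        intro w hw hwX
        refine hσ ((HasM_N2 hw hyσ (c.Xadj w hwX)
          (fun u hu hadj => c.Xonly w hwX u (hσa hu) hadj)).2 ?_)
        refine HasM_N3 (v := w) (fun u hu hadj => ?_) (hMk.mono ?_)
        · simp at hu
          exact hu.2.2 (c.Xonly w hwX u (hσa hu.1) hadj)
        · intro u hu; simp at hu ⊢; tauto
      refine ⟨hyσ, ⟨?_, ?_⟩, fun hh => hh.2 hMk⟩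
      · intro u hu
        rw [Finset.mem_erase] at hu
        have := hσa hu.2
        rw [c.ha] at this
        simp at this
        have := hσX u hu.2
        tauto
      · rwa [Finset.insert_erase hyσ]
    · rintro ⟨hyσ, ⟨hσH, hσ⟩, hnF⟩
      rw [Finset.insert_erase hyσ] at hσ
      have hMk : HasM G k (σ.erase y) := by
        by_contra hcon
        exact hnF ⟨hσH, hcon⟩
      have hσa : σ ⊆ a := by
        intro u hu
        by_cases huy : u = y
        · rw [huy]; exact hya
        · exact hHa (hσH (Finset.mem_erase.2 ⟨huy, hu⟩))
      refine ⟨⟨hσa, hσ⟩, fun hst => hst.2 ?_⟩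
      refine (HasM_N2 (y := y) (Finset.mem_insert_self x σ) (Finset.mem_insert_of_mem hyσ)
          (c.Xadj x hx) (fun w hw hadj =>
            c.Xonly x hx w (Finset.insert_subset hxa hσa hw) hadj)).2 (hMk.mono ?_)
      intro u hu
      have hux : u ≠ x := by
        rintro rfl
        exact Finset.disjoint_left.1 c.disj hx (hσH hu)
      simp at hu ⊢; tauto
  rw [this]
  simp

lemma DL_noz {y : Fin n} {H : Finset (Fin n)} (k : ℕ) (hz : ∀ u ∈ H, ¬ G.Adj y u) :
    DL G k y H = Fam G (k + 1) H := by
  ext τ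
  refine and_congr_right fun hτ => not_congr ⟨fun h => ?_, fun h => h.mono (Finset.subset_insert _ _)⟩
  exact HasM_N3 (fun w hw => hz w (hτ hw)) h

lemma DL_z {y z : Fin n} {H : Finset (Fin n)} (k : ℕ) (hzH : z ∈ H) (hyH : y ∉ H)
    (hyz : G.Adj y z)
    (hz : ∀ u ∈ H, G.Adj y u → u = z) (s : ℤ) :
    VZ K (DL G k y H) s ↔ VZ K (Fam G (k + 1) (H.erase z) \ Fam G k (H.erase z)) s := by
  rw [VZ_toggle_iff (DC_DL _ _ _) z]
  have hzy := hyz.ne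
  have N2' : ∀ τ ⊆ H, z ∉ τ → (HasM G (k + 1) (insert y (insert z τ)) ↔ HasM G k τ) := by
    intro τ hτ hzτ
    rw [HasM_N2 (x := y) (y := z) (by simp) (by simp) hyz]
    · have : insert y (insert z τ) \ {y, z} = τ := by
        have hyτ : y ∉ τ := fun h => hyH (hτ h)
        ext u; simp
        by_cases h1 : u = y
        · subst h1; tauto
        · by_cases h2 : u = z
          · subst h2; tauto
          · tauto
      rw [this]
    · intro w hw hadj
      have : w ≠ y := hadj.ne'
      simp [this] at hw
      rcases hw with h | h
      · exact h
      · exact hz w (hτ h) hadj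
  have : DL G k y H \ star (DL G k y H) z =
      Fam G (k + 1) (H.erase z) \ Fam G k (H.erase z) := by
    ext τ
    constructor
    · rintro ⟨⟨h1, h2⟩, h3⟩
      have hM : HasM G (k + 1) (insert y (insert z τ)) := by
        by_contra hcon
        exact h3 ⟨Finset.insert_subset hzH h1, hcon⟩
      have hzτ : z ∉ τ := by
        intro hh
        rw [Finset.insert_eq_of_mem hh] at hM
        exact h2 hM
      rw [N2' τ h1 hzτ] at hM
      exact ⟨⟨Finset.subset_erase.2 ⟨h1, hzτ⟩, fun hh => h2 (hh.mono (Finset.subset_insert _ _))⟩,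
        fun hh => hh.2 hM⟩
    · rintro ⟨⟨h1, h2⟩, h3⟩
      have hM : HasM G k τ := by
        by_contra hcon
        exact h3 ⟨h1, hcon⟩
      obtain ⟨h1', hzτ⟩ := Finset.subset_erase.1 h1
      refine ⟨⟨h1', fun hh => h2 (HasM_N3 (fun w hw hadj => ?_) hh)⟩, fun hh => hh.2 ?_⟩
      · exact hzτ (hz w (h1' hw) hadj ▸ hw)
      · rw [N2' τ h1' hzτ]; exact hM
  rw [this]

lemma dir1_z {a : Finset (Fin n)} {y z : Fin n} {X H : Finset (Fin n)} (c : Cfg G a y X H) (k : ℕ)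
    (s : ℤ) (hzH : z ∈ H) (hyz : G.Adj y z) (hz : ∀ u ∈ H, G.Adj y u → u = z)
    (v1 : VZ K (Fam G k H) (s - 2)) (v2 : VZ K (Fam G k (H.erase z)) (s - 2))
    (v3 : VZ K (Fam G (k + 1) (H.erase z)) (s - 1)) : VZ K (Fam G (k + 1) a) s := by
  have e : s - 1 - 1 = s - 2 := by ring
  rw [R1 c]
  refine VZ_b (DC_Fam _ _) (DC_DL _ _ _) (Fam_sub_DL _ _ _) _ (by rwa [e]) ?_
  rw [DL_z k hzH c.yH hyz hz]
  exact VZ_b (DC_Fam _ _) (DC_Fam _ _) (Fam_sub_succ _ _) _ (by rwa [e]) v3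

lemma dir1_noz {a : Finset (Fin n)} {y : Fin n} {X H : Finset (Fin n)} (c : Cfg G a y X H) (k : ℕ)
    (s : ℤ) (hz : ∀ u ∈ H, ¬ G.Adj y u)
    (v1 : VZ K (Fam G k H) (s - 2))
    (v3 : VZ K (Fam G (k + 1) H) (s - 1)) : VZ K (Fam G (k + 1) a) s := by
  have e : s - 1 - 1 = s - 2 := by ring
  rw [R1 c]
  refine VZ_b (DC_Fam _ _) (DC_DL _ _ _) (Fam_sub_DL _ _ _) _ (by rwa [e]) ?_
  rwa [DL_noz k hz]

lemma dir2_z {a : Finset (Fin n)} {y z : Fin n} {X H : Finset (Fin n)} (c : Cfg G a y X H) (k : ℕ)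
    (s : ℤ) (hzH : z ∈ H) (hyz : G.Adj y z) (hz : ∀ u ∈ H, G.Adj y u → u = z)
    (v : VZ K (Fam G (k + 1) a) s) : VZ K (Fam G k H) (s - 2) := by
  have e : s - 1 - 1 = s - 2 := by ring
  rw [R1 c] at v
  rw [← e]
  refine VZ_b1 (DC_Fam _ _) (DC_DL k y H) _ z (fun σ hσ => ?_) v
  refine ⟨Finset.insert_subset hzH hσ.1, fun hh => hσ.2 ?_⟩
  rw [HasM_N2 (x := y) (y := z) (by simp) (by simp) hyz] at hh
  · refine hh.mono ?_
    intro u hu; simp at hu; tauto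
  · intro w hw hadj
    have : w ≠ y := hadj.ne'
    simp [this] at hw
    rcases hw with h | h
    · exact h
    · exact hz w (hσ.1 h) hadj

lemma dir2_z' {a : Finset (Fin n)} {y z : Fin n} {X H : Finset (Fin n)} (c : Cfg G a y X H) (k : ℕ)
    (s : ℤ) (hzH : z ∈ H) (hyz : G.Adj y z) (hz : ∀ u ∈ H, G.Adj y u → u = z)
    (hne : (H.erase z).Nonempty)
    (v : VZ K (Fam G (k + 1) a) s) : VZ K (Fam G k (H.erase z)) (s - 2) := by
  have e : s - 1 - 1 = s - 2 := by ring
  rw [R1 c] at v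
  have v' := VZ_b2 (DC_Fam _ _) (DC_DL k y H) _ z (fun σ hσ => by
    refine ⟨Finset.insert_subset hzH hσ.1, fun hh => hσ.2 ?_⟩
    rw [HasM_N2 (x := y) (y := z) (by simp) (by simp) hyz] at hh
    · refine hh.mono ?_
      intro u hu; simp at hu; tauto
    · intro w hw hadj
      have : w ≠ y := hadj.ne'
      simp [this] at hw
      rcases hw with h | h
      · exact h
      · exact hz w (hσ.1 h) hadj) v
  rw [DL_z k hzH c.yH hyz hz] at v'
  obtain ⟨u, hu⟩ := hne
  rw [← e]
  refine VZ_b1 (DC_Fam _ _) (DC_Fam _ _) _ u (fun σ hσ => ?_) v'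
  exact ⟨Finset.insert_subset hu hσ.1, fun hh => hσ.2 (HasM_N1 hh)⟩

lemma dir2_noz {a : Finset (Fin n)} {y : Fin n} {X H : Finset (Fin n)} (c : Cfg G a y X H) (k : ℕ)
    (s : ℤ) (hz : ∀ u ∈ H, ¬ G.Adj y u) (hne : H.Nonempty)
    (v : VZ K (Fam G (k + 1) a) s) : VZ K (Fam G k H) (s - 2) := by
  have e : s - 1 - 1 = s - 2 := by ring
  rw [R1 c, DL_noz k hz] at v
  obtain ⟨u, hu⟩ := hne
  rw [← e]
  refine VZ_b1 (DC_Fam _ _) (DC_Fam _ _) _ u (fun σ hσ => ?_) v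
  exact ⟨Finset.insert_subset hu hσ.1, fun hh => hσ.2 (HasM_N1 hh)⟩

end rec
end SqDepth

namespace SqDepth

section forest
variable {n : ℕ} {G : SimpleGraph (Fin n)}

lemma exists_leaf (hG : G.IsAcyclic) {B : Finset (Fin n)} (hB : B.Nonempty) :
    ∃ y ∈ B, ∀ u ∈ B, ∀ u' ∈ B, G.Adj y u → G.Adj y u' → u = u' := by
  obtain ⟨b, hb⟩ := hB
  let P : ℕ → Prop := fun l => ∃ (u v : Fin n) (p : G.Walk u v), p.IsPath ∧
    (∀ w ∈ p.support, w ∈ B) ∧ p.length = l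
  have hP0 : P 0 := ⟨b, b, SimpleGraph.Walk.nil, SimpleGraph.Walk.IsPath.nil, by simpa using hb, rfl⟩
  have hbd : ∀ l, P l → l ≤ n := by
    rintro l ⟨u, v, p, hp, -, rfl⟩
    have := hp.length_lt
    simp at this
    omega
  obtain ⟨u, v, p, hp, hs, hl⟩ := Nat.findGreatest_spec (P := P) (Nat.zero_le n) hP0
  have hu : u ∈ B := hs u p.start_mem_support
  have key : ∀ w ∈ B, G.Adj u w → w = p.snd := by
    intro w hw hadj
    by_cases hwp : w ∈ p.support
    · exact hG.eq_snd_of_adj_start hp hadj hwp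
    · exfalso
      have hP : P (p.length + 1) := by
        refine ⟨w, v, SimpleGraph.Walk.cons hadj.symm p, ?_, ?_, by simp⟩
        · rw [SimpleGraph.Walk.cons_isPath_iff]; exact ⟨hp, hwp⟩
        · intro x hx
          simp at hx
          rcases hx with rfl | hx
          · exact hw
          · exact hs x hx
      have := Nat.le_findGreatest (hbd _ hP) hP
      omega
  exact ⟨u, hu, fun w hw w' hw' h h' => (key w hw h).trans (key w' hw' h').symm⟩

/-- no isolated vertices in `a` -/
def NoIso (G : SimpleGraph (Fin n)) (a : Finset (Fin n)) : Prop := ∀ v ∈ a, ∃ w ∈ a, G.Adj v w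

/-- the two cases: -/
def ZCase (G : SimpleGraph (Fin n)) (y z : Fin n) (H : Finset (Fin n)) : Prop :=
  z ∈ H ∧ G.Adj y z ∧ ∀ u ∈ H, G.Adj y u → u = z

lemma exists_cfg (hG : G.IsAcyclic) {a : Finset (Fin n)} (ha : a.Nonempty) (hiso : NoIso G a) :
    ∃ y X H, Cfg G a y X H ∧ NoIso G H ∧
      ((∀ u ∈ H, ¬ G.Adj y u) ∨ ∃ z, ZCase G y z H ∧ (H.erase z).Nonempty) := by
  let B := a.filter fun v => ∃ u ∈ a, ∃ w ∈ a, G.Adj v u ∧ G.Adj v w ∧ u ≠ w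
  -- find `y` with a leaf and at most one neighbour in `B`
  have hB : ∀ v ∈ a, v ∉ B → ∀ u ∈ a, ∀ w ∈ a, G.Adj v u → G.Adj v w → u = w := by
    intro v hv hvB u hu w hw h1 h2
    by_contra hne
    exact hvB (Finset.mem_filter.2 ⟨hv, u, hu, w, hw, h1, h2, hne⟩)
  have hy : ∃ y ∈ a, (∃ x ∈ a, x ∉ B ∧ G.Adj y x) ∧
      ∀ u ∈ B, ∀ u' ∈ B, G.Adj y u → G.Adj y u' → u = u' := by
    by_cases hBe : B.Nonempty
    · obtain ⟨y, hy, hyu⟩ := exists_leaf hG hBe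
      obtain ⟨hya, u, hu, w, hw, h1, h2, hne⟩ := Finset.mem_filter.1 hy
      refine ⟨y, hya, ?_, hyu⟩
      by_contra hcon
      push Not at hcon
      refine hne (hyu u ?_ w ?_ h1 h2)
      · by_contra h; exact hcon u hu h h1
      · by_contra h; exact hcon w hw h h2
    · rw [Finset.not_nonempty_iff_eq_empty] at hBe
      obtain ⟨y, hya⟩ := ha
      obtain ⟨x, hxa, hadj⟩ := hiso y hya
      refine ⟨y, hya, ⟨x, hxa, by simp [hBe], hadj⟩, by simp [hBe]⟩
  obtain ⟨y, hya, ⟨x, hxa, hxB, hyx⟩, hyu⟩ := hy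
  let X := a.filter fun w => w ∉ B ∧ G.Adj y w
  have hyX : y ∉ X := fun h => (Finset.mem_filter.1 h).2.2.ne rfl
  let H := a \ insert y X
  have hXa : X ⊆ a := Finset.filter_subset _ _
  have memH : ∀ u, u ∈ H ↔ u ∈ a ∧ u ≠ y ∧ u ∉ X := by
    intro u; simp [H]
  have hXonly : ∀ w ∈ X, ∀ u ∈ a, G.Adj w u → u = y := by
    intro w hw u hu hadj
    have := (Finset.mem_filter.1 hw)
    exact hB w this.1 this.2.1 u hu y hya hadj this.2.2.symm
  have c : Cfg G a y X H := by
    refine ⟨?_, hyX, ?_, ?_, ?_, hXonly, ⟨x, ?_⟩⟩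
    · ext u
      rw [Finset.mem_insert, Finset.mem_union, memH]
      constructor
      · intro hu; tauto
      · rintro (rfl | h | h)
        · exact hya
        · exact hXa h
        · exact h.1
    · rw [memH]; simp
    · rw [Finset.disjoint_left]; intro u hu hu'; exact ((memH u).1 hu').2.2 hu
    · intro w hw; exact (Finset.mem_filter.1 hw).2.2.symm
    · exact Finset.mem_filter.2 ⟨hxa, hxB, hyx⟩
  -- elements of `H`
  have hHy : ∀ u ∈ H, G.Adj y u → u ∈ B := by
    intro u hu hadj
    by_contra h
    exact ((memH u).1 hu).2.2 (Finset.mem_filter.2 ⟨((memH u).1 hu).1, h, hadj⟩)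
  have hHnb : ∀ u ∈ H, ∃ w ∈ H, G.Adj u w := by
    intro u hu
    have hu' := (memH u).1 hu
    have : ∃ w ∈ a, w ≠ y ∧ G.Adj u w := by
      by_cases hadj : G.Adj y u
      · obtain ⟨_, p, hp, q, hq, h1, h2, hne⟩ := Finset.mem_filter.1 (hHy u hu hadj)
        by_cases hpy : p = y
        · exact ⟨q, hq, fun h => hne (hpy.trans h.symm), h2⟩
        · exact ⟨p, hp, hpy, h1⟩
      · obtain ⟨w, hw, h⟩ := hiso u hu'.1
        exact ⟨w, hw, fun hh => hadj (hh ▸ h.symm), h⟩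
    obtain ⟨w, hw, hwy, h⟩ := this
    refine ⟨w, (memH w).2 ⟨hw, hwy, fun hwX => ?_⟩, h⟩
    exact hu'.2.1 (hXonly w hwX u hu'.1 h.symm)
  refine ⟨y, X, H, c, hHnb, ?_⟩
  by_cases hz : ∃ z ∈ H, G.Adj y z
  · obtain ⟨z, hzH, hyz⟩ := hz
    refine Or.inr ⟨z, ⟨hzH, hyz, fun u hu hadj => ?_⟩, ?_⟩
    · exact hyu u (hHy u hu hadj) z (hHy z hzH hyz) hadj hyz
    · obtain ⟨w, hw, h⟩ := hHnb z hzH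
      exact ⟨w, Finset.mem_erase.2 ⟨h.ne', hw⟩⟩
  · push Not at hz
    exact Or.inl hz

end forest
end SqDepth

namespace SqDepth

section claims
variable {K : Type*} [Field K] {n : ℕ} {G : SimpleGraph (Fin n)}

lemma VZ_low {k : ℕ} {c : Finset (Fin n)} {s : ℤ} (hc : c.Nonempty) (hs : s < 2 * k - 1) :
    VZ K (Fam G k c) s := by
  obtain ⟨v, hv⟩ := hc
  refine VZ_apex (DC_Fam _ _) _ v fun σ hσ hcard => ⟨Finset.insert_subset hv hσ.1, fun h => ?_⟩
  have h1 := h.card_le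
  have h2 := Finset.card_insert_le v σ
  omega

lemma VZ_neg {A : Set (Finset (Fin n))} {s : ℤ} (hs : s < 0) : VZ K A s := by
  intro f _ _
  exact ⟨0, fun _ _ => rfl, fun σ _ h => by omega⟩

lemma VZ_empty {A : Set (Finset (Fin n))} {s : ℤ} (hA : A = ∅) : VZ K A s := by
  subst hA
  intro f _ _
  exact ⟨0, fun _ _ => rfl, fun σ h => h.elim⟩

lemma VZ_Fam_zero {c : Finset (Fin n)} {s : ℤ} : VZ K (Fam G 0 c) s :=
  VZ_empty (by ext σ; simp [Fam, HasM_zero])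

lemma noIso_of_not_VZ {k : ℕ} {c : Finset (Fin n)} {s : ℤ} (h : ¬ VZ K (Fam G k c) s) :
    NoIso G c := by
  intro v hv
  by_contra hcon
  push Not at hcon
  refine h (VZ_apex (DC_Fam _ _) _ v fun σ hσ _ => ⟨Finset.insert_subset hv hσ.1, fun hM => ?_⟩)
  exact hσ.2 (HasM_N3 (fun w hw => hcon w (hσ.1 hw)) hM)

lemma Cfg.hasM_iff {a : Finset (Fin n)} {y : Fin n} {X H : Finset (Fin n)} (c : Cfg G a y X H)
    (k : ℕ) : HasM G (k + 1) a ↔ HasM G k H := by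
  obtain ⟨x, hx⟩ := c.Xne
  have hxa : x ∈ a := by rw [c.ha]; simp [hx]
  have hya : y ∈ a := by rw [c.ha]; simp
  have hHa : ∀ u ∈ H, u ∈ a := by rw [c.ha]; intro u hu; simp [hu]
  have hXa : ∀ u ∈ X, u ∈ a := by rw [c.ha]; intro u hu; simp [hu]
  rw [HasM_N2 hxa hya (c.Xadj x hx) (c.Xonly x hx)]
  constructor
  · intro h
    refine HasM_N3s (W := X) (fun v hv w hw hadj => ?_) (h.mono ?_)
    · have hwa : w ∈ a := by
        rcases Finset.mem_union.1 hw with h | h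
        · exact hHa w h
        · exact hXa w h
      have := c.Xonly v hv w hwa hadj
      subst this
      rcases Finset.mem_union.1 hw with h | h
      · exact c.yH h
      · exact c.yX h
    · intro u hu
      simp only [c.ha, Finset.mem_sdiff, Finset.mem_insert, Finset.mem_union,
        Finset.mem_singleton] at hu ⊢
      tauto
  · intro h
    refine h.mono fun u hu => ?_
    have h1 : u ≠ x := by
      rintro rfl; exact Finset.disjoint_left.1 c.disj hx hu
    have h2 : u ≠ y := by
      rintro rfl; exact c.yH hu
    simp [hHa u hu, h1, h2]

lemma HasM_one_of_adj {σ : Finset (Fin n)} {u w : Fin n} (hu : u ∈ σ) (hw : w ∈ σ)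
    (h : G.Adj u w) : HasM G 1 σ := by
  have : HasM G (0 + 1) {u, w} := by
    refine (HasM_N2 (x := u) (y := w) (by simp) (by simp) h ?_).2 (HasM_zero _)
    intro v hv hadj
    simp [hadj.ne'] at hv
    exact hv
  exact this.mono (by intro v hv; simp at hv; rcases hv with rfl | rfl <;> assumption)

lemma HasM.nonempty {k : ℕ} {σ : Finset (Fin n)} (h : HasM G k σ) (hk : 1 ≤ k) : σ.Nonempty := by
  have := h.card_le
  exact Finset.card_pos.1 (by omega)

lemma top (hG : G.IsAcyclic) (k : ℕ) : ∀ b : Finset (Fin n), NoIso G b → HasM G (k + 1) b →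
    ¬ HasM G (k + 2) b → ¬ VZ K (Fam G (k + 1) b) (2 * k + 1) := by
  induction k with
  | zero =>
    intro b hiso h1 h2
    obtain ⟨y, X, H, c, hH, -⟩ := exists_cfg hG (h1.nonempty (by simp)) hiso
    rw [c.hasM_iff] at h2
    have hHe : H = ∅ := by
      by_contra hne
      obtain ⟨u, hu⟩ := Finset.nonempty_iff_ne_empty.2 hne
      obtain ⟨w, hw, hadj⟩ := hH u hu
      exact h2 (HasM_one_of_adj hu hw hadj)
    subst hHe
    rw [R1 c]
    intro hV
    obtain ⟨g, hg, hfg⟩ := hV (fun σ => if σ = ∅ then 1 else 0) (by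
      intro σ hσ
      rw [if_neg]
      rintro rfl
      refine hσ ⟨⟨by simp, fun h => ?_⟩, fun h => h.2 (HasM_zero _)⟩
      have := h.card_le
      simp at this) (by
      intro τ hτ hcard
      have := Finset.subset_empty.1 hτ.1.1
      subst this
      simp at hcard)
    have := hfg ∅ ⟨⟨by simp, fun h => by
      have := h.card_le
      simp at this⟩, fun h => h.2 (HasM_zero _)⟩ (by simp)
    simp [dl, kd_empty] at this
  | succ k ih =>
    intro b hiso h1 h2 hV
    obtain ⟨y, X, H, c, hH, hcase⟩ := exists_cfg hG (h1.nonempty (by simp)) hiso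
    rw [c.hasM_iff] at h1 h2
    refine ih H hH h1 h2 ?_
    have e : (2 * k + 1 : ℤ) = 2 * ((k + 1 : ℕ) : ℤ) + 1 - 2 := by push_cast; ring
    rw [e]
    rcases hcase with hz | ⟨z, ⟨hz1, hz2, hz3⟩, -⟩
    · exact dir2_noz c _ _ hz (h1.nonempty (by simp)) hV
    · exact dir2_z c _ _ hz1 hz2 hz3 hV

lemma minTop (hG : G.IsAcyclic) {k : ℕ} {a c : Finset (Fin n)} (hca : c ⊆ a)
    (ha : HasM G (k + 1) a) (hc : ¬ HasM G (k + 1) c) (hciso : NoIso G c) :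
    ∃ b, c ⊆ b ∧ b ⊆ a ∧ HasM G (k + 1) b ∧ ¬ VZ K (Fam G (k + 1) b) (2 * k + 1) := by
  obtain ⟨b, hb, hmin⟩ := Finset.exists_min_image
    (a.powerset.filter fun b => c ⊆ b ∧ HasM G (k + 1) b) Finset.card
    ⟨a, by simp [hca, ha]⟩
  simp only [Finset.mem_filter, Finset.mem_powerset] at hb hmin
  obtain ⟨hba, hcb, hbM⟩ := hb
  have key : ∀ v ∈ b, v ∉ c → ¬ HasM G (k + 1) (b.erase v) := by
    intro v hv hvc hM
    have := hmin (b.erase v) ⟨(Finset.erase_subset _ _).trans hba,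
      Finset.subset_erase.2 ⟨hcb, hvc⟩, hM⟩
    have := Finset.card_erase_lt_of_mem hv
    omega
  refine ⟨b, hcb, hba, hbM, top hG k b ?_ hbM ?_⟩
  · intro v hv
    by_cases hvc : v ∈ c
    · obtain ⟨w, hw, h⟩ := hciso v hvc
      exact ⟨w, hcb hw, h⟩
    · by_contra hcon
      push Not at hcon
      refine key v hv hvc (HasM_N3 (v := v) (fun w hw => hcon w (Finset.mem_of_mem_erase hw)) ?_)
      rwa [Finset.insert_erase hv]
  · intro hM
    have : ∃ v ∈ b, v ∉ c := by
      by_contra hcon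
      push Not at hcon
      exact hc (hbM.mono hcon)
    obtain ⟨v, hv, hvc⟩ := this
    refine key v hv hvc (HasM_N1 (v := v) ?_)
    rwa [Finset.insert_erase hv]

lemma Cfg.sub {a : Finset (Fin n)} {y : Fin n} {X H b : Finset (Fin n)} (c : Cfg G a y X H)
    (hb : b ⊆ H) : Cfg G (insert y (X ∪ b)) y X b := by
  refine ⟨rfl, c.yX, fun h => c.yH (hb h), c.disj.mono_right hb, c.Xadj, fun w hw u hu =>
    c.Xonly w hw u ?_, c.Xne⟩
  rw [c.ha]
  simp only [Finset.mem_insert, Finset.mem_union] at hu ⊢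
  have := @hb u
  tauto

lemma Cfg.card {a : Finset (Fin n)} {y : Fin n} {X H : Finset (Fin n)} (c : Cfg G a y X H) :
    a.card = 1 + X.card + H.card := by
  rw [c.ha, Finset.card_insert_of_notMem, Finset.card_union_of_disjoint c.disj]
  · ring
  · simp [c.yX, c.yH]

lemma Cfg.sub_subset {a : Finset (Fin n)} {y : Fin n} {X H b : Finset (Fin n)} (c : Cfg G a y X H)
    (hb : b ⊆ H) : insert y (X ∪ b) ⊆ a := by
  rw [c.ha]
  exact Finset.insert_subset_insert _ (Finset.union_subset_union_right hb)

lemma liftH {a : Finset (Fin n)} {y : Fin n} {X H b : Finset (Fin n)} (c : Cfg G a y X H)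
    (hcase : (∀ u ∈ H, ¬ G.Adj y u) ∨ ∃ z, ZCase G y z H ∧ (H.erase z).Nonempty)
    (hb : b ⊆ H) (hne : b.Nonempty) {k : ℕ} {s : ℤ} (h : ¬ VZ K (Fam G k b) s) :
    ¬ VZ K (Fam G (k + 1) (insert y (X ∪ b))) (s + 2) := by
  intro hV
  apply h
  have e : s = s + 2 - 2 := by ring
  rw [e]
  rcases hcase with hz | ⟨z, ⟨hz1, hz2, hz3⟩, -⟩
  · exact dir2_noz (c.sub hb) k _ (fun u hu => hz u (hb hu)) hne hV
  · by_cases hzb : z ∈ b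
    · exact dir2_z (c.sub hb) k _ hzb hz2 (fun u hu => hz3 u (hb hu)) hV
    · refine dir2_noz (c.sub hb) k _ (fun u hu hadj => ?_) hne hV
      exact hzb (hz3 u (hb hu) hadj ▸ hu)

lemma claimP (hG : G.IsAcyclic) : ∀ (m : ℕ) (a : Finset (Fin n)), a.card = m → ∀ k : ℕ, 1 ≤ k →
    HasM G (k + 1) a → ∀ c ⊆ a, ∀ s : ℤ, ¬ VZ K (Fam G k c) s →
    ∃ b ⊆ a, b.Nonempty ∧ ∃ s' : ℤ, ¬ VZ K (Fam G (k + 1) b) s' ∧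
      (c.card : ℤ) + s' ≤ b.card + s + 2 := by
  intro m
  induction m using Nat.strong_induction_on with
  | _ m IH =>
  intro a ham k hk haM c hca s hV
  have hs0 : 0 ≤ s := by
    by_contra h
    exact hV (VZ_neg (by omega))
  have hciso := noIso_of_not_VZ hV
  by_cases hcM : HasM G (k + 1) c
  swap
  · obtain ⟨b, hcb, hba, hbM, hbV⟩ := minTop (K := K) hG hca haM hcM hciso
    refine ⟨b, hba, hbM.nonempty (by omega), _, hbV, ?_⟩
    have h1 := Finset.card_le_card hcb
    have h2 := hbM.card_le
    by_cases hce : c.Nonempty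
    · have : ¬ s < 2 * k - 1 := fun h => hV (VZ_low hce h)
      omega
    · rw [Finset.not_nonempty_iff_eq_empty] at hce
      subst hce
      simp; omega
  by_cases hcaeq : c = a
  swap
  · have hlt := Finset.card_lt_card (Finset.ssubset_iff_subset_ne.2 ⟨hca, hcaeq⟩)
    obtain ⟨b, hb, h⟩ := IH c.card (by omega) c rfl k hk hcM c (Finset.Subset.refl _) s hV
    exact ⟨b, hb.trans hca, h⟩
  subst hcaeq
  have hne := hcM.nonempty (by omega)
  have hslow : 2 * k - 1 ≤ s := by
    by_contra h
    exact hV (VZ_low hne (by omega))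
  obtain ⟨k, rfl⟩ : ∃ k', k = k' + 1 := ⟨k - 1, by omega⟩
  obtain ⟨y, X, H, cf, hH, hcase⟩ := exists_cfg hG hne hciso
  have hHM := (cf.hasM_iff _).1 hcM
  have hcard := cf.card
  have hHc : H ⊆ c := by rw [cf.ha]; intro u hu; simp [hu]
  -- subcase (i)
  have subI : ¬ VZ K (Fam G k H) (s - 2) → ∃ b ⊆ c, b.Nonempty ∧ ∃ s' : ℤ,
      ¬ VZ K (Fam G (k + 1 + 1) b) s' ∧ (c.card : ℤ) + s' ≤ b.card + s + 2 := by
    intro h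
    have hk0 : 1 ≤ k := by
      by_contra hcon
      have : k = 0 := by omega
      subst this
      exact h VZ_Fam_zero
    obtain ⟨b, hb, hbne, s', hs', hle⟩ := IH H.card (by omega) H rfl k hk0 hHM H
      (Finset.Subset.refl _) _ h
    refine ⟨insert y (X ∪ b), cf.sub_subset hb, by simp, s' + 2, liftH cf hcase hb hbne hs', ?_⟩
    have := (cf.sub hb).card
    omega
  rcases hcase with hz | ⟨z, ⟨hz1, hz2, hz3⟩, hzne⟩
  · by_cases h1 : VZ K (Fam G k H) (s - 2)
    · by_cases h3 : VZ K (Fam G (k + 1) H) (s - 1)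
      · exact absurd (dir1_noz cf k s hz h1 h3) hV
      · refine ⟨c, Finset.Subset.refl _, hne, s + 1, fun hV' => h3 ?_, by omega⟩
        have := dir2_noz cf _ _ hz (hHM.nonempty (by omega)) hV'
        rwa [show s + 1 - 2 = s - 1 by ring] at this
    · exact subI h1
  · by_cases h1 : VZ K (Fam G k H) (s - 2)
    swap
    · exact subI h1
    by_cases h2 : VZ K (Fam G k (H.erase z)) (s - 2)
    swap
    · have hk0 : 1 ≤ k := by
        by_contra hcon
        have : k = 0 := by omega
        subst this
        exact h2 VZ_Fam_zero
      have hHz := Finset.card_erase_of_mem hz1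
      have hHpos := Finset.card_pos.2 ⟨z, hz1⟩
      by_cases hM : HasM G (k + 1) (H.erase z)
      · obtain ⟨b, hb, hbne, s', hs', hle⟩ := IH (H.erase z).card (by omega) _ rfl k hk0 hM _
          (Finset.Subset.refl _) _ h2
        obtain ⟨hbH, hzb⟩ := Finset.subset_erase.1 hb
        have hb' : insert z b ⊆ H := Finset.insert_subset hz1 hbH
        refine ⟨insert y (X ∪ insert z b), cf.sub_subset hb', by simp, s' + 2, ?_, ?_⟩
        · intro hV'
          apply hs'
          have := dir2_z' (cf.sub hb') (k + 1) _ (Finset.mem_insert_self z b) hz2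
            (fun u hu => hz3 u (hb' hu)) (by rwa [Finset.erase_insert hzb]) hV'
          rw [Finset.erase_insert hzb] at this
          rwa [show s' + 2 - 2 = s' by ring] at this
        · have h4 := (cf.sub hb').card
          rw [Finset.card_insert_of_notMem hzb] at h4
          omega
      · refine ⟨c, Finset.Subset.refl _, hne, _, top hG (k + 1) c hciso hcM ?_, ?_⟩
        · rw [cf.hasM_iff]
          intro hh
          refine hM (HasM_N1 (v := z) ?_)
          rwa [Finset.insert_erase hz1]
        · push_cast at hslow ⊢; linarith
    · by_cases h3 : VZ K (Fam G (k + 1) (H.erase z)) (s - 1)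
      · exact absurd (dir1_z cf k s hz1 hz2 hz3 h1 h2 h3) hV
      · refine ⟨c, Finset.Subset.refl _, hne, s + 1, fun hV' => h3 ?_, by omega⟩
        have := dir2_z' cf _ _ hz1 hz2 hz3 hzne hV'
        rwa [show s + 1 - 2 = s - 1 by ring] at this

end claims
end SqDepth

namespace SqDepth

section koszul
open scoped Pointwise
universe u w
variable {S : Type u} [CommRing S] {n : ℕ} (x : Fin n → S)

/-- vanishing of the `j`-th Koszul cohomology -/
def HV (M : Type w) [AddCommGroup M] [Module S M] (j : ℕ) : Prop :=
  ∀ f : Finset (Fin n) → M, (∀ τ, τ.card = j + 1 → kd x f τ = 0) →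
    ∃ g : Finset (Fin n) → M, ∀ τ, τ.card = j → f τ = kd x g τ

lemma kd_map {M N : Type w} [AddCommGroup M] [Module S M] [AddCommGroup N] [Module S N]
    (φ : M →ₗ[S] N) (f : Finset (Fin n) → M) (t) : kd x (fun τ => φ (f τ)) t = φ (kd x f t) := by
  simp only [kd, map_sum, map_zsmul, map_smul]

variable {M : Type w} [AddCommGroup M] [Module S M]

lemma kd_sum_smul (c : Fin n → S) (F : Fin n → Finset (Fin n) → M) (t) :
    kd x (fun τ => ∑ v, c v • F v τ) t = ∑ v, c v • kd x (F v) t := by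
  have : ∀ s : Finset (Fin n), kd x (fun τ => ∑ v ∈ s, c v • F v τ) t =
      ∑ v ∈ s, c v • kd x (F v) t := by
    intro s
    induction s using Finset.induction_on with
    | empty => simp [kd]
    | insert a s ha ih =>
      simp only [Finset.sum_insert ha]
      rw [← ih, ← kd_smul, ← kd_add]
      rfl
  exact this _

/-- homotopy for `∑ c v * x v` -/
def kH (c : Fin n → S) (f : Finset (Fin n) → M) (t : Finset (Fin n)) : M := ∑ v, c v • kh v f t

lemma kd_kH (c : Fin n → S) (f : Finset (Fin n) → M) (t) :
    kd x (kH c f) t + kH c (kd x f) t = (∑ v, c v * x v) • f t := by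
  unfold kH
  rw [kd_sum_smul, ← Finset.sum_add_distrib, Finset.sum_smul]
  refine Finset.sum_congr rfl fun v _ => ?_
  rw [← smul_add, kd_kh_add, mul_smul]

lemma kd_kH_cocycle (c : Fin n → S) (f : Finset (Fin n) → M) (j : ℕ)
    (hf : ∀ τ, τ.card = j + 1 → kd x f τ = 0) (t) (ht : t.card = j) :
    kd x (kH c f) t = (∑ v, c v * x v) • f t := by
  rw [← kd_kH]
  have : kH c (kd x f) t = 0 := by
    unfold kH
    refine Finset.sum_eq_zero fun v _ => ?_
    unfold kh
    split_ifs with hv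
    · simp
    · rw [hf _ (by rw [Finset.card_insert_of_notMem hv, ht])]; simp
  rw [this, add_zero]

lemma mk_eq_zero_iff (r : S) (m : M) :
    (Submodule.mkQ (r • (⊤ : Submodule S M)) m = 0) ↔ ∃ m', r • m' = m := by
  rw [Submodule.mkQ_apply, Submodule.Quotient.mk_eq_zero, Submodule.mem_smul_pointwise_iff_exists]
  simp

lemma HV_of_quot (c : Fin n → S) (hr : IsSMulRegular M (∑ v, c v * x v)) (d : ℕ)
    (h : ∀ j < d, HV x (QuotSMulTop (∑ v, c v * x v) M) j) : ∀ j < d + 1, HV x M j := by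
  set r := ∑ v, c v * x v with hrdef
  intro j hj f hf
  have key := kd_kH_cocycle x c f j hf
  rw [← hrdef] at key
  cases j with
  | zero =>
    refine ⟨0, fun τ hτ => ?_⟩
    have := key τ hτ
    rw [Finset.card_eq_zero] at hτ
    subst hτ
    rw [kd_empty] at this ⊢
    exact hr (by simpa using this.symm)
  | succ j =>
    let φ := Submodule.mkQ (r • (⊤ : Submodule S M))
    have hφ : Function.Surjective φ := Submodule.mkQ_surjective _
    obtain ⟨gb, hgb⟩ := h j (by omega) (fun τ => φ (kH c f τ)) (by
      intro τ hτ
      rw [kd_map, key τ hτ]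
      exact (mk_eq_zero_iff r _).2 ⟨_, rfl⟩)
    choose g hg using fun τ => hφ (gb τ)
    have hgb' : gb = fun τ => φ (g τ) := funext fun τ => (hg τ).symm
    have hp : ∀ τ, ∃ p : M, τ.card = j → r • p = kH c f τ - kd x g τ := by
      intro τ
      by_cases hτ : τ.card = j
      · have := hgb τ hτ
        rw [hgb', kd_map, ← sub_eq_zero, ← map_sub] at this
        obtain ⟨p, hp⟩ := (mk_eq_zero_iff r _).1 this
        exact ⟨p, fun _ => hp⟩
      · exact ⟨0, fun h => absurd h hτ⟩
    choose p hp using hp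
    refine ⟨p, fun τ hτ => hr ?_⟩
    show r • f τ = r • kd x p τ
    rw [← key τ hτ, ← kd_smul]
    have e : kd x (r • p) τ = kd x (kH c f - kd x g) τ := by
      refine kd_congr x fun v hv => ?_
      refine hp _ ?_
      rw [Finset.card_erase_of_mem hv, hτ]; rfl
    rw [e, kd_sub, kd_kd, sub_zero]

lemma mem_span_range_iff (r : S) : r ∈ Ideal.span (Set.range x) ↔ ∃ c : Fin n → S,
    ∑ v, c v * x v = r := by
  rw [Ideal.span, Submodule.mem_span_range_iff_exists_fun]
  simp

lemma C1 (rs : List S) : ∀ (M : Type w) [AddCommGroup M] [Module S M],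
    (∀ r ∈ rs, r ∈ Ideal.span (Set.range x)) →
    RingTheory.Sequence.IsWeaklyRegular M rs → ∀ j < rs.length, HV x M j := by
  induction rs with
  | nil => intro M _ _ _ _ j hj; simp at hj
  | cons r rs ih =>
    intro M _ _ hm hreg
    rw [RingTheory.Sequence.isWeaklyRegular_cons_iff] at hreg
    obtain ⟨c, hc⟩ := (mem_span_range_iff x r).1 (hm r (by simp))
    subst hc
    exact HV_of_quot x c hreg.1 rs.length
      (ih _ (fun r hr => hm r (by simp [hr])) hreg.2)

lemma HV_quot (r : S) (hr : IsSMulRegular M r) (j : ℕ) (h0 : HV x M j) (h1 : HV x M (j + 1)) :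
    HV x (QuotSMulTop r M) j := by
  intro fb hfb
  let φ := Submodule.mkQ (r • (⊤ : Submodule S M))
  have hφ : Function.Surjective φ := Submodule.mkQ_surjective _
  choose f hf using fun τ => hφ (fb τ)
  have hfe : fb = fun τ => φ (f τ) := funext fun τ => (hf τ).symm
  have hp : ∀ τ, ∃ p : M, τ.card = j + 1 → r • p = kd x f τ := by
    intro τ
    by_cases hτ : τ.card = j + 1
    · have := hfb τ hτ
      rw [hfe, kd_map] at this
      obtain ⟨p, hp⟩ := (mk_eq_zero_iff r _).1 this
      exact ⟨p, fun _ => hp⟩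
    · exact ⟨0, fun h => absurd h hτ⟩
  choose p hp using hp
  obtain ⟨g, hg⟩ := h1 p (by
    intro τ hτ
    apply hr
    show r • kd x p τ = r • 0
    rw [smul_zero, ← kd_smul, ← kd_kd x f τ]
    refine kd_congr x fun v hv => hp _ ?_
    rw [Finset.card_erase_of_mem hv, hτ]; rfl)
  obtain ⟨q, hq⟩ := h0 (f - r • g) (by
    intro τ hτ
    rw [kd_sub, kd_smul, ← hg τ hτ, hp τ hτ, sub_self])
  refine ⟨fun τ => φ (q τ), fun τ hτ => ?_⟩
  rw [kd_map, ← hq τ hτ, ← hf τ, ← sub_eq_zero, ← map_sub]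
  refine (mk_eq_zero_iff r _).2 ⟨g τ, ?_⟩
  simp

lemma exists_regular [IsNoetherianRing S] [Module.Finite S M] (h : HV x M 0) :
    ∃ r ∈ Ideal.span (Set.range x), IsSMulRegular M r := by
  by_contra hcon
  push Not at hcon
  have hsub : (Ideal.span (Set.range x) : Set S) ⊆ ⋃ p ∈ (associatedPrimes S M), (p : Set S) := by
    intro r hr
    rw [biUnion_associatedPrimes_eq_compl_regular]
    exact hcon r hr
  have hfin := associatedPrimes.finite S M
  have := (Ideal.subset_union_prime (s := hfin.toFinset) (f := fun p => p) ⊥ ⊥ (by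
    intro p hp _ _
    exact ((Set.Finite.mem_toFinset hfin).1 hp).isPrime)).1 (by simpa using hsub)
  obtain ⟨p, hp, hle⟩ := this
  rw [Set.Finite.mem_toFinset] at hp
  obtain ⟨hpp, m, hm⟩ := isAssociatedPrime_iff.1 hp
  have hm0 : m = 0 := by
    obtain ⟨g, hg⟩ := h (fun _ => m) (by
      intro τ hτ
      obtain ⟨v, rfl⟩ := Finset.card_eq_one.1 hτ
      have : x v ∈ p := hle (Ideal.subset_span ⟨v, rfl⟩)
      rw [hm, Submodule.mem_colon_singleton, Submodule.mem_bot] at this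
      simp [kd, this])
    have := hg ∅ rfl
    rwa [kd_empty] at this
  subst hm0
  refine hpp.ne_top ((Ideal.eq_top_iff_one p).2 ?_)
  rw [hm, Submodule.mem_colon_singleton]
  simp

lemma C2 [IsNoetherianRing S] (d : ℕ) : ∀ (M : Type w) [AddCommGroup M] [Module S M]
    [Module.Finite S M], (∀ j < d, HV x M j) →
    ∃ rs : List S, rs.length = d ∧ (∀ r ∈ rs, r ∈ Ideal.span (Set.range x)) ∧
      RingTheory.Sequence.IsWeaklyRegular M rs := by
  induction d with
  | zero => intro M _ _ _ _; exact ⟨[], rfl, by simp, RingTheory.Sequence.IsWeaklyRegular.nil _ _⟩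
  | succ d ih =>
    intro M _ _ _ h
    obtain ⟨r, hr, hreg⟩ := exists_regular x (h 0 (by omega))
    obtain ⟨rs, h1, h2, h3⟩ := ih (QuotSMulTop r M)
      (fun j hj => HV_quot x r hreg j (h j (by omega)) (h (j + 1) (by omega)))
    refine ⟨r :: rs, by simp [h1], ?_, ?_⟩
    · intro r' hr'
      rcases List.mem_cons.1 hr' with rfl | h
      · exact hr
      · exact h2 r' h
    · rw [RingTheory.Sequence.isWeaklyRegular_cons_iff]
      exact ⟨hreg, h3⟩

end koszul
end SqDepth

namespace SqDepth

section bridge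
variable {K : Type*} [Field K] {n : ℕ} {G : SimpleGraph (Fin n)}

lemma mem_I_iff (k : ℕ) (p : MvPolynomial (Fin n) K) :
    p ∈ edgeIdealSqPow K G k ↔ ∀ m ∈ p.support, HasM G k m.support := by
  have hset : {f : MvPolynomial (Fin n) K | ∃ M : Finset (Sym2 (Fin n)), IsMatchingSet G M ∧
      M.card = k ∧ f = ∏ v ∈ Finset.univ.filter (fun v => ∃ e ∈ M, v ∈ e), X v} =
      (fun s => monomial s (1 : K)) '' {s | ∃ M : Finset (Sym2 (Fin n)), IsMatchingSet G M ∧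
        M.card = k ∧ s = ∑ v ∈ Finset.univ.filter (fun v => ∃ e ∈ M, v ∈ e),
          Finsupp.single v 1} := by
    have e : ∀ W : Finset (Fin n), (∏ v ∈ W, X v : MvPolynomial (Fin n) K) =
        monomial (∑ v ∈ W, Finsupp.single v 1) 1 := by
      intro W
      rw [monomial_sum_one]
      rfl
    ext f
    constructor
    · rintro ⟨M, h1, h2, rfl⟩
      exact ⟨_, ⟨M, h1, h2, rfl⟩, (e _).symm⟩
    · rintro ⟨_, ⟨M, h1, h2, rfl⟩, rfl⟩
      exact ⟨M, h1, h2, (e _).symm⟩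
  rw [edgeIdealSqPow, hset, mem_ideal_span_monomial_image]
  refine forall₂_congr fun m _ => ?_
  have app : ∀ (W : Finset (Fin n)) (u : Fin n),
      (∑ v ∈ W, (Finsupp.single v 1 : Fin n →₀ ℕ)) u = if u ∈ W then 1 else 0 := by
    intro W u
    rw [Finsupp.finsetSum_apply]
    simp [Finsupp.single_apply]
  constructor
  · rintro ⟨_, ⟨M, h1, h2, rfl⟩, hle⟩
    refine ⟨M, h1, h2, fun e he v hv => ?_⟩
    have := hle v
    rw [app, if_pos (by simp; exact ⟨e, he, hv⟩)] at this
    rw [Finsupp.mem_support_iff]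
    omega
  · rintro ⟨M, h1, h2, h3⟩
    refine ⟨_, ⟨M, h1, h2, rfl⟩, fun v => ?_⟩
    rw [app]
    split_ifs with hv
    · simp at hv
      obtain ⟨e, he, hv⟩ := hv
      have := h3 e he v hv
      rw [Finsupp.mem_support_iff] at this
      omega
    · simp

/-- the exponent `b + 1_τ` -/
def ex (b : Fin n → ℤ) (τ : Finset (Fin n)) : Fin n →₀ ℕ :=
  Finsupp.equivFunOnFinite.symm fun v => (b v + if v ∈ τ then 1 else 0).toNat

lemma ex_apply (b : Fin n → ℤ) (τ : Finset (Fin n)) (v : Fin n) :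
    ex b τ v = (b v + if v ∈ τ then 1 else 0).toNat := rfl

def AA (D : Set (Finset (Fin n))) (b : Fin n → ℤ) : Set (Finset (Fin n)) :=
  {τ | (∀ v, 0 ≤ b v + if v ∈ τ then 1 else 0) ∧ (ex b τ).support ∈ D}

def slice (D : Set (Finset (Fin n))) (b : Fin n → ℤ)
    (F : Finset (Fin n) → MvPolynomial (Fin n) K) (τ : Finset (Fin n)) : K :=
  if τ ∈ AA D b then coeff (ex b τ) (F τ) else 0

/-- the degree with `ex b τ = m` -/
def bo (τ : Finset (Fin n)) (m : Fin n →₀ ℕ) : Fin n → ℤ :=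
  fun v => (m v : ℤ) - if v ∈ τ then 1 else 0

lemma ex_bo (τ : Finset (Fin n)) (m : Fin n →₀ ℕ) : ex (bo τ m) τ = m := by
  ext v; simp [ex_apply, bo]

lemma mem_AA_bo {D : Set (Finset (Fin n))} (τ : Finset (Fin n)) (m : Fin n →₀ ℕ)
    (h : m.support ∈ D) : τ ∈ AA D (bo τ m) := by
  refine ⟨fun v => ?_, by rwa [ex_bo]⟩
  simp [bo]

lemma bo_ex {D : Set (Finset (Fin n))} {b : Fin n → ℤ} {τ : Finset (Fin n)} (h : τ ∈ AA D b) :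
    bo τ (ex b τ) = b := by
  ext v
  have := h.1 v
  simp only [bo, ex_apply]
  omega

lemma coeff_kd {D : Set (Finset (Fin n))} (hD : DC D) (b : Fin n → ℤ)
    (F : Finset (Fin n) → MvPolynomial (Fin n) K) {τ : Finset (Fin n)} (hτ : τ ∈ AA D b) :
    coeff (ex b τ) (kd (X : Fin n → MvPolynomial (Fin n) K) F τ) = dl K (slice D b F) τ := by
  unfold dl kd
  rw [coeff_sum]
  refine Finset.sum_congr rfl fun v hv => ?_
  rw [one_smul, coeff_smul, smul_eq_mul, coeff_X_mul']
  congr 1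
  have hbv := hτ.1 v
  rw [if_pos hv] at hbv
  by_cases hb : 0 ≤ b v
  · have h1 : v ∈ (ex b τ).support := by
      rw [Finsupp.mem_support_iff, ex_apply, if_pos hv]; omega
    have h2 : ex b (τ.erase v) = ex b τ - Finsupp.single v 1 := by
      ext u
      rw [Finsupp.tsub_apply, ex_apply, ex_apply, Finsupp.single_apply]
      by_cases huv : v = u
      · subst huv; simp [hv]; omega
      · simp [Ne.symm huv, huv]
    rw [if_pos h1, slice, if_pos, h2]
    refine ⟨fun u => ?_, hD _ hτ.2 _ ?_⟩
    · by_cases huv : u = v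
      · subst huv; simpa using hb
      · have := hτ.1 u
        simpa [huv] using this
    · rw [h2]
      intro u hu
      rw [Finsupp.mem_support_iff, Finsupp.tsub_apply] at hu
      rw [Finsupp.mem_support_iff]
      omega
  · have h1 : v ∉ (ex b τ).support := by
      rw [Finsupp.mem_support_iff, ex_apply, if_pos hv]; omega
    rw [if_neg h1, slice, if_neg]
    intro h
    have := h.1 v
    simp at this
    exact hb this

/-- non-faces ideal complement -/
def DD (G : SimpleGraph (Fin n)) (k : ℕ) : Set (Finset (Fin n)) := {σ | ¬ HasM G k σ}

lemma DC_DD (k : ℕ) : DC (DD G k) := fun _ h _ hs hh => h (hh.mono hs)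

lemma mem_I_iff' (k : ℕ) (p : MvPolynomial (Fin n) K) :
    p ∈ edgeIdealSqPow K G k ↔ ∀ m : Fin n →₀ ℕ, m.support ∈ DD G k → coeff m p = 0 := by
  rw [mem_I_iff]
  refine forall_congr' fun m => ?_
  rw [mem_support_iff, DD]
  simp only [Set.mem_ofPred_eq]
  tauto

lemma mk_kd (I : Ideal (MvPolynomial (Fin n) K)) (F : Finset (Fin n) → MvPolynomial (Fin n) K) (t) :
    kd (X : Fin n → MvPolynomial (Fin n) K) (fun τ => Ideal.Quotient.mk I (F τ)) t =
      Ideal.Quotient.mk I (kd (X : Fin n → MvPolynomial (Fin n) K) F t) :=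
  kd_map (X : Fin n → MvPolynomial (Fin n) K) (Submodule.mkQ I) F t

lemma HV_to_VZ (k j : ℕ)
    (h : HV (X : Fin n → MvPolynomial (Fin n) K) (MvPolynomial (Fin n) K ⧸ edgeIdealSqPow K G k) j)
    (b : Fin n → ℤ) : VZ K (AA (DD G k) b) j := by
  intro f hf hc
  set I := edgeIdealSqPow K G k
  let F : Finset (Fin n) → MvPolynomial (Fin n) K := fun τ => monomial (ex b τ) (f τ)
  have hs : slice (DD G k) b F = f := by
    ext τ
    unfold slice
    split_ifs with h
    · simp [F]
    · rw [hf τ h]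
  have hs' : ∀ b' ≠ b, slice (DD G k) b' F = 0 := by
    intro b' hb'
    ext τ
    unfold slice
    split_ifs with h
    · simp only [F, coeff_monomial]
      split_ifs with he
      · refine hf τ fun h' => hb' ?_
        rw [← bo_ex h, ← bo_ex h', he]
      · rfl
    · rfl
  obtain ⟨gb, hgb⟩ := h (fun τ => Ideal.Quotient.mk I (F τ)) (by
    intro τ hτ
    rw [mk_kd, Ideal.Quotient.eq_zero_iff_mem, mem_I_iff']
    intro m hm
    have hA := mem_AA_bo τ m hm
    have := coeff_kd (DC_DD k) _ F hA
    rw [ex_bo] at this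
    rw [this]
    by_cases hb : bo τ m = b
    · rw [hb, hs]
      rw [hb] at hA
      exact hc τ hA (by rw [hτ]; push_cast; ring)
    · rw [hs' _ hb]
      exact dl_zero_of fun _ _ => rfl)
  choose g hg using fun τ => Ideal.Quotient.mk_surjective (I := I) (gb τ)
  have hgb' : gb = fun τ => Ideal.Quotient.mk I (g τ) := funext fun τ => (hg τ).symm
  refine ⟨slice (DD G k) b g, fun σ hσ => by rw [slice, if_neg hσ], fun σ hσ hcard => ?_⟩
  have := hgb σ (by exact_mod_cast hcard)
  rw [hgb', mk_kd, Ideal.Quotient.mk_eq_mk_iff_sub_mem, mem_I_iff'] at this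
  have h2 := this (ex b σ) hσ.2
  rw [coeff_sub, coeff_kd (DC_DD k) b g hσ, sub_eq_zero] at h2
  rw [← h2]
  simp [F]

lemma VZ_to_HV (k j : ℕ) (h : ∀ b, VZ K (AA (DD G k) b) j) :
    HV (X : Fin n → MvPolynomial (Fin n) K)
      (MvPolynomial (Fin n) K ⧸ edgeIdealSqPow K G k) j := by
  set I := edgeIdealSqPow K G k with hI
  intro fb hfb
  choose F hF using fun τ => Ideal.Quotient.mk_surjective (I := I) (fb τ)
  have hfb' : fb = fun τ => Ideal.Quotient.mk I (F τ) := funext fun τ => (hF τ).symm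
  have hg : ∀ b, ∃ g : Finset (Fin n) → K, (∀ σ, σ ∉ AA (DD G k) b → g σ = 0) ∧
      (∀ σ ∈ AA (DD G k) b, σ.card = j → slice (DD G k) b F σ = dl K g σ) ∧
      (slice (DD G k) b F = 0 → g = 0) := by
    intro b
    by_cases h0 : slice (DD G k) b F = 0
    · refine ⟨0, fun _ _ => rfl, fun σ _ _ => ?_, fun _ => rfl⟩
      rw [h0, dl_zero_of (fun _ _ => rfl)]; rfl
    · obtain ⟨g, h1, h2⟩ := h b (slice (DD G k) b F) (fun σ hσ => by rw [slice, if_neg hσ]) (by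
        intro τ hτ hcard
        have := hfb τ (by exact_mod_cast hcard)
        rw [hfb', mk_kd, Ideal.Quotient.eq_zero_iff_mem, mem_I_iff'] at this
        have h3 := this (ex b τ) hτ.2
        rwa [coeff_kd (DC_DD k) b F hτ] at h3)
      exact ⟨g, h1, fun σ hσ hc => h2 σ hσ (by exact_mod_cast hc), fun h => absurd h h0⟩
  choose g hg1 hg2 hg3 using hg
  let B : Finset (Fin n → ℤ) :=
    Finset.univ.biUnion fun σ : Finset (Fin n) => (F σ).support.image (bo σ)
  have hB : ∀ b, b ∉ B → g b = 0 := by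
    intro b hb
    refine hg3 b ?_
    ext σ
    unfold slice
    split_ifs with hσ
    · by_contra hne
      refine hb ?_
      simp only [B, Finset.mem_biUnion, Finset.mem_image]
      exact ⟨σ, Finset.mem_univ _, ex b σ, mem_support_iff.2 hne, bo_ex hσ⟩
    · rfl
  let g' : Finset (Fin n) → MvPolynomial (Fin n) K := fun τ =>
    ∑ b ∈ B, monomial (ex b τ) (g b τ)
  have hslice : ∀ b, slice (DD G k) b g' = g b := by
    intro b
    ext τ
    unfold slice
    split_ifs with hτ
    · simp only [g', coeff_sum, coeff_monomial]
      rw [Finset.sum_eq_single b]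
      · simp
      · intro b' _ hne
        split_ifs with he
        · refine hg1 b' τ fun h' => hne ?_
          rw [← bo_ex hτ, ← bo_ex h', he]
        · rfl
      · intro hb
        rw [hB b hb]; simp
    · rw [hg1 b τ hτ]
  refine ⟨fun τ => Ideal.Quotient.mk I (g' τ), fun τ hτ => ?_⟩
  rw [mk_kd, hfb', Ideal.Quotient.mk_eq_mk_iff_sub_mem, mem_I_iff']
  intro m hm
  have hA := mem_AA_bo τ m hm
  have h1 := coeff_kd (DC_DD k) _ g' hA
  have h2 := hg2 _ τ hA hτ
  rw [slice, if_pos hA, ex_bo] at h2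
  rw [ex_bo, hslice] at h1
  rw [coeff_sub, h1, h2, sub_self]

lemma AA_toggle (k : ℕ) (b : Fin n → ℤ) (v : Fin n) (hv : 1 ≤ b v) (s : ℤ) :
    VZ K (AA (DD G k) b) s := by
  refine VZ_toggle s v fun σ => ?_
  have h1 : (ex b (insert v σ)).support = (ex b (σ.erase v)).support := by
    ext u
    simp only [Finsupp.mem_support_iff, ex_apply]
    by_cases huv : u = v
    · subst huv
      simp; omega
    · simp [huv]
  unfold AA
  simp only [Set.mem_ofPred_eq, h1]
  refine and_congr_left fun _ => forall_congr' fun u => ?_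
  by_cases huv : u = v
  · subst huv
    simp; omega
  · simp [huv]

lemma AA_eq (k : ℕ) (b : Fin n → ℤ) (h1 : ∀ v, b v ≤ 0) (h2 : ∀ v, -1 ≤ b v) :
    AA (DD G k) b = {σ | (Finset.univ.filter fun v => b v = 0)ᶜ ⊆ σ ∧
      σ \ (Finset.univ.filter fun v => b v = 0)ᶜ ∈
        Fam G k (Finset.univ.filter fun v => b v = 0)} := by
  ext σ
  have e : (∀ v, 0 ≤ b v + if v ∈ σ then 1 else 0) ↔
      (Finset.univ.filter fun v => b v = 0)ᶜ ⊆ σ := by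
    constructor
    · intro h v hv
      simp at hv
      have := h v
      have := h1 v
      by_contra hcon
      simp [hcon] at *
      omega
    · intro h v
      have := @h v
      simp at this
      have := h1 v
      have := h2 v
      split_ifs with hh
      · omega
      · have : b v = 0 := by tauto
        omega
  have e2 : (ex b σ).support = σ \ (Finset.univ.filter fun v => b v = 0)ᶜ := by
    ext u
    have := h1 u
    have := h2 u
    simp only [Finsupp.mem_support_iff, ex_apply]
    simp
    split_ifs with hh
    · simp [hh]; omega
    · simp [hh]; omega
  unfold AA
  simp only [Set.mem_ofPred_eq, e, e2]
  refine and_congr_right fun _ => ?_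
  unfold DD Fam
  simp only [Set.mem_ofPred_eq]
  refine ⟨fun h => ⟨?_, h⟩, fun h => h.2⟩
  intro u hu
  simp at hu ⊢
  exact hu.2

lemma VZ_AA (k : ℕ) (b : Fin n → ℤ) (h1 : ∀ v, b v ≤ 0) (h2 : ∀ v, -1 ≤ b v) (j : ℤ) :
    VZ K (AA (DD G k) b) j ↔ VZ K (Fam G k (Finset.univ.filter fun v => b v = 0))
      (j - n + (Finset.univ.filter fun v => b v = 0).card) := by
  rw [AA_eq k b h1 h2]
  set a := Finset.univ.filter fun v => b v = 0
  rw [← VZ_shifts (N := Fam G k a) aᶜ]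
  · have : ((aᶜ.card : ℕ) : ℤ) = n - a.card := by
      rw [Finset.card_compl, Fintype.card_fin, Nat.cast_sub]
      have := Finset.card_le_univ a
      simpa using this
    rw [this]
    ring_nf
  · intro τ hτ
    rw [Finset.disjoint_left]
    intro u hu hu'
    exact (Finset.mem_compl.1 hu) (hτ.1 hu')

lemma HV_iff (k j : ℕ) :
    HV (X : Fin n → MvPolynomial (Fin n) K) (MvPolynomial (Fin n) K ⧸ edgeIdealSqPow K G k) j ↔
    ∀ a : Finset (Fin n), VZ K (Fam G k a) ((j : ℤ) - n + a.card) := by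
  constructor
  · intro h a
    have := HV_to_VZ k j h (fun v => if v ∈ a then 0 else -1)
    rw [VZ_AA] at this
    · have e : (Finset.univ.filter fun v => (if v ∈ a then (0 : ℤ) else -1) = 0) = a := by
        ext v; simp
      rwa [e] at this
    · intro v; split_ifs <;> simp
    · intro v; split_ifs <;> simp
  · intro h
    refine VZ_to_HV k j fun b => ?_
    by_cases h1 : ∀ v, b v ≤ 0
    · by_cases h2 : ∀ v, -1 ≤ b v
      · rw [VZ_AA k b h1 h2]
        exact h _
      · push Not at h2
        obtain ⟨v, hv⟩ := h2
        refine VZ_empty (Set.eq_empty_of_forall_notMem fun τ hτ => ?_)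
        have := hτ.1 v
        split_ifs at this <;> omega
    · push Not at h1
      obtain ⟨v, hv⟩ := h1
      exact AA_toggle k b v (by omega) _

end bridge
end SqDepth

namespace SqDepth

section final
variable {K : Type*} [Field K] {n : ℕ} {G : SimpleGraph (Fin n)}

lemma maxIdeal_ne_top : maxIdeal K n ≠ ⊤ := by
  intro h
  have hle : maxIdeal K n ≤ RingHom.ker (constantCoeff (σ := Fin n) (R := K)) := by
    rw [maxIdeal, Ideal.span_le]
    rintro _ ⟨i, rfl⟩
    simp [RingHom.mem_ker]
  rw [h] at hle
  have : (1 : MvPolynomial (Fin n) K) ∈ RingHom.ker (constantCoeff (σ := Fin n) (R := K)) :=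
    hle trivial
  simp [RingHom.mem_ker] at this

lemma edge_le_max {k : ℕ} (hk : 1 ≤ k) : edgeIdealSqPow K G k ≤ maxIdeal K n := by
  rw [edgeIdealSqPow, Ideal.span_le]
  rintro _ ⟨M, h1, h2, rfl⟩
  obtain ⟨e, he⟩ : M.Nonempty := by rw [← Finset.card_pos]; omega
  obtain ⟨v, hv⟩ : ∃ v, v ∈ e := by
    induction e with
    | _ x y => exact ⟨x, by simp⟩
  refine Ideal.mem_of_dvd _ (Finset.dvd_prod_of_mem _ (a := v) ?_) (Ideal.subset_span ⟨v, rfl⟩)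
  simp only [Finset.mem_filter, Finset.mem_univ, true_and]
  exact ⟨e, he, hv⟩

lemma upper {k : ℕ} {b : Finset (Fin n)} {s : ℤ} (h : ¬ VZ K (Fam G k b) s)
    {rs : List (MvPolynomial (Fin n) K)} (h1 : ∀ r ∈ rs, r ∈ maxIdeal K n)
    (h2 : RingTheory.Sequence.IsRegular
      (MvPolynomial (Fin n) K ⧸ edgeIdealSqPow K G k) rs) :
    (rs.length : ℤ) ≤ n - b.card + s := by
  have hs : 0 ≤ s := by
    by_contra hs
    exact h (VZ_neg (by omega))
  have hb : b.card ≤ n := by simpa using Finset.card_le_univ b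
  by_contra hlt
  have h3 := C1 (X : Fin n → MvPolynomial (Fin n) K) rs
    (MvPolynomial (Fin n) K ⧸ edgeIdealSqPow K G k) h1 h2.toIsWeaklyRegular
    (n - b.card + s).toNat (by omega)
  rw [HV_iff] at h3
  refine h ?_
  have h4 := h3 b
  have e : (((n - b.card + s : ℤ).toNat : ℕ) : ℤ) - n + b.card = s := by omega
  rwa [e] at h4

lemma depth_le {k : ℕ} {b : Finset (Fin n)} {s : ℤ} (h : ¬ VZ K (Fam G k b) s) :
    (depthQuot (edgeIdealSqPow K G k) : ℤ) ≤ n - b.card + s := by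
  have hs : 0 ≤ s := by
    by_contra hs
    exact h (VZ_neg (by omega))
  have hb : b.card ≤ n := by simpa using Finset.card_le_univ b
  have : depthQuot (edgeIdealSqPow K G k) ≤ (n - b.card + s : ℤ).toNat := by
    refine csSup_le' ?_
    rintro d ⟨rs, rfl, h1, h2⟩
    have := upper h h1 h2
    omega
  omega

lemma exists_bad {k : ℕ} (hk : 1 ≤ k) (hbdd : ∃ b s, ¬ VZ K (Fam G k b) s) :
    ∃ (c : Finset (Fin n)) (s : ℤ), ¬ VZ K (Fam G k c) s ∧
      n - c.card + s ≤ (depthQuot (edgeIdealSqPow K G k) : ℤ) := by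
  obtain ⟨b, s, hb⟩ := hbdd
  by_contra hcon
  push Not at hcon
  have hHV : ∀ j < depthQuot (edgeIdealSqPow K G k) + 1,
      HV (X : Fin n → MvPolynomial (Fin n) K)
        (MvPolynomial (Fin n) K ⧸ edgeIdealSqPow K G k) j := by
    intro j hj
    rw [HV_iff]
    intro a
    by_contra hV
    have := hcon a _ hV
    omega
  obtain ⟨rs, hl, hm, hw⟩ := C2 (X : Fin n → MvPolynomial (Fin n) K) _ _ hHV
  have hreg : RingTheory.Sequence.IsRegular
      (MvPolynomial (Fin n) K ⧸ edgeIdealSqPow K G k) rs := by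
    refine ⟨hw, fun htop => ?_⟩
    have hle : Ideal.ofList rs ≤ maxIdeal K n := Ideal.span_le.2 fun r hr => hm r hr
    let φ : (MvPolynomial (Fin n) K ⧸ edgeIdealSqPow K G k) →ₗ[MvPolynomial (Fin n) K]
        (MvPolynomial (Fin n) K ⧸ maxIdeal K n) :=
      Submodule.mapQ _ _ LinearMap.id (edge_le_max (K := K) (G := G) hk)
    have h1 : Ideal.ofList rs • (⊤ : Submodule (MvPolynomial (Fin n) K)
        (MvPolynomial (Fin n) K ⧸ edgeIdealSqPow K G k)) ≤ LinearMap.ker φ := by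
      rw [Submodule.smul_le]
      intro r hr x _
      rw [LinearMap.mem_ker, map_smul]
      obtain ⟨y, hy⟩ := Submodule.mkQ_surjective _ (φ x)
      rw [← hy, ← map_smul]
      exact (Submodule.Quotient.mk_eq_zero _).2 (Ideal.mul_mem_right _ _ (hle hr))
    rw [← htop] at h1
    have h2 : (Submodule.Quotient.mk (1 : MvPolynomial (Fin n) K) :
      MvPolynomial (Fin n) K ⧸ edgeIdealSqPow K G k) ∈ LinearMap.ker φ := h1 trivial
    have h3 : (Submodule.Quotient.mk (1 : MvPolynomial (Fin n) K) :
      MvPolynomial (Fin n) K ⧸ maxIdeal K n) = 0 := h2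
    rw [Submodule.Quotient.mk_eq_zero] at h3
    exact maxIdeal_ne_top ((Ideal.eq_top_iff_one _).2 h3)
  have hle : depthQuot (edgeIdealSqPow K G k) + 1 ≤ depthQuot (edgeIdealSqPow K G k) := by
    refine le_csSup ?_ ⟨rs, hl, hm, hreg⟩
    refine ⟨(n - b.card + s : ℤ).toNat, ?_⟩
    rintro d ⟨rs, rfl, h1, h2⟩
    have := upper hb h1 h2
    omega
  omega

lemma hasM_univ {k : ℕ} (h : k ≤ matchingNumber G) : HasM G k Finset.univ := by
  have hmem : matchingNumber G ∈ {k | ∃ M : Finset (Sym2 (Fin n)), IsMatchingSet G M ∧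
      M.card = k} := by
    refine Nat.sSup_mem ⟨0, ∅, ⟨by simp, by simp⟩, rfl⟩ ⟨Fintype.card (Sym2 (Fin n)), ?_⟩
    rintro _ ⟨M, _, rfl⟩
    exact Finset.card_le_univ M
  obtain ⟨M, h1, h2⟩ := hmem
  exact HasM.anti ⟨M, h1, h2, fun _ _ _ _ => Finset.mem_univ _⟩ h

lemma main (hG : G.IsAcyclic) {k : ℕ} (h1 : 1 ≤ k) (h2 : k + 1 ≤ matchingNumber G) :
    gEdge K G (k + 1) ≤ gEdge K G k := by
  have hM := hasM_univ h2
  obtain ⟨j, rfl⟩ : ∃ j, k = j + 1 := ⟨k - 1, by omega⟩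
  have hempty : ¬ HasM G (j + 1) ∅ := by
    rintro ⟨M, _, hc, h3⟩
    obtain ⟨e, he⟩ : M.Nonempty := by rw [← Finset.card_pos]; omega
    induction e with
    | _ x y => simpa using h3 _ he x (by simp)
  obtain ⟨b, -, -, -, hb⟩ := minTop (K := K) hG (Finset.empty_subset _)
    (hM.anti (Nat.le_succ _)) hempty (fun v hv => by simp at hv)
  obtain ⟨c, s, hc, hcs⟩ := exists_bad (K := K) h1 ⟨b, _, hb⟩
  obtain ⟨b', -, -, s', hb', hle⟩ := claimP hG _ _ rfl (j + 1) h1 hM c (Finset.subset_univ _) s hc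
  have := depth_le hb'
  unfold gEdge
  push_cast
  linarith

end final
end SqDepth

/-- For a forest `G`, the normalized depth function
`g_{I(G)}(k) = depth(S/I(G)^{[k]}) - (2k-1)` is non-increasing for `1 ≤ k ≤ ν(G)`. -/
theorem stmt_15 (K : Type*) [Field K] {n : ℕ} (G : SimpleGraph (Fin n))
    (hforest : G.IsAcyclic)
    (k : ℕ) (h1 : 1 ≤ k) (h2 : k + 1 ≤ matchingNumber G) :
    gEdge K G (k + 1) ≤ gEdge K G k := SqDepth.main hforest h1 h2

end
end

section
/- Let G be a connected graph on n vertices and ℓ(G) the number of vertices of a longest induced path of G. Then ν(G) ≥ ⌊ℓ(G)/2⌋ and g_{I(G)}(k) ≤ ⌈(3n-2ℓ(G))/3⌉ - k for 1 ≤ k ≤ ⌈ℓ(G)/3⌉, and g_{I(G)}(k) ≤ n - ℓ(G) for ⌈ℓ(G)/3⌉ < k ≤ ⌊ℓ(G)/2⌋. -/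
open scoped Classical
open MvPolynomial RingTheory

noncomputable section

/-- `p 0, …, p (r-1)` is an induced path in `G`. -/
def IsInducedPath {V : Type*} (G : SimpleGraph V) {r : ℕ} (p : Fin r → V) : Prop :=
  Function.Injective p ∧
    ∀ i j : Fin r, G.Adj (p i) (p j) ↔ ((i : ℕ) + 1 = j ∨ (j : ℕ) + 1 = i)

/-- `ℓ(G)`: the number of vertices of a longest induced path of `G`. -/
def longestInducedPath {V : Type*} [Fintype V] (G : SimpleGraph V) : ℕ :=
  sSup {r | ∃ p : Fin r → V, IsInducedPath G p}


/-! ### Signed creation and annihilation operators -/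

/-- sign of `v` relative to `T` -/
def ksg {n : ℕ} (v : Fin n) (T : Finset (Fin n)) : ℤ := (-1) ^ (T.filter (fun w => w < v)).card

lemma ksg_mul_self {n : ℕ} (v : Fin n) (T : Finset (Fin n)) : ksg v T * ksg v T = 1 := by
  unfold ksg; rw [← mul_pow]; simp

lemma ksg_insert_self {n : ℕ} (v : Fin n) (T : Finset (Fin n)) : ksg v (insert v T) = ksg v T := by
  unfold ksg; simp [Finset.filter_insert]

lemma ksg_erase_self {n : ℕ} (v : Fin n) (T : Finset (Fin n)) : ksg v (T.erase v) = ksg v T := by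
  unfold ksg; congr 2; ext w; simp only [Finset.mem_filter, Finset.mem_erase]
  constructor
  · rintro ⟨⟨_, h⟩, h'⟩; exact ⟨h, h'⟩
  · rintro ⟨h, h'⟩; exact ⟨⟨ne_of_lt h', h⟩, h'⟩

lemma ksg_insert {n : ℕ} (v w : Fin n) (T : Finset (Fin n)) (h : w ∉ T) :
    ksg v (insert w T) = (if w < v then -1 else 1) * ksg v T := by
  unfold ksg
  rw [Finset.filter_insert]
  split_ifs with hlt
  · rw [Finset.card_insert_of_notMem (by simp [h]), pow_succ]; ring
  · simp

lemma ksg_erase {n : ℕ} (v w : Fin n) (T : Finset (Fin n)) (h : w ∈ T) :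
    ksg v (T.erase w) = (if w < v then -1 else 1) * ksg v T := by
  have := ksg_insert v w (T.erase w) (Finset.notMem_erase w T)
  rw [Finset.insert_erase h] at this
  rw [this]; split_ifs <;> ring

section ops
variable {R : Type*} [CommRing R] {n : ℕ} {M : Type*} [AddCommGroup M] [Module R M]

/-- creation operator -/
def kcr (R : Type*) [CommRing R] {n : ℕ} {M : Type*} [AddCommGroup M] [Module R M] (v : Fin n) :
    (Finset (Fin n) → M) →ₗ[R] (Finset (Fin n) → M) where
  toFun f T := if v ∈ T then ksg v T • f (T.erase v) else 0
  map_add' f g := by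
    ext T; simp only [Pi.add_apply]; split_ifs <;> simp
  map_smul' r f := by
    ext T; simp only [Pi.smul_apply, RingHom.id_apply]; split_ifs
    · rw [smul_comm]
    · simp

/-- annihilation operator -/
def kan (R : Type*) [CommRing R] {n : ℕ} {M : Type*} [AddCommGroup M] [Module R M] (v : Fin n) :
    (Finset (Fin n) → M) →ₗ[R] (Finset (Fin n) → M) where
  toFun f T := if v ∈ T then 0 else ksg v T • f (insert v T)
  map_add' f g := by
    ext T; simp only [Pi.add_apply]; split_ifs <;> simp
  map_smul' r f := by
    ext T; simp only [Pi.smul_apply, RingHom.id_apply]; split_ifs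
    · simp
    · rw [smul_comm]

lemma kcr_apply (v : Fin n) (f : Finset (Fin n) → M) (T : Finset (Fin n)) :
    kcr R v f T = if v ∈ T then ksg v T • f (T.erase v) else 0 := rfl

lemma kan_apply (v : Fin n) (f : Finset (Fin n) → M) (T : Finset (Fin n)) :
    kan R v f T = if v ∈ T then 0 else ksg v T • f (insert v T) := rfl

lemma kcr_self (v : Fin n) (f : Finset (Fin n) → M) : kcr R v (kcr R v f) = 0 := by
  ext T; simp [kcr_apply]

lemma kcr_kcr (v w : Fin n) (f : Finset (Fin n) → M) :
    kcr R v (kcr R w f) = - kcr R w (kcr R v f) := by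
  by_cases hvw : v = w
  · subst hvw; simp [kcr_self]
  ext T
  simp only [kcr_apply, Pi.neg_apply, Finset.mem_erase]
  by_cases hv : v ∈ T <;> by_cases hw : w ∈ T <;> simp only [hv, hw, hvw, Ne.symm hvw, if_true,
    if_false, ne_eq, not_false_eq_true, and_true, and_false, smul_zero, neg_zero, true_and]
  rw [ksg_erase w v T hv, ksg_erase v w T hw, Finset.erase_right_comm, smul_smul, smul_smul,
    ← neg_smul]
  congr 1
  rcases lt_or_gt_of_ne hvw with h | h
  · simp [h, not_lt_of_gt h]; ring
  · simp [h, not_lt_of_gt h]; ring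

lemma kcr_kan (v w : Fin n) (f : Finset (Fin n) → M) :
    kcr R v (kan R w f) + kan R w (kcr R v f) = if v = w then f else 0 := by
  ext T
  by_cases hvw : v = w
  · subst hvw
    simp only [kcr_apply, kan_apply, Pi.add_apply, if_true]
    by_cases hv : v ∈ T
    · simp [hv, smul_smul, ksg_erase_self, ksg_mul_self]
    · simp [hv, smul_smul, ksg_insert_self, ksg_mul_self]
  · simp only [kcr_apply, kan_apply, Pi.add_apply, hvw, if_false, Pi.zero_apply, Finset.mem_erase,
      Finset.mem_insert]
    by_cases hv : v ∈ T <;> by_cases hw : w ∈ T <;> simp only [hv, hw, hvw, Ne.symm hvw, if_true,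
      if_false, ne_eq, not_false_eq_true, and_true, and_false, smul_zero, neg_zero, true_and,
      add_zero, or_true, or_false]
    rw [ksg_erase w v T hv, ksg_insert v w T hw, smul_smul, smul_smul,
      Finset.erase_insert_of_ne (Ne.symm hvw), ← add_smul]
    rcases lt_or_gt_of_ne hvw with h | h
    · simp [h, not_lt_of_gt h]; rw [mul_comm (ksg v T), neg_add_cancel, zero_smul]
    · simp [h, not_lt_of_gt h]; rw [mul_comm (ksg v T), add_neg_cancel, zero_smul]

/-- the Koszul differential restricted to the variables in `A` -/
def kX (x : Fin n → R) (A : Finset (Fin n)) {M : Type*} [AddCommGroup M] [Module R M] :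
    (Finset (Fin n) → M) →ₗ[R] (Finset (Fin n) → M) := ∑ v ∈ A, x v • kcr R v

lemma kX_eq (x : Fin n → R) (A : Finset (Fin n)) (f : Finset (Fin n) → M) :
    kX x A f = ∑ v ∈ A, x v • kcr R v f := by
  simp [kX, LinearMap.sum_apply]

lemma kX_apply (x : Fin n → R) (A : Finset (Fin n)) (f : Finset (Fin n) → M) (T) :
    kX x A f T = ∑ v ∈ A, x v • kcr R v f T := by
  simp [kX_eq, Finset.sum_apply]

lemma kX_kcr (x : Fin n → R) (A : Finset (Fin n)) (w : Fin n) (f : Finset (Fin n) → M) :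
    kX x A (kcr R w f) = - kcr R w (kX x A f) := by
  rw [kX_eq, kX_eq, map_sum, ← Finset.sum_neg_distrib]
  refine Finset.sum_congr rfl fun v _ => ?_
  rw [kcr_kcr, map_smul, smul_neg]

lemma kX_kX (x : Fin n → R) (A B : Finset (Fin n)) (f : Finset (Fin n) → M) :
    kX x A (kX x B f) = - kX x B (kX x A f) := by
  rw [kX_eq x B, kX_eq x B, map_sum, ← Finset.sum_neg_distrib]
  refine Finset.sum_congr rfl fun v _ => ?_
  rw [map_smul, kX_kcr, smul_neg]

lemma kX_sq (x : Fin n → R) (A : Finset (Fin n)) (f : Finset (Fin n) → M) :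
    kX x A (kX x A f) = 0 := by
  induction A using Finset.induction_on generalizing f with
  | empty => simp [kX]
  | insert a A ha ih =>
    have key : ∀ g : Finset (Fin n) → M, kX x (insert a A) g = x a • kcr R a g + kX x A g := by
      intro g; rw [kX_eq, kX_eq, Finset.sum_insert ha]
    rw [key, key]
    simp only [map_add, map_smul, kcr_self, kX_kcr, ih, smul_neg, smul_zero]
    simp

lemma kX_kan (x : Fin n → R) (A : Finset (Fin n)) (w : Fin n) (f : Finset (Fin n) → M) :
    kX x A (kan R w f) + kan R w (kX x A f) = if w ∈ A then x w • f else 0 := by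
  rw [kX_eq, kX_eq, map_sum, ← Finset.sum_add_distrib]
  have : ∀ v ∈ A, x v • kcr R v (kan R w f) + kan R w (x v • kcr R v f)
      = if v = w then x v • f else 0 := by
    intro v _
    rw [map_smul, ← smul_add, kcr_kan]; split_ifs <;> simp
  rw [Finset.sum_congr rfl this, Finset.sum_ite_eq' A w]

lemma kX_compl (x : Fin n → R) (A : Finset (Fin n)) (f : Finset (Fin n) → M) :
    kX x Finset.univ f = kX x A f + kX x (Finset.univ \ A) f := by
  rw [kX_eq, kX_eq, kX_eq, add_comm, Finset.sum_sdiff (Finset.subset_univ A)]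

end ops

/-- The depth bound from a nonzero Koszul cohomology class. -/
theorem koszul_bound {R : Type*} [CommRing R] {n : ℕ} (x : Fin n → R) (rs : List R) :
    ∀ (M : Type _) [AddCommGroup M] [Module R M] (d : ℕ) (u : Finset (Fin n) → M),
      (∀ r ∈ rs, r ∈ Ideal.span (Set.range x)) →
      RingTheory.Sequence.IsWeaklyRegular M rs →
      kX x Finset.univ u = 0 → (∀ w, kX x Finset.univ w ≠ u) →
      (∀ T, d < T.card → u T = 0) → rs.length ≤ d := by
  induction rs with
  | nil => intros; simp
  | cons r rs ih =>
    intro M _ _ d u hrs hreg hcoc hcob hdeg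
    rw [RingTheory.Sequence.isWeaklyRegular_cons_iff] at hreg
    obtain ⟨hr, hreg⟩ := hreg
    obtain ⟨a, ha⟩ := (Ideal.mem_span_range_iff_exists_fun).1 (hrs r (by simp))
    set w : Finset (Fin n) → M := ∑ v, a v • kan R v u with hw
    have hXw : kX x Finset.univ w = r • u := by
      rw [hw, map_sum, ← ha, Finset.sum_smul]
      refine Finset.sum_congr rfl fun v _ => ?_
      have := kX_kan x Finset.univ v u
      rw [hcoc, map_zero, add_zero] at this
      rw [map_smul, this]; simp [smul_smul]
    have hmk : ∀ (f : Finset (Fin n) → M) T, kX x Finset.univ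
        (fun T => (Submodule.Quotient.mk (f T) : QuotSMulTop r M)) T
        = Submodule.Quotient.mk (kX x Finset.univ f T) := by
      intro f T
      change _ = Submodule.mkQ _ (kX x Finset.univ f T)
      rw [kX_apply, kX_apply, map_sum]
      refine Finset.sum_congr rfl fun v _ => ?_
      rw [map_smul, kcr_apply, kcr_apply]
      split_ifs
      · rw [map_zsmul]; rfl
      · simp
    have hcob' : ∀ z, kX x Finset.univ z ≠
        (fun T => (Submodule.Quotient.mk (w T) : QuotSMulTop r M)) := by
      intro z hz
      choose z' hz' using fun T => Submodule.Quotient.mk_surjective _ (z T)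
      have hzz : z = fun T => (Submodule.Quotient.mk (z' T) : QuotSMulTop r M) := by
        ext T; rw [hz']
      have h1 : ∀ T, ∃ y, r • y = w T - kX x Finset.univ z' T := by
        intro T
        have h2 := congrFun hz T
        rw [hzz, hmk] at h2
        have h3 := (Submodule.Quotient.eq _).1 h2.symm
        obtain ⟨y, _, hy⟩ := (Submodule.mem_smul_pointwise_iff_exists _ _ _).1 h3
        exact ⟨y, hy⟩
      choose y hy using h1
      have hwy : w = kX x Finset.univ z' + r • y := by
        ext T; simp [hy]
      have h4 : r • u = r • kX x Finset.univ y := by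
        rw [← hXw, hwy, map_add, kX_sq, map_smul, zero_add]
      apply hcob y
      ext T
      exact hr (congrFun h4 T).symm
    have hdeg' : ∀ T, d ≤ T.card → w T = 0 := by
      intro T hT
      rw [hw, Finset.sum_apply]
      refine Finset.sum_eq_zero fun v _ => ?_
      rw [Pi.smul_apply, kan_apply]
      split_ifs with h
      · simp
      · rw [hdeg _ (by rw [Finset.card_insert_of_notMem h]; omega)]; simp
    rcases Nat.eq_zero_or_pos d with hd | hd
    · exfalso
      refine hcob' 0 ?_
      rw [map_zero]
      ext T
      rw [hdeg' T (by omega)]; simp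
    · have := ih (QuotSMulTop r M) (d - 1) (fun T => Submodule.Quotient.mk (w T))
        (fun s hs => hrs s (by simp [hs])) hreg ?_ hcob' ?_
      · simp only [List.length_cons]; omega
      · ext T
        rw [hmk, hXw]
        change _ = (0 : QuotSMulTop r M)
        rw [Submodule.Quotient.mk_eq_zero]
        exact Submodule.smul_mem_pointwise_smul _ _ _ trivial
      · intro T hT
        rw [hdeg' T (by omega)]; simp

/-! ### Stars, and the explicit Koszul class -/

/-- `q` has no components containing `v` -/
def KFree {n : ℕ} {M : Type*} [Zero M] (v : Fin n) (q : Finset (Fin n) → M) : Prop :=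
  ∀ T, v ∈ T → q T = 0

section free
variable {R : Type*} [CommRing R] {n : ℕ} {M : Type*} [AddCommGroup M] [Module R M]

lemma KFree.cr {v w : Fin n} {q : Finset (Fin n) → M} (h : KFree v q) (hvw : v ≠ w) :
    KFree v (kcr R w q) := by
  intro T hT
  rw [kcr_apply]; split_ifs
  · rw [h _ (Finset.mem_erase.2 ⟨hvw, hT⟩), smul_zero]
  · rfl

lemma KFree.an {v w : Fin n} {q : Finset (Fin n) → M} (h : KFree v q) :
    KFree v (kan R w q) := by
  intro T hT
  rw [kan_apply]; split_ifs
  · rfl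
  · rw [h _ (Finset.mem_insert_of_mem hT), smul_zero]

lemma KFree.smul {v : Fin n} {q : Finset (Fin n) → M} (h : KFree v q) (r : R) :
    KFree v (r • q) := by
  intro T hT; rw [Pi.smul_apply, h T hT, smul_zero]

lemma KFree.sub {v : Fin n} {q p : Finset (Fin n) → M} (h : KFree v q) (h' : KFree v p) :
    KFree v (q - p) := by
  intro T hT; rw [Pi.sub_apply, h T hT, h' T hT, sub_zero]

lemma KFree.X {v : Fin n} {q : Finset (Fin n) → M} (h : KFree v q) (x : Fin n → R)
    {A : Finset (Fin n)} (hA : v ∉ A) : KFree v (kX x A q) := by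
  intro T hT
  rw [kX_apply]
  refine Finset.sum_eq_zero fun w hw => ?_
  rw [h.cr (fun e => hA (e ▸ hw)) T hT, smul_zero]

lemma KFree.an_eq {v : Fin n} {q : Finset (Fin n) → M} (h : KFree v q) : kan R v q = 0 := by
  ext T; rw [kan_apply]; split_ifs
  · rfl
  · rw [h _ (Finset.mem_insert_self _ _), smul_zero]; rfl

lemma KFree.an_cr {v : Fin n} {q : Finset (Fin n) → M} (h : KFree v q) :
    kan R v (kcr R v q) = q := by
  have := kcr_kan (R := R) v v q
  rw [h.an_eq, map_zero, zero_add] at this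
  simpa using this

lemma KFree.an_cr_ne {v w : Fin n} {q : Finset (Fin n) → M} (h : KFree v q) (hvw : v ≠ w) :
    kan R v (kcr R w q) = 0 := (h.cr hvw).an_eq

end free

section stars
variable {R : Type*} [CommRing R] {n : ℕ}

abbrev KL (n : ℕ) (R : Type*) := Finset (Fin n) → R

/-- multiply by the centre of the star -/
def kC (x : Fin n → R) (c : ℕ → Fin n) (t : ℕ) (q : KL n R) : KL n R :=
  x (c t) • kcr R (c t) q

/-- multiply by the star element -/
def kD (x : Fin n → R) (c : ℕ → Fin n) (L : ℕ → Finset (Fin n)) (t : ℕ) (q : KL n R) : KL n R :=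
  x (c t) • kX x (L t) (kcr R (c t) q)

/-- the cross-polytope factor -/
def kA (x : Fin n → R) (c l : ℕ → Fin n) (t : ℕ) (q : KL n R) : KL n R :=
  x (l t) • kan R (c t) q - x (c t) • kan R (l t) q

def kCl (x : Fin n → R) (c : ℕ → Fin n) : List ℕ → KL n R → KL n R
  | [], q => q
  | t :: ts, q => kC x c t (kCl x c ts q)

def kDl (x : Fin n → R) (c : ℕ → Fin n) (L : ℕ → Finset (Fin n)) : List ℕ → KL n R → KL n R
  | [], q => q
  | t :: ts, q => kD x c L t (kDl x c L ts q)

def kAl (x : Fin n → R) (c l : ℕ → Fin n) : List ℕ → KL n R → KL n R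
  | [], q => q
  | t :: ts, q => kAl x c l ts (kA x c l t q)

/-- the vertices of a star -/
def kSt (c : ℕ → Fin n) (L : ℕ → Finset (Fin n)) (t : ℕ) : Finset (Fin n) := insert (c t) (L t)

variable (x : Fin n → R) (c l : ℕ → Fin n) (L : ℕ → Finset (Fin n))

lemma kX_kC (A : Finset (Fin n)) (t : ℕ) (q : KL n R) :
    kX x A (kC x c t q) = - kC x c t (kX x A q) := by
  unfold kC; rw [map_smul, kX_kcr, smul_neg]

lemma kX_kD (A : Finset (Fin n)) (t : ℕ) (q : KL n R) :
    kX x A (kD x c L t q) = kD x c L t (kX x A q) := by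
  unfold kD; rw [map_smul, kX_kX, kX_kcr, map_neg, neg_neg]

lemma kX_St_kC (t : ℕ) (hc : c t ∉ L t) (q : KL n R) :
    kX x (kSt c L t) (kC x c t q) = kD x c L t q := by
  unfold kC kD kSt
  rw [map_smul]
  congr 1
  rw [kX_eq, kX_eq, Finset.sum_insert hc, kcr_self, smul_zero, zero_add]

lemma kX_St_kD (t : ℕ) (hc : c t ∉ L t) (q : KL n R) :
    kX x (kSt c L t) (kD x c L t q) = 0 := by
  have h := kX_St_kC x c L t hc q
  unfold kC at h
  rw [map_smul] at h
  unfold kD at h ⊢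
  rw [map_smul, kX_kX, smul_neg, ← map_smul, h, map_smul, kX_sq, smul_zero, neg_zero]

lemma kX_kCl (A : Finset (Fin n)) (ts : List ℕ) (q : KL n R) :
    kX x A (kCl x c ts q) = ((-1 : ℤ) ^ ts.length) • kCl x c ts (kX x A q) := by
  induction ts with
  | nil => simp [kCl]
  | cons t ts ih =>
    simp only [kCl, List.length_cons]
    rw [kX_kC, ih]
    unfold kC
    rw [map_zsmul, pow_succ, smul_comm, mul_neg_one, neg_smul]

lemma kX_kDl (A : Finset (Fin n)) (ts : List ℕ) (q : KL n R) :
    kX x A (kDl x c L ts q) = kDl x c L ts (kX x A q) := by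
  induction ts with
  | nil => simp [kDl]
  | cons t ts ih => simp only [kDl]; rw [kX_kD, ih]

lemma kDl_zero (ts : List ℕ) : kDl x c L ts (0 : KL n R) = 0 := by
  induction ts with
  | nil => rfl
  | cons t ts ih => simp only [kDl]; rw [ih]; simp [kD]

lemma kCl_zero (ts : List ℕ) : kCl x c ts (0 : KL n R) = 0 := by
  induction ts with
  | nil => rfl
  | cons t ts ih => simp only [kCl]; rw [ih]; simp [kC]

lemma kCl_add (ts : List ℕ) (p q : KL n R) : kCl x c ts (p + q) = kCl x c ts p + kCl x c ts q := by
  induction ts with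
  | nil => rfl
  | cons t ts ih => simp only [kCl]; rw [ih]; simp [kC]

lemma kA_add (t : ℕ) (p q : KL n R) : kA x c l t (p + q) = kA x c l t p + kA x c l t q := by
  simp only [kA, map_add, smul_add]; abel

lemma kAl_add (ts : List ℕ) (p q : KL n R) :
    kAl x c l ts (p + q) = kAl x c l ts p + kAl x c l ts q := by
  induction ts generalizing p q with
  | nil => rfl
  | cons t ts ih => simp only [kAl]; rw [kA_add, ih]

lemma kA_smul (t : ℕ) (r : R) (q : KL n R) : kA x c l t (r • q) = r • kA x c l t q := by
  simp only [kA, map_smul, smul_sub, smul_comm r]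

lemma kAl_smul (ts : List ℕ) (r : R) (q : KL n R) : kAl x c l ts (r • q) = r • kAl x c l ts q := by
  induction ts generalizing q with
  | nil => rfl
  | cons t ts ih => simp only [kAl]; rw [kA_smul, ih]

lemma kAl_zsmul (ts : List ℕ) (r : ℤ) (q : KL n R) :
    kAl x c l ts (r • q) = r • kAl x c l ts q := by
  rw [← Int.cast_smul_eq_zsmul R, kAl_smul, Int.cast_smul_eq_zsmul]

lemma kA_kX (A : Finset (Fin n)) (t : ℕ) (hc : c t ∈ A) (hl : l t ∈ A) (q : KL n R) :
    kA x c l t (kX x A q) = - kX x A (kA x c l t q) := by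
  have h1 := kX_kan x A (c t) q
  have h2 := kX_kan x A (l t) q
  rw [if_pos hc] at h1
  rw [if_pos hl] at h2
  unfold kA
  rw [map_sub, map_smul, map_smul, eq_sub_of_add_eq' h1, eq_sub_of_add_eq' h2, smul_sub, smul_sub,
    smul_comm (x (l t)) (x (c t)) q]
  abel

lemma kAl_kX (A : Finset (Fin n)) (ts : List ℕ) (h : ∀ t ∈ ts, c t ∈ A ∧ l t ∈ A) (q : KL n R) :
    kAl x c l ts (kX x A q) = ((-1 : ℤ) ^ ts.length) • kX x A (kAl x c l ts q) := by
  induction ts generalizing q with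
  | nil => simp [kAl]
  | cons t ts ih =>
    simp only [kAl, List.length_cons]
    rw [kA_kX x c l A t (h t (by simp)).1 (h t (by simp)).2, ← neg_one_zsmul, kAl_zsmul,
      ih (fun s hs => h s (by simp [hs])), smul_smul, pow_succ, mul_comm]

lemma kA_kC (t : ℕ) (hcl : l t ≠ c t) (q : KL n R) (h1 : KFree (c t) q) (h2 : KFree (l t) q) :
    kA x c l t (kC x c t q) = (x (c t) * x (l t)) • q := by
  unfold kA kC
  rw [map_smul, map_smul, h1.an_cr, h2.an_cr_ne hcl, smul_zero, smul_zero, sub_zero, smul_smul,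
    mul_comm]

lemma kCl_free (ts : List ℕ) (v : Fin n) (hv : ∀ t ∈ ts, v ≠ c t) (q : KL n R) (h : KFree v q) :
    KFree v (kCl x c ts q) := by
  induction ts with
  | nil => exact h
  | cons t ts ih =>
    exact ((ih (fun s hs => hv s (by simp [hs]))).cr (hv t (by simp))).smul _

lemma kAl_free (ts : List ℕ) (v : Fin n) (q : KL n R) (h : KFree v q) :
    KFree v (kAl x c l ts q) := by
  induction ts generalizing q with
  | nil => exact h
  | cons t ts ih =>
    exact ih _ ((h.an.smul _).sub (h.an.smul _))

lemma kD_free (t : ℕ) (v : Fin n) (hv : v ∉ kSt c L t) (q : KL n R) (h : KFree v q) :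
    KFree v (kD x c L t q) := by
  unfold kSt at hv
  rw [Finset.mem_insert, not_or] at hv
  exact ((h.cr hv.1).X x hv.2).smul _

lemma kDl_free (ts : List ℕ) (v : Fin n) (hv : ∀ t ∈ ts, v ∉ kSt c L t) (q : KL n R)
    (h : KFree v q) : KFree v (kDl x c L ts q) := by
  induction ts with
  | nil => exact h
  | cons t ts ih =>
    exact kD_free x c L t v (hv t (by simp)) _ (ih (fun s hs => hv s (by simp [hs])))

lemma kAl_kCl (ts : List ℕ) (hnd : ts.Nodup)
    (hcl : ∀ t ∈ ts, l t ≠ c t)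
    (hd : ∀ s ∈ ts, ∀ t ∈ ts, s ≠ t → c s ≠ c t ∧ l s ≠ c t) (q : KL n R)
    (h1 : ∀ t ∈ ts, KFree (c t) q) (h2 : ∀ t ∈ ts, KFree (l t) q) :
    kAl x c l ts (kCl x c ts q) = (ts.map (fun t => x (c t) * x (l t))).prod • q := by
  induction ts with
  | nil => simp [kAl, kCl]
  | cons t ts ih =>
    rw [List.nodup_cons] at hnd
    have hne : ∀ s ∈ ts, t ≠ s := fun s hs e => hnd.1 (e ▸ hs)
    simp only [kAl, kCl, List.map_cons, List.prod_cons]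
    rw [kA_kC x c l t (hcl t (by simp)), kAl_smul,
      ih hnd.2 (fun s hs => hcl s (by simp [hs]))
        (fun s hs t ht => hd s (by simp [hs]) t (by simp [ht]))
        (fun s hs => h1 s (by simp [hs])) (fun s hs => h2 s (by simp [hs])), smul_smul]
    · exact kCl_free _ _ _ _ (fun s hs => (hd t (by simp) s (by simp [hs]) (hne s hs)).1) _
        (h1 t (by simp))
    · exact kCl_free _ _ _ _ (fun s hs => (hd t (by simp) s (by simp [hs]) (hne s hs)).2) _
        (h2 t (by simp))

/-- degree bound -/
def KDeg (d : ℕ) (q : KL n R) : Prop := ∀ T, d < T.card → q T = 0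

lemma KDeg.cr {d : ℕ} {q : KL n R} (h : KDeg d q) (v : Fin n) : KDeg (d + 1) (kcr R v q) := by
  intro T hT
  rw [kcr_apply]; split_ifs with hv
  · rw [h _ (by rw [Finset.card_erase_of_mem hv]; omega), smul_zero]
  · rfl

lemma KDeg.smul {d : ℕ} {q : KL n R} (h : KDeg d q) (r : R) : KDeg d (r • q) := by
  intro T hT; rw [Pi.smul_apply, h T hT, smul_zero]

lemma KDeg.X {d : ℕ} {q : KL n R} (h : KDeg d q) (A : Finset (Fin n)) :
    KDeg (d + 1) (kX x A q) := by
  intro T hT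
  rw [kX_apply]
  refine Finset.sum_eq_zero fun w hw => ?_
  rw [h.cr w T hT, smul_zero]

lemma kCl_deg (ts : List ℕ) (d : ℕ) (q : KL n R) (h : KDeg d q) :
    KDeg (d + ts.length) (kCl x c ts q) := by
  induction ts with
  | nil => exact h
  | cons t ts ih => exact (ih.cr _).smul _

lemma kDl_deg (ts : List ℕ) (d : ℕ) (q : KL n R) (h : KDeg d q) :
    KDeg (d + 2 * ts.length) (kDl x c L ts q) := by
  induction ts with
  | nil => exact h
  | cons t ts ih => exact ((ih.cr _).X x _).smul _

/-- coordinates in an ideal -/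
def KIn (I : Ideal R) (q : KL n R) : Prop := ∀ T, q T ∈ I

variable {I : Ideal R}

lemma KIn.cr {q : KL n R} (h : KIn I q) (v : Fin n) : KIn I (kcr R v q) := by
  intro T
  rw [kcr_apply]; split_ifs with hv
  · exact zsmul_mem (h _) _
  · exact zero_mem _

lemma KIn.smul {q : KL n R} (h : KIn I q) (r : R) : KIn I (r • q) :=
  fun T => I.mul_mem_left _ (h T)

lemma KIn.zsmul {q : KL n R} (h : KIn I q) (r : ℤ) : KIn I (r • q) :=
  fun T => zsmul_mem (h T) _

lemma kCl_in (ts : List ℕ) (q : KL n R) (h : KIn I q) : KIn I (kCl x c ts q) := by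
  induction ts with
  | nil => exact h
  | cons t ts ih => exact (ih.cr _).smul _

lemma kD_in {J : Ideal R} (t : ℕ) (q : KL n R) (h : KIn I q)
    (hJ : ∀ m ∈ L t, ∀ f ∈ I, x (c t) * (x m * f) ∈ J) : KIn J (kD x c L t q) := by
  intro T
  unfold kD
  rw [Pi.smul_apply, kX_apply, smul_eq_mul, Finset.mul_sum]
  exact sum_mem fun m hm => hJ m hm _ (((h.cr _).cr _) T)

/-- the cocycle condition for the single star `t` -/
lemma kX_St_kCl_in {J : Ideal R} (as : List ℕ) (t : ℕ) (ht : t ∈ as)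
    (hc : c t ∉ L t) (q : KL n R) (h : KIn I q)
    (hJ : ∀ m ∈ L t, ∀ f ∈ I, x (c t) * (x m * f) ∈ J) :
    KIn J (kX x (kSt c L t) (kCl x c as q)) := by
  induction as with
  | nil => simp at ht
  | cons s as ih =>
    by_cases hs : s = t
    · subst hs
      simp only [kCl]
      rw [kX_St_kC x c L s hc]
      exact kD_in x c L s _ (kCl_in x c as q h) hJ
    · simp only [kCl]
      rw [kX_kC, ← neg_one_zsmul]
      exact (((ih (by simpa [Ne.symm hs] using ht)).cr _).smul _).zsmul _

lemma kX_St_kDl (bs : List ℕ) (t : ℕ) (ht : t ∈ bs) (hc : c t ∉ L t) (q : KL n R) :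
    kX x (kSt c L t) (kDl x c L bs q) = 0 := by
  induction bs with
  | nil => simp at ht
  | cons s bs ih =>
    by_cases hs : s = t
    · subst hs
      exact kX_St_kD x c L s hc _
    · simp only [kDl]
      rw [kX_kD, ih (by simpa [Ne.symm hs] using ht)]
      simp [kD]

lemma kX_U_single (U : Finset (Fin n)) (q : KL n R) (hq : ∀ T, ¬ U ⊆ T → q T = 0) :
    kX x U q = 0 := by
  ext T
  rw [kX_apply]
  refine Finset.sum_eq_zero fun v hv => ?_
  rw [kcr_apply]; split_ifs
  · rw [hq _ (fun h => Finset.notMem_erase v T (h hv))]; simp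
  · simp

end stars

/-- `N` pairwise disjoint stars -/
structure StarSys {n : ℕ} (N : ℕ) (c l : ℕ → Fin n) (L : ℕ → Finset (Fin n)) : Prop where
  hl : ∀ t < N, l t ∈ L t
  hc : ∀ t < N, c t ∉ L t
  hd : ∀ s < N, ∀ t < N, s ≠ t → Disjoint (kSt c L s) (kSt c L t)

/-- marked vertices -/
def kEs {n : ℕ} (c l : ℕ → Fin n) : List ℕ → Finset (Fin n)
  | [] => ∅
  | t :: ts => insert (l t) (insert (c t) (kEs c l ts))

def kml {n : ℕ} (c l : ℕ → Fin n) : List ℕ → (Fin n →₀ ℕ)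
  | [] => 0
  | t :: ts => Finsupp.single (c t) 1 + (Finsupp.single (l t) 1 + kml c l ts)

lemma mem_kEs {n : ℕ} (c l : ℕ → Fin n) (ts : List ℕ) (v : Fin n) :
    v ∈ kEs c l ts ↔ ∃ t ∈ ts, v = c t ∨ v = l t := by
  induction ts with
  | nil => simp [kEs]
  | cons t ts ih => simp [kEs, ih]; rw [or_left_comm, or_assoc]

lemma kml_notMem {n : ℕ} (c l : ℕ → Fin n) (ts : List ℕ) (v : Fin n) (h : v ∉ kEs c l ts) :
    kml c l ts v = 0 := by
  induction ts with
  | nil => simp [kml]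
  | cons t ts ih =>
    simp only [kEs, Finset.mem_insert, not_or] at h
    simp [kml, ih h.2.2, Finsupp.single_apply, Ne.symm h.1, Ne.symm h.2.1]

section sys
variable {n N : ℕ} {c l : ℕ → Fin n} {L : ℕ → Finset (Fin n)}

lemma StarSys.c_mem (t : ℕ) : c t ∈ kSt c L t := by simp [kSt]

lemma StarSys.l_mem (h : StarSys N c l L) {t : ℕ} (ht : t < N) : l t ∈ kSt c L t := by
  simp [kSt, h.hl t ht]

lemma StarSys.eq_of_mem (h : StarSys N c l L) {s t : ℕ} (hs : s < N) (ht : t < N) {v : Fin n}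
    (h1 : v ∈ kSt c L s) (h2 : v ∈ kSt c L t) : s = t := by
  by_contra hne
  exact Finset.disjoint_left.1 (h.hd s hs t ht hne) h1 h2

lemma StarSys.lc (h : StarSys N c l L) {t : ℕ} (ht : t < N) : l t ≠ c t := by
  intro e; exact h.hc t ht (e ▸ h.hl t ht)

lemma StarSys.notMem_Es (h : StarSys N c l L) {t : ℕ} (ht : t < N) (ts : List ℕ)
    (hts : ∀ s ∈ ts, s < N) (hn : t ∉ ts) {v : Fin n} (hv : v ∈ kSt c L t) : v ∉ kEs c l ts := by
  rw [mem_kEs]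
  rintro ⟨s, hs, rfl | rfl⟩
  · exact hn ((h.eq_of_mem ht (hts s hs) hv (StarSys.c_mem s)) ▸ hs)
  · exact hn ((h.eq_of_mem ht (hts s hs) hv (h.l_mem (hts s hs))) ▸ hs)

lemma StarSys.kml_le (h : StarSys N c l L) (ts : List ℕ) (hts : ∀ s ∈ ts, s < N) (hnd : ts.Nodup)
    (v : Fin n) : kml c l ts v ≤ 1 := by
  induction ts with
  | nil => simp [kml]
  | cons t ts ih =>
    rw [List.nodup_cons] at hnd
    have ht := hts t (by simp)
    have ih' := ih (fun s hs => hts s (by simp [hs])) hnd.2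
    by_cases hv : v ∈ kSt c L t
    · have := kml_notMem c l ts v (h.notMem_Es ht ts (fun s hs => hts s (by simp [hs])) hnd.1 hv)
      simp only [kml, Finsupp.add_apply, this, Finsupp.single_apply]
      have := h.lc ht
      split_ifs with h1 h2 h2 <;> simp_all
    · have h1 : c t ≠ v := fun e => hv (e ▸ StarSys.c_mem t)
      have h2 : l t ≠ v := fun e => hv (e ▸ h.l_mem ht)
      simp [kml, Finsupp.single_apply, h1, h2, ih']

variable {K : Type*} [Field K]

lemma kml_prod (c l : ℕ → Fin n) (ts : List ℕ) :
    (ts.map (fun t => (X (c t) * X (l t) : MvPolynomial (Fin n) K))).prod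
      = monomial (kml c l ts) 1 := by
  induction ts with
  | nil => simp [kml]
  | cons t ts ih =>
    rw [List.map_cons, List.prod_cons, ih]
    simp only [kml, X, monomial_mul, mul_one, add_assoc]

lemma ksg_coeff_ne (v : Fin n) (T : Finset (Fin n)) (e : Fin n →₀ ℕ) (p : MvPolynomial (Fin n) K)
    (h : coeff e p ≠ 0) : coeff e (ksg v T • p) ≠ 0 := by
  unfold ksg
  rcases neg_one_pow_eq_or ℤ (T.filter (fun w => w < v)).card with h' | h' <;> rw [h'] <;> simpa

lemma ksg_coeff_zero (v : Fin n) (T : Finset (Fin n)) (e : Fin n →₀ ℕ) (p : MvPolynomial (Fin n) K)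
    (h : coeff e p = 0) : coeff e (ksg v T • p) = 0 := by
  unfold ksg
  rcases neg_one_pow_eq_or ℤ (T.filter (fun w => w < v)).card with h' | h' <;> rw [h'] <;> simpa

lemma StarSys.Dcoef (h : StarSys N c l L) (U : Finset (Fin n))
    (hU : ∀ t < N, Disjoint (kSt c L t) U) (ts : List ℕ) (hts : ∀ s ∈ ts, s < N)
    (hnd : ts.Nodup) (q : KL n (MvPolynomial (Fin n) K)) (hq : q U = 1) :
    coeff (kml c l ts) (kDl X c L ts q (U ∪ kEs c l ts)) ≠ 0 := by
  induction ts with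
  | nil => simp [kml, kDl, kEs, hq]
  | cons t ts ih =>
    rw [List.nodup_cons] at hnd
    have ht := hts t (by simp)
    have hts' : ∀ s ∈ ts, s < N := fun s hs => hts s (by simp [hs])
    have ih' := ih hts' hnd.2
    have hnot : ∀ v ∈ kSt c L t, v ∉ U ∪ kEs c l ts := by
      intro v hv
      rw [Finset.mem_union, not_or]
      exact ⟨Finset.disjoint_left.1 (hU t ht) hv, h.notMem_Es ht ts hts' hnd.1 hv⟩
    have hT : U ∪ kEs c l (t :: ts) = insert (l t) (insert (c t) (U ∪ kEs c l ts)) := by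
      ext v; simp only [kEs, Finset.mem_union, Finset.mem_insert]; tauto
    simp only [kDl]
    rw [hT]
    unfold kD
    rw [Pi.smul_apply, kX_apply, smul_eq_mul, Finset.sum_eq_single (l t)]
    · simp only [kml]
      rw [coeff_X_mul, smul_eq_mul, coeff_X_mul, kcr_apply, if_pos (by simp)]
      apply ksg_coeff_ne
      rw [Finset.erase_insert, kcr_apply, if_pos (by simp)]
      · apply ksg_coeff_ne
        rw [Finset.erase_insert (hnot _ (StarSys.c_mem t))]
        exact ih'
      · rw [Finset.mem_insert, not_or]
        exact ⟨h.lc ht, hnot _ (h.l_mem ht)⟩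
    · intro v hv hvl
      rw [kcr_apply, if_neg, smul_zero]
      simp only [Finset.mem_insert, not_or]
      exact ⟨hvl, fun e => h.hc t ht (e ▸ hv), hnot v (by simp [kSt, hv])⟩
    · intro h'; exact absurd (h.hl t ht) h'

/-- `F` picks exactly one of `c t`, `l t` for each `t` -/
def kChoice (c l : ℕ → Fin n) (ts : List ℕ) (F : Finset (Fin n)) : Prop :=
  F ⊆ kEs c l ts ∧ ∀ t ∈ ts, ¬ (c t ∈ F ∧ l t ∈ F)

lemma StarSys.Acoef (h : StarSys N c l L) (ts : List ℕ) (hts : ∀ s ∈ ts, s < N)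
    (hnd : ts.Nodup) (g : KL n (MvPolynomial (Fin n) K)) (T : Finset (Fin n)) (e : Fin n →₀ ℕ)
    (H : ∀ F, kChoice c l ts F →
      coeff (e + ∑ v ∈ F, Finsupp.single v 1) (g (T ∪ F)) = 0) :
    coeff (e + kml c l ts) (kAl X c l ts g T) = 0 := by
  induction ts generalizing g e with
  | nil =>
    simpa [kml, kAl] using H ∅ ⟨by simp, by simp⟩
  | cons t ts ih =>
    rw [List.nodup_cons] at hnd
    have ht := hts t (by simp)
    have hts' : ∀ s ∈ ts, s < N := fun s hs => hts s (by simp [hs])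
    simp only [kAl]
    have hrw : e + kml c l (t :: ts)
        = (e + Finsupp.single (c t) 1 + Finsupp.single (l t) 1) + kml c l ts := by
      simp only [kml, add_assoc]
    rw [hrw]
    apply ih hts' hnd.2
    intro F hF
    have hFn : ∀ v ∈ kSt c L t, v ∉ F := fun v hv hvF => h.notMem_Es ht ts hts' hnd.1 hv (hF.1 hvF)
    have hch : ∀ v, (v = c t ∨ v = l t) → kChoice c l (t :: ts) (insert v F) := by
      intro v hv
      have hvSt : v ∈ kSt c L t := by
        rcases hv with rfl | rfl
        · exact StarSys.c_mem t
        · exact h.l_mem ht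
      constructor
      · intro w hw
        rw [Finset.mem_insert] at hw
        simp only [kEs, Finset.mem_insert]
        rcases hw with rfl | hw
        · tauto
        · exact Or.inr (Or.inr (hF.1 hw))
      · intro s hs ⟨h1, h2⟩
        rw [Finset.mem_insert] at h1 h2
        rcases List.mem_cons.1 hs with rfl | hs
        · have a1 := hFn _ (StarSys.c_mem (L := L) s)
          have a2 := hFn _ (h.l_mem ht)
          have h1' := h1.resolve_right a1
          have h2' := h2.resolve_right a2
          exact h.lc ht (h2'.trans h1'.symm)
        · have hne : s ≠ t := fun e => hnd.1 (e ▸ hs)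
          have b1 : c s ≠ v := fun e =>
            hne (h.eq_of_mem (hts' s hs) ht (StarSys.c_mem s) (e ▸ hvSt))
          have b2 : l s ≠ v := fun e =>
            hne (h.eq_of_mem (hts' s hs) ht (h.l_mem (hts' s hs)) (e ▸ hvSt))
          exact hF.2 s hs ⟨h1.resolve_left b1, h2.resolve_left b2⟩
    unfold kA
    rw [Pi.sub_apply, Pi.smul_apply, Pi.smul_apply, coeff_sub, smul_eq_mul, smul_eq_mul]
    have e1 : e + Finsupp.single (c t) 1 + Finsupp.single (l t) 1 + ∑ v ∈ F, Finsupp.single v 1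
        = Finsupp.single (l t) 1 + (e + ∑ v ∈ insert (c t) F, Finsupp.single v 1) := by
      rw [Finset.sum_insert (hFn _ (StarSys.c_mem t))]; abel
    have e2 : e + Finsupp.single (c t) 1 + Finsupp.single (l t) 1 + ∑ v ∈ F, Finsupp.single v 1
        = Finsupp.single (c t) 1 + (e + ∑ v ∈ insert (l t) F, Finsupp.single v 1) := by
      rw [Finset.sum_insert (hFn _ (h.l_mem ht))]; abel
    have z1 : coeff (e + Finsupp.single (c t) 1 + Finsupp.single (l t) 1
        + ∑ v ∈ F, Finsupp.single v 1) (X (l t) * kan (MvPolynomial (Fin n) K) (c t) g (T ∪ F)) = 0 := by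
      rw [e1, coeff_X_mul, kan_apply]
      split_ifs
      · simp
      · apply ksg_coeff_zero
        rw [← Finset.union_insert]
        exact H _ (hch _ (Or.inl rfl))
    have z2 : coeff (e + Finsupp.single (c t) 1 + Finsupp.single (l t) 1
        + ∑ v ∈ F, Finsupp.single v 1) (X (c t) * kan (MvPolynomial (Fin n) K) (l t) g (T ∪ F)) = 0 := by
      rw [e2, coeff_X_mul, kan_apply]
      split_ifs
      · simp
      · apply ksg_coeff_zero
        rw [← Finset.union_insert]
        exact H _ (hch _ (Or.inr rfl))
    rw [z1, z2, sub_zero]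

end sys

/-- the vertex set of a set of edges -/
def kVM {n : ℕ} (M : Finset (Sym2 (Fin n))) : Finset (Fin n) :=
  Finset.univ.filter (fun v => ∃ e ∈ M, v ∈ e)

lemma coeff_sqPow {K : Type*} [Field K] {n : ℕ} (G : SimpleGraph (Fin n)) (k : ℕ)
    (p : MvPolynomial (Fin n) K) (hp : p ∈ edgeIdealSqPow K G k) (e : Fin n →₀ ℕ)
    (he : coeff e p ≠ 0) :
    ∃ M : Finset (Sym2 (Fin n)), IsMatchingSet G M ∧ M.card = k ∧ kVM M ⊆ e.support := by
  have hset : {f : MvPolynomial (Fin n) K | ∃ M : Finset (Sym2 (Fin n)), IsMatchingSet G M ∧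
      M.card = k ∧ f = ∏ v ∈ Finset.univ.filter (fun v => ∃ e ∈ M, v ∈ e), X v}
      = (fun s => monomial s (1 : K)) '' {s | ∃ M : Finset (Sym2 (Fin n)), IsMatchingSet G M ∧
      M.card = k ∧ s = ∑ v ∈ kVM M, Finsupp.single v 1} := by
    ext f
    constructor
    · rintro ⟨M, h1, h2, rfl⟩
      refine ⟨_, ⟨M, h1, h2, rfl⟩, ?_⟩
      simp only [X, monomial_sum_one, kVM]
    · rintro ⟨_, ⟨M, h1, h2, rfl⟩, rfl⟩
      refine ⟨M, h1, h2, ?_⟩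
      simp only [X, monomial_sum_one, kVM]
  unfold edgeIdealSqPow at hp
  rw [hset, mem_ideal_span_monomial_image] at hp
  obtain ⟨s, ⟨M, h1, h2, rfl⟩, hs⟩ := hp e (mem_support_iff.2 he)
  refine ⟨M, h1, h2, fun v hv => ?_⟩
  have := hs v
  rw [Finsupp.finsetSum_apply] at this
  have h3 : (1 : ℕ) ≤ ∑ w ∈ kVM M, (Finsupp.single w 1 : Fin n →₀ ℕ) v := by
    refine le_trans ?_ (Finset.single_le_sum (fun _ _ => Nat.zero_le _) hv)
    simp
  rw [Finsupp.mem_support_iff]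
  omega

/-- ideal generated by matchings using only the stars in the list -/
def kJ (K : Type*) [Field K] {n : ℕ} (G : SimpleGraph (Fin n)) (c : ℕ → Fin n)
    (L : ℕ → Finset (Fin n)) (ts : List ℕ) : Ideal (MvPolynomial (Fin n) K) :=
  Ideal.span {f | ∃ M : Finset (Sym2 (Fin n)), IsMatchingSet G M ∧ M.card = ts.length ∧
    (∀ v ∈ kVM M, ∃ t ∈ ts, v ∈ kSt c L t) ∧ f = ∏ v ∈ kVM M, X v}

lemma kJ_le {K : Type*} [Field K] {n : ℕ} (G : SimpleGraph (Fin n)) (c : ℕ → Fin n)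
    (L : ℕ → Finset (Fin n)) (ts : List ℕ) : kJ K G c L ts ≤ edgeIdealSqPow K G ts.length := by
  apply Ideal.span_mono
  rintro f ⟨M, h1, h2, _, rfl⟩
  exact ⟨M, h1, h2, rfl⟩

lemma kJ_nil {K : Type*} [Field K] {n : ℕ} (G : SimpleGraph (Fin n)) (c : ℕ → Fin n)
    (L : ℕ → Finset (Fin n)) : kJ K G c L [] = ⊤ := by
  rw [Ideal.eq_top_iff_one]
  apply Ideal.subset_span
  exact ⟨∅, ⟨by simp, by simp⟩, by simp, by simp [kVM], by simp [kVM]⟩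

lemma kJ_cons {K : Type*} [Field K] {n N : ℕ} (G : SimpleGraph (Fin n)) {c l : ℕ → Fin n}
    {L : ℕ → Finset (Fin n)} (h : StarSys N c l L) (hadj : ∀ t < N, ∀ m ∈ L t, G.Adj (c t) m)
    (t : ℕ) (ts : List ℕ) (hts : ∀ s ∈ ts, s < N) (ht : t < N) (hn : t ∉ ts)
    (m : Fin n) (hm : m ∈ L t) (f : MvPolynomial (Fin n) K) (hf : f ∈ kJ K G c L ts) :
    X (c t) * (X m * f) ∈ kJ K G c L (t :: ts) := by
  unfold kJ at hf
  induction hf using Submodule.span_induction with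
  | zero => simp
  | add p q _ _ hp hq => rw [mul_add, mul_add]; exact add_mem hp hq
  | smul a p _ hp =>
    have : X (c t) * (X m * a • p) = a * (X (c t) * (X m * p)) := by
      rw [smul_eq_mul]; ring
    rw [this]; exact Ideal.mul_mem_left _ _ hp
  | mem f hf =>
    obtain ⟨M, ⟨h1, h1'⟩, h2, h3, rfl⟩ := hf
    have hmSt : m ∈ kSt c L t := by simp [kSt, hm]
    have hnV : ∀ v ∈ kSt c L t, v ∉ kVM M := by
      intro v hv hvM
      obtain ⟨s, hs, hvs⟩ := h3 v hvM
      exact hn ((h.eq_of_mem ht (hts s hs) hv hvs) ▸ hs)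
    have hnV' : ∀ v ∈ kSt c L t, ∀ e ∈ M, v ∉ e := by
      intro v hv e he hve
      exact hnV v hv (by simp only [kVM, Finset.mem_filter, Finset.mem_univ, true_and]; exact ⟨e, he, hve⟩)
    have hcm : c t ≠ m := (hadj t ht m hm).ne
    have hVM : kVM (insert s(c t, m) M) = insert (c t) (insert m (kVM M)) := by
      ext v
      simp only [kVM, Finset.mem_filter, Finset.mem_univ, true_and, Finset.mem_insert,
        exists_eq_or_imp, Sym2.mem_iff, or_assoc]
    apply Ideal.subset_span
    refine ⟨insert s(c t, m) M, ⟨?_, ?_⟩, ?_, ?_, ?_⟩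
    · intro e he
      rcases Finset.mem_insert.1 he with rfl | he
      · exact hadj t ht m hm
      · exact h1 e he
    · intro e he f hf hef v hve
      rcases Finset.mem_insert.1 he with rfl | he2 <;>
        rcases Finset.mem_insert.1 hf with rfl | hf2
      · exact absurd rfl hef
      · rcases Sym2.mem_iff.1 hve with rfl | rfl
        · exact hnV' _ (StarSys.c_mem t) f hf2
        · exact hnV' _ hmSt f hf2
      · intro hvf
        rcases Sym2.mem_iff.1 hvf with rfl | rfl
        · exact hnV' _ (StarSys.c_mem t) e he2 hve
        · exact hnV' _ hmSt e he2 hve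
      · exact h1' e he2 f hf2 hef v hve
    · rw [Finset.card_insert_of_notMem, h2, List.length_cons]
      intro hM
      exact hnV' _ (StarSys.c_mem t) _ hM (Sym2.mem_mk_left _ _)
    · intro v hv
      rw [hVM, Finset.mem_insert, Finset.mem_insert] at hv
      rcases hv with rfl | rfl | hv
      · exact ⟨t, by simp, StarSys.c_mem t⟩
      · exact ⟨t, by simp, hmSt⟩
      · obtain ⟨s, hs, hvs⟩ := h3 v hv
        exact ⟨s, by simp [hs], hvs⟩
    · rw [hVM, Finset.prod_insert, Finset.prod_insert (hnV m hmSt)]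
      rw [Finset.mem_insert, not_or]
      exact ⟨hcm, hnV _ (StarSys.c_mem t)⟩

lemma kDl_in {K : Type*} [Field K] {n N : ℕ} (G : SimpleGraph (Fin n)) {c l : ℕ → Fin n}
    {L : ℕ → Finset (Fin n)} (h : StarSys N c l L) (hadj : ∀ t < N, ∀ m ∈ L t, G.Adj (c t) m)
    (ts : List ℕ) (hts : ∀ s ∈ ts, s < N) (hnd : ts.Nodup)
    (q : KL n (MvPolynomial (Fin n) K)) : KIn (kJ K G c L ts) (kDl X c L ts q) := by
  induction ts with
  | nil => intro T; rw [kJ_nil]; trivial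
  | cons t ts ih =>
    rw [List.nodup_cons] at hnd
    have hts' : ∀ s ∈ ts, s < N := fun s hs => hts s (by simp [hs])
    exact kD_in X c L t _ (ih hts' hnd.2)
      (fun m hm f hf => kJ_cons G h hadj t ts hts' (hts t (by simp)) hnd.1 m hm f hf)

lemma depth_le_of_class {K : Type*} [Field K] {n : ℕ} (I : Ideal (MvPolynomial (Fin n) K))
    (u : KL n (MvPolynomial (Fin n) K)) (d : ℕ) (h1 : KIn I (kX (R := MvPolynomial (Fin n) K) X Finset.univ u))
    (h2 : ∀ w j, KIn I j → u ≠ kX (R := MvPolynomial (Fin n) K) X Finset.univ w + j) (h3 : KDeg d u) : depthQuot I ≤ d := by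
  apply csSup_le'
  rintro _ ⟨rs, rfl, hrs, hreg⟩
  have hmk : ∀ (f : KL n (MvPolynomial (Fin n) K)) T, kX (R := MvPolynomial (Fin n) K) X Finset.univ
      (fun T => (Submodule.Quotient.mk (f T) : MvPolynomial (Fin n) K ⧸ I)) T
      = Submodule.Quotient.mk (kX (R := MvPolynomial (Fin n) K) X Finset.univ f T) := by
    intro f T
    change _ = Submodule.mkQ _ (kX (R := MvPolynomial (Fin n) K) X Finset.univ f T)
    rw [kX_apply, kX_apply, map_sum]
    refine Finset.sum_congr rfl fun v _ => ?_
    rw [map_smul, kcr_apply, kcr_apply]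
    split_ifs
    · rw [map_zsmul]; rfl
    · simp
  refine koszul_bound (X : Fin n → MvPolynomial (Fin n) K) rs (MvPolynomial (Fin n) K ⧸ I) d
    (fun T => Submodule.Quotient.mk (u T)) hrs hreg.toIsWeaklyRegular ?_ ?_ ?_
  · ext T
    rw [hmk]
    exact (Submodule.Quotient.mk_eq_zero _).2 (h1 T)
  · intro z hz
    choose z' hz' using fun T => Submodule.Quotient.mk_surjective _ (z T)
    have hzz : z = fun T => (Submodule.Quotient.mk (z' T) : MvPolynomial (Fin n) K ⧸ I) := by
      ext T; rw [hz']
    refine h2 z' (u - kX (R := MvPolynomial (Fin n) K) X Finset.univ z') ?_ (by abel)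
    intro T
    have h4 := congrFun hz T
    rw [hzz, hmk] at h4
    exact (Submodule.Quotient.eq _).1 h4.symm
  · intro T hT
    rw [h3 T hT]; rfl

theorem depth_core {K : Type*} [Field K] {n N : ℕ} (G : SimpleGraph (Fin n)) {c l : ℕ → Fin n}
    {L : ℕ → Finset (Fin n)} (h : StarSys N c l L) (hadj : ∀ t < N, ∀ m ∈ L t, G.Adj (c t) m)
    (as bs : List ℕ) (i : ℕ) (has : ∀ t ∈ as, t < N) (hbs : ∀ t ∈ i :: bs, t < N)
    (hnda : as.Nodup) (hndb : (i :: bs).Nodup) (hab : ∀ t ∈ as, t ∉ i :: bs)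
    (hcov : ∀ t < N, t ∈ as ∨ t ∈ i :: bs)
    (hface : ∀ F, kChoice c l as F → ∀ v ∈ kEs c l (i :: bs), ∀ M, IsMatchingSet G M →
      M.card = (i :: bs).length → kVM M ⊆ (F ∪ kEs c l (i :: bs)).erase v → False)
    (U : Finset (Fin n)) (hU : U = Finset.univ \ (Finset.range N).biUnion (kSt c L)) :
    depthQuot (edgeIdealSqPow K G (i :: bs).length) ≤ U.card + 2 * bs.length + 1 + as.length := by
  have hUd : ∀ t < N, Disjoint (kSt c L t) U := by
    intro t ht
    rw [hU, Finset.disjoint_left]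
    intro v hv hv'
    rw [Finset.mem_sdiff] at hv'
    exact hv'.2 (Finset.mem_biUnion.2 ⟨t, Finset.mem_range.2 ht, hv⟩)
  have hi : i < N := hbs i (by simp)
  have hbs' : ∀ t ∈ bs, t < N := fun t ht => hbs t (by simp [ht])
  have hndb' := List.nodup_cons.1 hndb
  set q : KL n (MvPolynomial (Fin n) K) := Pi.single U 1 with hq
  have hqU : q U = 1 := by simp [hq]
  have hqfree : ∀ t < N, ∀ v ∈ kSt c L t, KFree v q := by
    intro t ht v hv T hT
    rw [hq, Pi.single_apply, if_neg]
    rintro rfl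
    exact Finset.disjoint_left.1 (hUd t ht) hv hT
  set y := kC X c i (kDl X c L bs q) with hy
  set u := kCl X c as y with hu
  set E := kEs c l (i :: bs) with hE
  -- freeness
  have hlE : l i ∈ E := by simp [hE, kEs]
  have hdisj : ∀ s < N, ∀ t < N, s ≠ t → ∀ v ∈ kSt c L s, v ∉ kSt c L t :=
    fun s hs t ht hne v hv => Finset.disjoint_left.1 (h.hd s hs t ht hne) hv
  have hyfree : KFree (l i) y := by
    refine KFree.smul (KFree.cr (kDl_free _ _ _ _ _ ?_ _ (hqfree i hi _ (h.l_mem hi))) (h.lc hi)) _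
    intro t ht
    exact hdisj i hi t (hbs' t ht) (fun e => hndb'.1 (e ▸ ht)) _ (h.l_mem hi)
  -- the functional
  set m := kml c l (i :: bs) + kml c l as with hm
  set Phi : KL n (MvPolynomial (Fin n) K) → K := fun f =>
    coeff m (kAl X c l as (kX (R := MvPolynomial (Fin n) K) X Finset.univ f) (U ∪ E)) with hPhi
  have hasE : ∀ t ∈ as, c t ∉ E ∧ l t ∉ E := fun t ht =>
    ⟨h.notMem_Es (has t ht) _ hbs (hab t ht) (StarSys.c_mem t),
      h.notMem_Es (has t ht) _ hbs (hab t ht) (h.l_mem (has t ht))⟩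
  have hmem_of_Es : ∀ ts : List ℕ, (∀ t ∈ ts, t < N) → ∀ v ∈ kEs c l ts, v ∉ U := by
    intro ts hts v hv
    rw [mem_kEs] at hv
    obtain ⟨t, ht, rfl | rfl⟩ := hv
    · exact Finset.disjoint_left.1 (hUd t (hts t ht)) (StarSys.c_mem t)
    · exact Finset.disjoint_left.1 (hUd t (hts t ht)) (h.l_mem (hts t ht))
  -- P3
  have P3 : ∀ j, KIn (edgeIdealSqPow K G (i :: bs).length) j → Phi j = 0 := by
    intro j hj
    simp only [hPhi]
    rw [kX_compl X E, kAl_add, Pi.add_apply, coeff_add]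
    have z1 : coeff m (kAl X c l as (kX (R := MvPolynomial (Fin n) K) X E j) (U ∪ E)) = 0 := by
      rw [hm]
      apply h.Acoef as has hnda
      intro F hF
      rw [kX_apply, coeff_sum]
      refine Finset.sum_eq_zero fun v hv => ?_
      have hFv : v ∉ F := by
        intro hvF
        have := hF.1 hvF
        rw [mem_kEs] at this
        obtain ⟨t, ht, rfl | rfl⟩ := this
        · exact (hasE t ht).1 hv
        · exact (hasE t ht).2 hv
      rw [smul_eq_mul, coeff_X_mul']
      split_ifs with hvs
      swap
      · rfl
      rw [kcr_apply]
      split_ifs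
      swap
      · simp
      apply ksg_coeff_zero
      by_contra hne
      obtain ⟨M, hM1, hM2, hM3⟩ := coeff_sqPow G _ _ (hj _) _ hne
      refine hface F hF v hv M hM1 hM2 (hM3.trans ?_)
      intro w hw
      rw [Finsupp.mem_support_iff, Finsupp.tsub_apply, Finsupp.add_apply,
        Finsupp.finsetSum_apply] at hw
      have hsum : ∀ w, w ∉ F → ∑ a ∈ F, (Finsupp.single a 1 : Fin n →₀ ℕ) w = 0 := by
        intro w hw
        refine Finset.sum_eq_zero fun a ha => ?_
        rw [Finsupp.single_apply, if_neg]
        rintro rfl; exact hw ha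
      rw [Finset.mem_erase]
      constructor
      · rintro rfl
        rw [hsum _ hFv] at hw
        have := h.kml_le (i :: bs) hbs hndb w
        simp at hw
        omega
      · by_contra hwn
        rw [Finset.mem_union, not_or] at hwn
        rw [hsum _ hwn.1, kml_notMem c l _ w hwn.2] at hw
        simp at hw
    have z2 : coeff m (kAl X c l as (kX (R := MvPolynomial (Fin n) K) X (Finset.univ \ E) j) (U ∪ E)) = 0 := by
      rw [kAl_kX (R := MvPolynomial (Fin n) K) X c l (Finset.univ \ E) as (fun t ht => by simpa using hasE t ht)]
      rw [Pi.smul_apply]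
      have : coeff m (kX (R := MvPolynomial (Fin n) K) X (Finset.univ \ E) (kAl X c l as j) (U ∪ E)) = 0 := by
        rw [kX_apply, coeff_sum]
        refine Finset.sum_eq_zero fun v hv => ?_
        rw [kcr_apply]
        split_ifs with hvT
        swap
        · simp
        have hvU : v ∈ U := by
          rw [Finset.mem_sdiff] at hv
          exact (Finset.mem_union.1 hvT).resolve_right hv.2
        rw [smul_eq_mul, coeff_X_mul', if_neg]
        rw [Finsupp.mem_support_iff, not_not, hm, Finsupp.add_apply,
          kml_notMem c l _ v (fun hv' => hmem_of_Es _ hbs v hv' hvU),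
          kml_notMem c l _ v (fun hv' => hmem_of_Es _ has v hv' hvU), add_zero]
      rcases neg_one_pow_eq_or ℤ as.length with h' | h' <;> rw [h'] <;> simpa
    rw [z1, z2, add_zero]
  -- P4
  have P4 : Phi u ≠ 0 := by
    simp only [hPhi]
    rw [hu, kX_kCl, kAl_zsmul, Pi.smul_apply]
    have hXy : kX (R := MvPolynomial (Fin n) K) X Finset.univ y
        = kDl X c L (i :: bs) q + kX (R := MvPolynomial (Fin n) K) X (Finset.univ \ kSt c L i) y := by
      rw [kX_compl X (kSt c L i), hy, kX_St_kC X c L i (h.hc i hi)]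
      rfl
    have hz : KFree (l i) (kAl X c l as (kCl X c as (kX (R := MvPolynomial (Fin n) K) X (Finset.univ \ kSt c L i) y))) := by
      apply kAl_free
      apply kCl_free
      · intro t ht e
        exact (hasE t ht).1 (e ▸ hlE)
      · exact hyfree.X X (by simp [h.l_mem hi])
    have hfr : ∀ t ∈ as, ∀ v ∈ kSt c L t, KFree v (kDl X c L (i :: bs) q) := by
      intro t ht v hv
      apply kDl_free
      · intro s hs
        exact hdisj t (has t ht) s (hbs s hs) (fun e => hab t ht (e ▸ hs)) v hv
      · exact hqfree t (has t ht) v hv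
    have hcalc : coeff m (kAl X c l as (kCl X c as (kX (R := MvPolynomial (Fin n) K) X Finset.univ y)) (U ∪ E)) ≠ 0 := by
      rw [hXy, kCl_add, kAl_add, Pi.add_apply, hz _ (Finset.mem_union_right _ hlE), add_zero,
        kAl_kCl X c l as hnda (fun t ht => h.lc (has t ht)) ?_ _
          (fun t ht => hfr t ht _ (StarSys.c_mem t))
          (fun t ht => hfr t ht _ (h.l_mem (has t ht))), Pi.smul_apply, kml_prod, smul_eq_mul,
        hm, add_comm (kml c l (i :: bs)), coeff_monomial_mul, one_mul]
      · exact h.Dcoef U hUd (i :: bs) hbs hndb q hqU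
      · intro s hs t ht hst
        constructor
        · intro e
          exact hst (h.eq_of_mem (has s hs) (has t ht) (StarSys.c_mem s) (e ▸ StarSys.c_mem t))
        · intro e
          exact hst (h.eq_of_mem (has s hs) (has t ht) (h.l_mem (has s hs))
            (e ▸ StarSys.c_mem t))
    rcases neg_one_pow_eq_or ℤ as.length with h' | h' <;> rw [h'] <;> simpa using hcalc
  refine depth_le_of_class _ u _ ?_ ?_ ?_
  · -- cocycle
    have hXs : kX (R := MvPolynomial (Fin n) K) X Finset.univ u = (∑ t ∈ Finset.range N, kX (R := MvPolynomial (Fin n) K) X (kSt c L t) u) + kX (R := MvPolynomial (Fin n) K) X U u := by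
      rw [kX_compl X ((Finset.range N).biUnion (kSt c L)), ← hU]
      congr 1
      rw [kX_eq, Finset.sum_biUnion]
      · exact Finset.sum_congr rfl fun t _ => (kX_eq _ _ _).symm
      · intro s hs t ht hst
        exact h.hd s (by simpa using hs) t (by simpa using ht) hst
    have hU0 : kX (R := MvPolynomial (Fin n) K) X U u = 0 := by
      have : kX (R := MvPolynomial (Fin n) K) X U q = 0 := by
        apply kX_U_single
        intro T hT
        rw [hq, Pi.single_apply, if_neg]
        rintro rfl; exact hT (Finset.Subset.refl _)
      rw [hu, kX_kCl, hy, kX_kC, kX_kDl, this, kDl_zero]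
      simp [kC, kCl_zero]
    rw [hXs, hU0, add_zero]
    intro T
    rw [Finset.sum_apply]
    refine sum_mem fun t ht => ?_
    rw [Finset.mem_range] at ht
    have huu : u = kCl X c (as ++ [i]) (kDl X c L bs q) := by
      have : ∀ (ts : List ℕ) (p : KL n (MvPolynomial (Fin n) K)),
          kCl X c (ts ++ [i]) p = kCl X c ts (kC X c i p) := by
        intro ts p
        induction ts with
        | nil => rfl
        | cons s ts ih => simp only [List.cons_append, kCl, ih]
      rw [this]
    by_cases htb : t ∈ bs
    · rw [huu, kX_kCl, kX_St_kDl X c L bs t htb (h.hc t ht), kCl_zero]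
      simp
    · have hta : t ∈ as ++ [i] := by
        rcases hcov t ht with h' | h'
        · simp [h']
        · rcases List.mem_cons.1 h' with rfl | h'
          · simp
          · exact absurd h' htb
      have := kX_St_kCl_in X c L (J := kJ K G c L (t :: bs)) (as ++ [i]) t hta (h.hc t ht)
        (kDl X c L bs q) (kDl_in G h hadj bs hbs' hndb'.2 q)
        (fun m hm f hf => kJ_cons G h hadj t bs hbs' ht htb m hm f hf)
      rw [huu]
      have h5 := kJ_le G c L (t :: bs) (this T)
      simpa using h5
  · intro w j hj he
    apply P4
    have : Phi u = Phi (kX (R := MvPolynomial (Fin n) K) X Finset.univ w) + Phi j := by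
      simp only [hPhi]
      rw [he, map_add, kAl_add, Pi.add_apply, coeff_add]
    rw [this, P3 j hj, add_zero]
    simp only [hPhi]
    rw [kX_sq]
    have := kAl_smul X c l as 0 (0 : KL n (MvPolynomial (Fin n) K))
    rw [zero_smul, zero_smul] at this
    rw [this]; simp
  · have hq0 : KDeg U.card q := by
      intro T hT
      rw [hq, Pi.single_apply, if_neg]
      rintro rfl; exact lt_irrefl _ hT
    exact kCl_deg X c as _ _ (((kDl_deg X c L bs _ _ hq0).cr _).smul _)

lemma matching_card {n : ℕ} (G : SimpleGraph (Fin n)) (M : Finset (Sym2 (Fin n)))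
    (hM : IsMatchingSet G M) : (kVM M).card = 2 * M.card := by
  have h1 : kVM M = M.biUnion (fun e => e.toFinset) := by
    ext v; simp [kVM]
  rw [h1, Finset.card_biUnion]
  · rw [Finset.sum_const_nat (m := 2), mul_comm]
    intro e he
    exact Sym2.card_toFinset_of_not_isDiag e (G.not_isDiag_of_mem_edgeSet (hM.1 e he))
  · intro e he f hf hef
    refine Finset.disjoint_left.2 ?_
    intro v hv hv'
    rw [Sym2.mem_toFinset] at hv hv'
    exact hM.2 e he f hf hef v hv hv'

lemma kEs_card {n : ℕ} (c l : ℕ → Fin n) (ts : List ℕ) : (kEs c l ts).card ≤ 2 * ts.length := by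
  induction ts with
  | nil => simp [kEs]
  | cons t ts ih =>
    simp only [kEs, List.length_cons]
    have := Finset.card_insert_le (l t) (insert (c t) (kEs c l ts))
    have := Finset.card_insert_le (c t) (kEs c l ts)
    omega

lemma face_of_isolated {n N : ℕ} (G : SimpleGraph (Fin n)) {c l : ℕ → Fin n}
    (as is : List ℕ) (has : ∀ t ∈ as, t < N)
    (his : ∀ t ∈ is, t < N) (hab : ∀ t ∈ as, t ∉ is)
    (hiso : ∀ t ∈ as, ∀ s < N, s ≠ t → ∀ x y, (x = c t ∨ x = l t) → (y = c s ∨ y = l s) →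
      ¬ G.Adj x y)
    (F : Finset (Fin n)) (hF : kChoice c l as F) (v : Fin n) (hv : v ∈ kEs c l is)
    (M : Finset (Sym2 (Fin n))) (hM : IsMatchingSet G M) (hcard : M.card = is.length)
    (hsub : kVM M ⊆ (F ∪ kEs c l is).erase v) : False := by
  have hkey : kVM M ⊆ (kEs c l is).erase v := by
    intro w hw
    have hw1 := hsub hw
    rw [Finset.mem_erase, Finset.mem_union] at hw1
    rw [Finset.mem_erase]
    refine ⟨hw1.1, ?_⟩
    rcases hw1.2 with hwF | hwE
    swap
    · exact hwE
    exfalso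
    obtain ⟨t, ht, hwt⟩ := (mem_kEs c l as w).1 (hF.1 hwF)
    simp only [kVM, Finset.mem_filter, Finset.mem_univ, true_and] at hw
    obtain ⟨e, he, hwe⟩ := hw
    obtain ⟨y, rfl⟩ := Sym2.mem_iff_exists.1 hwe
    have hadj : G.Adj w y := by simpa using hM.1 _ he
    have hy : y ∈ kVM M := by
      simp only [kVM, Finset.mem_filter, Finset.mem_univ, true_and]
      exact ⟨_, he, by simp⟩
    have hy1 := hsub hy
    rw [Finset.mem_erase, Finset.mem_union] at hy1
    rcases hy1.2 with hyF | hyE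
    · obtain ⟨s, hs, hys⟩ := (mem_kEs c l as y).1 (hF.1 hyF)
      by_cases hst : s = t
      · subst hst
        apply hF.2 s hs
        rcases hwt with rfl | rfl <;> rcases hys with rfl | rfl
        · exact absurd hadj (G.loopless.irrefl _)
        · exact ⟨hwF, hyF⟩
        · exact ⟨hyF, hwF⟩
        · exact absurd hadj (G.loopless.irrefl _)
      · exact hiso t ht s (has s hs) hst _ _ hwt hys hadj
    · obtain ⟨s, hs, hys⟩ := (mem_kEs c l is y).1 hyE
      exact hiso t ht s (his s hs) (fun h => hab t ht (h ▸ hs)) _ _ hwt hys hadj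
  have h1 := Finset.card_le_card hkey
  rw [matching_card G M hM, Finset.card_erase_of_mem hv] at h1
  have h2 := kEs_card c l is
  have h3 := Finset.card_pos.2 ⟨v, hv⟩
  omega

lemma path_depth (K : Type*) [Field K] {n : ℕ} (G : SimpleGraph (Fin n)) {r : ℕ}
    (p : Fin r → Fin n) (hp : IsInducedPath G p) (N s k : ℕ) (hsN : s ≤ N) (hr : 2 * N + s ≤ r)
    (hk : 1 ≤ k) (hkN : k ≤ N) (hNk : N - k ≤ s) :
    depthQuot (edgeIdealSqPow K G k) + (2 * N + s) + 1 ≤ n + N + k := by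
  have hr0 : 0 < r := by omega
  obtain ⟨P, hP⟩ : ∃ P : ℕ → Fin n, ∀ j (h : j < r), P j = p ⟨j, h⟩ :=
    ⟨fun j => if h : j < r then p ⟨j, h⟩ else p ⟨0, hr0⟩, fun j h => by simp [h]⟩
  have hinj : ∀ a b, a < r → b < r → P a = P b → a = b := by
    intro a b ha hb hab
    rw [hP a ha, hP b hb] at hab
    simpa using hp.1 hab
  have hPadj : ∀ a b, a < r → b < r → (G.Adj (P a) (P b) ↔ (a + 1 = b ∨ b + 1 = a)) := by
    intro a b ha hb
    rw [hP a ha, hP b hb]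
    exact hp.2 _ _
  let off : ℕ → ℕ := fun t => 2 * t + min t s
  have hoff : ∀ t, off t = 2 * t + min t s := fun t => rfl
  let l : ℕ → Fin n := fun t => P (off t)
  let c : ℕ → Fin n := fun t => P (off t + 1)
  let L : ℕ → Finset (Fin n) := fun t => if t < s then {P (off t), P (off t + 2)} else {P (off t)}
  have hL : ∀ t m, m ∈ L t → m = P (off t) ∨ (t < s ∧ m = P (off t + 2)) := by
    intro t m hm
    simp only [L] at hm
    split_ifs at hm with h
    · simp only [Finset.mem_insert, Finset.mem_singleton] at hm
      tauto
    · simp only [Finset.mem_singleton] at hm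
      tauto
  have hSt : ∀ t m, m ∈ kSt c L t → ∃ j, m = P j ∧ off t ≤ j ∧ j < off t + 2 + (if t < s then 1 else 0) := by
    intro t m hm
    simp only [kSt, Finset.mem_insert] at hm
    rcases hm with rfl | hm
    · exact ⟨off t + 1, rfl, by omega, by omega⟩
    · rcases hL t m hm with rfl | ⟨h, rfl⟩
      · exact ⟨off t, rfl, by omega, by omega⟩
      · exact ⟨off t + 2, rfl, by omega, by rw [if_pos h]; omega⟩
  have hbnd : ∀ t < N, off t + 2 + (if t < s then 1 else 0) ≤ r := by
    intro t ht
    rw [hoff]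
    split_ifs <;> omega
  have hmono : ∀ t u, t < u → off t + 2 + (if t < s then 1 else 0) ≤ off u := by
    intro t u htu
    rw [hoff, hoff]
    split_ifs <;> omega
  have hsys : StarSys N c l L := by
    refine ⟨?_, ?_, ?_⟩
    · intro t ht
      simp only [L, l]
      split_ifs <;> simp
    · intro t ht hm
      have hb := hbnd t ht
      rcases hL t _ hm with h | ⟨hs, h⟩
      · have := hinj _ _ (by omega) (by omega) h
        omega
      · rw [if_pos hs] at hb
        have := hinj _ _ (by omega) (by omega) h
        omega
    · intro a ha b hb hab
      rw [Finset.disjoint_left]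
      intro m hma hmb
      obtain ⟨x, hx, hx1, hx2⟩ := hSt a m hma
      obtain ⟨y, hy, hy1, hy2⟩ := hSt b m hmb
      have h1 := hbnd a ha
      have h2 := hbnd b hb
      have := hinj x y (by omega) (by omega) (hx ▸ hy)
      subst this
      rcases Nat.lt_or_gt_of_ne hab with h | h
      · have := hmono a b h; omega
      · have := hmono b a h; omega
  have hadj : ∀ t < N, ∀ m ∈ L t, G.Adj (c t) m := by
    intro t ht m hm
    have hb := hbnd t ht
    rcases hL t _ hm with rfl | ⟨hs, rfl⟩
    · exact (hPadj _ _ (by omega) (by omega)).2 (by omega)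
    · rw [if_pos hs] at hb
      exact (hPadj _ _ (by omega) (by omega)).2 (by omega)
  have hiso : ∀ t ∈ List.range (N - k), ∀ u < N, u ≠ t → ∀ x y, (x = c t ∨ x = l t) →
      (y = c u ∨ y = l u) → ¬ G.Adj x y := by
    intro t ht u hu hut x y hx hy hxy
    rw [List.mem_range] at ht
    have h1 := hbnd t (by omega)
    have h2 := hbnd u hu
    have hts : t < s := by omega
    obtain ⟨a, ha, ha1, ha2⟩ : ∃ a, x = P a ∧ off t ≤ a ∧ a ≤ off t + 1 := by
      rcases hx with rfl | rfl
      · exact ⟨off t + 1, rfl, by omega, by omega⟩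
      · exact ⟨off t, rfl, by omega, by omega⟩
    obtain ⟨b, hb, hb1, hb2⟩ : ∃ b, y = P b ∧ off u ≤ b ∧ b ≤ off u + 1 := by
      rcases hy with rfl | rfl
      · exact ⟨off u + 1, rfl, by omega, by omega⟩
      · exact ⟨off u, rfl, by omega, by omega⟩
    rw [ha, hb, hPadj a b (by omega) (by omega)] at hxy
    rw [hoff] at ha1 ha2 hb1 hb2
    omega
  have hWcard : ((Finset.range N).biUnion (kSt c L)).card = 2 * N + s := by
    rw [Finset.card_biUnion]
    · have h1 : ∀ t ∈ Finset.range N, (kSt c L t).card = 2 + (if t < s then 1 else 0) := by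
        intro t ht
        rw [Finset.mem_range] at ht
        rw [kSt, Finset.card_insert_of_notMem (hsys.hc t ht)]
        have hb := hbnd t ht
        simp only [L]
        split_ifs with hs
        · rw [if_pos hs] at hb
          rw [Finset.card_pair]
          intro h
          have := hinj _ _ (by omega) (by omega) h
          omega
        · simp
      rw [Finset.sum_congr rfl h1]
      have h2 : ∀ m, ∑ t ∈ Finset.range m, (2 + (if t < s then 1 else 0)) = 2 * m + min m s := by
        intro m
        induction m with
        | zero => simp
        | succ m ih =>
          rw [Finset.sum_range_succ, ih]
          split_ifs <;> omega
      rw [h2]; omega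
    · intro a ha b hb hab
      exact hsys.hd a (by simpa using ha) b (by simpa using hb) hab
  have hUcard : (Finset.univ \ (Finset.range N).biUnion (kSt c L)).card + (2 * N + s) = n := by
    rw [← hWcard, Finset.card_sdiff_add_card_eq_card (Finset.subset_univ _)]
    simp
  have hmem : ∀ t, t ∈ (N - k) :: List.range' (N - k + 1) (k - 1) ↔ (N - k ≤ t ∧ t < N) := by
    intro t
    rw [List.mem_cons, List.mem_range'_1]
    omega
  have hlen : ((N - k) :: List.range' (N - k + 1) (k - 1)).length = k := by
    simp; omega
  have hcore := depth_core (K := K) G hsys hadj (List.range (N - k))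
    (List.range' (N - k + 1) (k - 1)) (N - k)
    (fun t ht => by rw [List.mem_range] at ht; omega)
    (fun t ht => ((hmem t).1 ht).2)
    List.nodup_range
    (by
      rw [List.nodup_cons]
      refine ⟨?_, List.nodup_range'⟩
      rw [List.mem_range'_1]; omega)
    (fun t ht => by rw [hmem]; rw [List.mem_range] at ht; omega)
    (fun t ht => by rw [hmem, List.mem_range]; omega)
    (fun F hF v hv M hM hc hs => face_of_isolated (N := N) G (List.range (N - k)) _
      (fun t ht => by rw [List.mem_range] at ht; omega)
      (fun t ht => ((hmem t).1 ht).2)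
      (fun t ht => by rw [hmem]; rw [List.mem_range] at ht; omega)
      hiso F hF v hv M hM hc hs)
    _ rfl
  rw [hlen] at hcore
  rw [List.length_range', List.length_range] at hcore
  omega

lemma depth_le_n (K : Type*) [Field K] {n : ℕ} (G : SimpleGraph (Fin n)) :
    depthQuot (edgeIdealSqPow K G 1) ≤ n := by
  apply depth_le_of_class _ (Pi.single Finset.univ 1)
  · rw [kX_U_single]
    · intro T; exact Submodule.zero_mem _
    · intro T hT
      rw [Pi.single_eq_of_ne]
      rintro rfl; exact hT subset_rfl
  · intro w j hj heq
    have h1 := congrArg (coeff 0) (congrFun heq Finset.univ)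
    rw [Pi.single_eq_same, Pi.add_apply, coeff_add, kX_apply, coeff_sum] at h1
    rw [Finset.sum_eq_zero, zero_add] at h1
    · obtain ⟨M, hM, hMc, hMs⟩ := coeff_sqPow G 1 _ (hj Finset.univ) 0 (by rw [← h1]; simp)
      have := Finset.card_le_card hMs
      rw [matching_card G M hM, hMc] at this
      simp at this
    · intro v hv
      rw [smul_eq_mul, mul_comm, coeff_mul_X']
      simp
  · intro T hT
    have := Finset.card_le_univ T
    simp at this
    omega

lemma matching_of_path {n : ℕ} (G : SimpleGraph (Fin n)) {r : ℕ}
    (p : Fin r → Fin n) (hp : IsInducedPath G p) : r / 2 ≤ matchingNumber G := by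
  apply le_csSup
  · refine ⟨Fintype.card (Sym2 (Fin n)), ?_⟩
    rintro _ ⟨M, _, rfl⟩
    exact Finset.card_le_univ M
  · let f : Fin (r / 2) → Sym2 (Fin n) := fun i =>
      s(p ⟨2 * i, by omega⟩, p ⟨2 * i + 1, by omega⟩)
    have hf : ∀ i j v, v ∈ f i → v ∈ f j → i = j := by
      intro i j v hi hj
      simp only [f, Sym2.mem_iff] at hi hj
      rcases hi with rfl | rfl <;> rcases hj with hj | hj <;>
        · have := congrArg Fin.val (hp.1 hj)
          simp only at this
          ext; omega
    refine ⟨Finset.univ.image f, ⟨?_, ?_⟩, ?_⟩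
    · intro e he
      obtain ⟨i, -, rfl⟩ := Finset.mem_image.1 he
      rw [SimpleGraph.mem_edgeSet, hp.2]
      left; rfl
    · intro e he e' he' hne v hv hv'
      obtain ⟨i, -, rfl⟩ := Finset.mem_image.1 he
      obtain ⟨j, -, rfl⟩ := Finset.mem_image.1 he'
      exact hne (by rw [hf i j v hv hv'])
    · rw [Finset.card_image_of_injective]
      · simp
      · intro i j hij
        have hi : p ⟨2 * i, by omega⟩ ∈ f i := by simp [f]
        exact hf i j _ hi (hij ▸ hi)

/-- For a connected graph `G` on `n` vertices with `ℓ = ℓ(G)` the number of vertices of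
a longest induced path: `ν(G) ≥ ⌊ℓ/2⌋`, and `g_{I(G)}(k) ≤ ⌈(3n-2ℓ)/3⌉ - k` for
`1 ≤ k ≤ ⌈ℓ/3⌉`, while `g_{I(G)}(k) ≤ n - ℓ` for `⌈ℓ/3⌉ < k ≤ ⌊ℓ/2⌋`. -/
theorem stmt_16 (K : Type*) [Field K] {n : ℕ} (G : SimpleGraph (Fin n))
    (hconn : G.Connected) :
    longestInducedPath G / 2 ≤ matchingNumber G ∧
      (∀ k : ℕ, 1 ≤ k → k ≤ (longestInducedPath G + 2) / 3 →
        gEdge K G k ≤ ((3 * n - 2 * longestInducedPath G + 2) / 3 : ℕ) - (k : ℤ)) ∧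
      (∀ k : ℕ, (longestInducedPath G + 2) / 3 < k → k ≤ longestInducedPath G / 2 →
        gEdge K G k ≤ (n : ℤ) - longestInducedPath G) := by

  have hbdd : BddAbove {r | ∃ p : Fin r → Fin n, IsInducedPath G p} := by
    refine ⟨n, ?_⟩
    rintro r ⟨p, hp⟩
    simpa using Fintype.card_le_of_injective p hp.1
  have hmem1 : 1 ∈ {r | ∃ p : Fin r → Fin n, IsInducedPath G p} := by
    obtain ⟨v⟩ := hconn.nonempty
    refine ⟨fun _ => v, Function.injective_of_subsingleton _, ?_⟩
    intro i j
    have : ¬ G.Adj v v := G.loopless.irrefl v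
    simp only [this, false_iff]
    omega
  have hatt : longestInducedPath G ∈ {r | ∃ p : Fin r → Fin n, IsInducedPath G p} :=
    Nat.sSup_mem ⟨1, hmem1⟩ hbdd
  have hone : 1 ≤ longestInducedPath G := le_csSup hbdd hmem1
  have hle : longestInducedPath G ≤ n := by
    obtain ⟨p, hp⟩ := hatt
    simpa using Fintype.card_le_of_injective p hp.1
  generalize longestInducedPath G = r at hatt hone hle ⊢
  obtain ⟨p, hp⟩ := hatt
  have hbig : ∀ k : ℕ, 1 ≤ k → (r + 2) / 3 ≤ k → k ≤ r / 2 → gEdge K G k ≤ (n : ℤ) - r := by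
    intro k h1 h2 h3
    have := path_depth K G p hp k (r - 2 * k) k (by omega) (by omega) h1 le_rfl (by omega)
    unfold gEdge
    omega
  refine ⟨matching_of_path G p hp, ?_, ?_⟩
  · intro k h1 h2
    rcases Nat.eq_or_lt_of_le h2 with h | h
    · rcases Nat.eq_or_lt_of_le hone with hr | hr
      · have hk1 : k = 1 := by omega
        subst hk1
        have := depth_le_n K G
        unfold gEdge
        omega
      · have := hbig k h1 h.ge (by omega)
        omega
    · have hd : depthQuot (edgeIdealSqPow K G k) + r + 1 ≤ n + (r + 2) / 3 + k := by
        by_cases h3 : r % 3 = 2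
        · have := path_depth K G p hp (r / 3 + 1) (r / 3) k (by omega) (by omega) h1 (by omega)
            (by omega)
          omega
        · have := path_depth K G p hp (r / 3) (r / 3) k (by omega) (by omega) h1 (by omega)
            (by omega)
          omega
      unfold gEdge
      omega
  · intro k h1 h2
    exact hbig k (by omega) h1.le h2

end
end
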